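/- arXiv:1411.4796 — 4 statements merged into one kernel-verified Lean document; each statement's English description precedes it below -/
import Mathlib

section
/- It is undecidable whether Attacker has a winning strategy in the Braid Game on the braid group B₃ starting from a non-trivial braid: the predicate on encoded instances (Attacker's finite list of braid words a₁, …, a_r, Defender's finite list of braid words d₁, …, d_s, and an initial braid word c representing a non-identity element of B₃, all braid words being finite words over σ₁^{±1}, σ₂^{±1}) asserting that Attacker has a winning strategy is not a computable predicate. -/
/-- The braid relator `σ₁σ₂σ₁(σ₂σ₁σ₂)⁻¹` of the 3-strand braid group. -/
def braidRels3 : Set (FreeGroup (Fin 2)) :=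
  {FreeGroup.of 0 * FreeGroup.of 1 * FreeGroup.of 0 *
    (FreeGroup.of 1 * FreeGroup.of 0 * FreeGroup.of 1)⁻¹}

/-- The 3-strand braid group `B₃`, presented with generators `σ₁, σ₂` and the relation
`σ₁σ₂σ₁ = σ₂σ₁σ₂`. -/
abbrev B3 : Type := PresentedGroup braidRels3

/-- A braid word over `σ₁^{±1}, σ₂^{±1}`: each letter is a generator index together with a
sign (`true` for the generator, `false` for its inverse). -/
abbrev BraidWord3 : Type := List (Fin 2 × Bool)

/-- The element of `B₃` represented by a braid word. -/
def braid3 (w : BraidWord3) : B3 :=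
  (w.map fun p =>
    if p.2 then (PresentedGroup.of (rels := braidRels3) p.1)
    else (PresentedGroup.of (rels := braidRels3) p.1)⁻¹).prod

/-- An encoded instance of the Braid Game on `B₃`: Attacker's finite list of braid words,
Defender's finite list of braid words, and an initial braid word. -/
abbrev BG3Instance : Type := List BraidWord3 × List BraidWord3 × BraidWord3

/-- The configuration (a braid in `B₃`) after `k` rounds of the Braid Game, starting from
`c0`, when Defender plays the sequence of braids `δ` and Attacker follows the strategy `st`
(a function of the finite history of Defender's choices so far); moves act by right
composition, Defender first. -/
def bg3Pos (c0 : B3) (δ : ℕ → B3) (st : List B3 → B3) : ℕ → B3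
  | 0 => c0
  | k + 1 => bg3Pos c0 δ st k * δ k * st ((List.range (k + 1)).map δ)

/-- Attacker has a winning strategy in the Braid Game on `B₃` with Attacker's braid list
`A`, Defender's braid list `D` and initial braid `c0`: there is a strategy, choosing a
braid from `A` for every finite history of Defender's choices, such that every infinite
play consistent with it reaches the trivial braid after some Attacker move. -/
def BG3AttackerWins (A D : List B3) (c0 : B3) : Prop :=
  ∃ st : List B3 → B3,
    (∀ hist, (∀ x ∈ hist, x ∈ D) → st hist ∈ A) ∧
    ∀ δ : ℕ → B3, (∀ i, δ i ∈ D) → ∃ n, bg3Pos c0 δ st (n + 1) = 1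

/-!
The commutator subgroup of `B₃` is free of rank two and meets the infinite cyclic center trivially,
so `B₃` contains the direct product of a free group of infinite rank with `ℤ`. Attacker uses the
free factor as a stack, on which he writes the run of a counter program, and `ℤ` as a counter. In
each round Defender announces the next transition of the run, and Attacker appends it to the stack
unless one of its guards fails. In that case he starts an audit: he empties the stack, letter by
letter, while the counter sums up the weights that express the guard as a linear function of the
run. Honest unwinding ends in a nonnegative counter, which Attacker can burn down to the identity,
exactly if the guard has really failed. A false accusation leaves a negative balance, and any
deviation from honest unwinding leaves a positive slack in an affine action on the line; Defender
then passes forever and Attacker can repair neither. Hence Attacker wins exactly if the run is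
finite, and the halting problem reduces to the game.
-/

namespace BraidGame

section Game

variable {ι κ G H : Type*} [Monoid G] [Monoid H]

/-- Attacker can force a visit to the identity in the game on a monoid where, in each round,
Defender announces a label and Attacker answers by multiplying the position on the right with one of
the moves allowed for that label. The inductive definition is positional: a position is winning if
each label has a reply that reaches the identity or a winning position. -/
inductive AttackerForces (labels : List ι) (moves : ι → List G) : G → Prop
  | intro {g : G} (reply : ι → G) (reply_mem : ∀ i ∈ labels, reply i ∈ moves i)
      (next : ∀ i ∈ labels, g * reply i ≠ 1 → AttackerForces labels moves (g * reply i)) :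
      AttackerForces labels moves g

variable {labels : List ι} {moves : ι → List G} {g : G}

theorem attackerForces_iff :
    AttackerForces labels moves g ↔
      ∀ i ∈ labels, ∃ m ∈ moves i, g * m = 1 ∨ AttackerForces labels moves (g * m) := by
  constructor
  · rintro ⟨reply, hmem, hnext⟩ i hi
    exact ⟨reply i, hmem i hi, or_iff_not_imp_left.2 (hnext i hi)⟩
  · intro h
    choose! reply hreply using h
    exact ⟨reply, fun i hi => (hreply i hi).1, fun i hi hne => (hreply i hi).2.resolve_left hne⟩

theorem not_attackerForces_iff :
    ¬ AttackerForces labels moves g ↔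
      ∃ i ∈ labels, ∀ m ∈ moves i, g * m ≠ 1 ∧ ¬ AttackerForces labels moves (g * m) := by
  rw [attackerForces_iff]
  push Not
  rfl

theorem not_attackerForces_of_invariant (Safe : G → Prop)
    (safe_step : ∀ g, Safe g → ∃ i ∈ labels, ∀ m ∈ moves i, g * m ≠ 1 ∧ Safe (g * m))
    (hg : Safe g) : ¬ AttackerForces labels moves g := by
  intro hforces
  induction hforces with
  | @intro g reply hmem _ ih =>
    obtain ⟨i, hi, hsafe⟩ := safe_step g hg
    obtain ⟨hne, hnext⟩ := hsafe _ (hmem i hi)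
    exact ih i hi hne hnext

theorem attackerForces_map_labels (e : κ → ι) (labels : List κ) :
    AttackerForces (labels.map e) moves g ↔ AttackerForces labels (moves ∘ e) g := by
  constructor <;> intro h <;> induction h with
  | intro reply hmem _ ih =>
    rw [attackerForces_iff]
    simp only [List.forall_mem_map, Function.comp_apply] at hmem ih ⊢
    exact fun i hi => ⟨_, hmem i hi, or_iff_not_imp_left.2 (ih i hi)⟩

theorem attackerForces_map_moves (f : G →* H) (hf : Function.Injective f) :
    AttackerForces labels (fun i => (moves i).map f) (f g) ↔ AttackerForces labels moves g := by
  constructor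
  · generalize hfg : f g = g'
    intro h
    induction h generalizing g with
    | intro reply hmem _ ih =>
      subst hfg
      refine attackerForces_iff.2 fun i hi => ?_
      obtain ⟨m, hm, hreply⟩ := List.mem_map.1 (hmem i hi)
      refine ⟨m, hm, or_iff_not_imp_left.2 fun hne => ?_⟩
      have hmap : f (g * m) = f g * reply i := by rw [map_mul, hreply]
      exact ih i hi (by rwa [← hmap, ne_eq, map_eq_one_iff f hf]) hmap
  · intro h
    induction h with
    | intro reply hmem _ ih =>
      refine attackerForces_iff.2 fun i hi => ⟨f (reply i), List.mem_map_of_mem (hmem i hi), ?_⟩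
      rw [← map_mul, map_eq_one_iff f hf]
      exact or_iff_not_imp_left.2 (ih i hi)

/-- The net effects of a round in which Defender plays `d` and Attacker plays an element of `A`. -/
def roundMoves (A : List G) (d : G) : List G := A.map (d * ·)

theorem attackerForces_roundMoves_map (f : G →* H) (hf : Function.Injective f) (A D : List G) :
    AttackerForces (D.map f) (roundMoves (A.map f)) (f g) ↔
      AttackerForces D (roundMoves A) g := by
  have hmoves : roundMoves (A.map f) ∘ f = fun d => (roundMoves A d).map f := by
    funext d
    simp [roundMoves]
  rw [attackerForces_map_labels, hmoves, attackerForces_map_moves f hf]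

end Game

section Tags

variable {ι G Γ : Type*} [Group G] [CommGroup Γ] [PartialOrder Γ] [IsOrderedMonoid Γ]

/-- Attacker's moves in the game where Defender announces the label `i` by playing `tag i`: cancel
some tag, then make a move allowed for it. -/
def taggedMoves (tag : ι → G) (labels : List ι) (moves : ι → List G) : List G :=
  labels.flatMap fun i => (moves i).map ((tag i)⁻¹ * ·)

theorem forall_mem_roundMoves_taggedMoves {tag : ι → G} {labels : List ι} {moves : ι → List G}
    {d : G} {p : G → Prop} :
    (∀ m ∈ roundMoves (taggedMoves tag labels moves) d, p m) ↔
      ∀ j ∈ labels, ∀ m ∈ moves j, p (d * ((tag j)⁻¹ * m)) := by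
  simp only [roundMoves, taggedMoves, List.forall_mem_map, List.forall_mem_flatMap]

/-- A tag that Attacker fails to cancel leaves a positive count, which Defender preserves forever by
repeating that tag. -/
theorem attackerForces_taggedMoves {tag : ι → G} {labels : List ι} {moves : ι → List G}
    (count : ι → G →* Γ) (one_lt_count_tag : ∀ i, 1 < count i (tag i))
    (count_tag_of_ne : ∀ i j, i ≠ j → count i (tag j) = 1)
    (count_move : ∀ i, ∀ j ∈ labels, ∀ m ∈ moves j, count i m = 1) {g : G}
    (hg : ∀ i, count i g = 1) :
    AttackerForces (labels.map tag) (roundMoves (taggedMoves tag labels moves)) g ↔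
      AttackerForces labels moves g := by
  constructor
  · let Safe (u : G) : Prop := (∀ i, count i u = 1) ∧ ¬ AttackerForces labels moves u ∨
      ∃ i ∈ labels, 1 < count i u
    refine not_imp_not.1 fun h => not_attackerForces_of_invariant Safe ?_ (Or.inl ⟨hg, h⟩)
    have safe_of_one_lt {u : G} {i : ι} (hi : i ∈ labels) (hu : 1 < count i u) :
        u ≠ 1 ∧ Safe u := by
      refine ⟨?_, Or.inr ⟨i, hi, hu⟩⟩
      rintro rfl
      simp at hu
    simp only [List.mem_map, exists_exists_and_eq_and, forall_mem_roundMoves_taggedMoves]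
    rintro u (⟨hu, hlose⟩ | ⟨i, hi, hu⟩)
    · obtain ⟨i, hi, hsafe⟩ := not_attackerForces_iff.1 hlose
      refine ⟨i, hi, fun j hj m hm => ?_⟩
      by_cases hij : i = j
      · subst hij
        rw [mul_inv_cancel_left]
        refine ⟨(hsafe m hm).1, Or.inl ⟨fun k => ?_, (hsafe m hm).2⟩⟩
        rw [map_mul, hu, count_move k i hi m hm, one_mul]
      · refine safe_of_one_lt hi ?_
        simpa [hu, count_tag_of_ne i j hij, count_move i j hj m hm] using one_lt_count_tag i
    · refine ⟨i, hi, fun j hj m hm => safe_of_one_lt hi ?_⟩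
      by_cases hij : i = j
      · subst hij
        simpa [count_move i i hj m hm] using hu
      · simpa [count_tag_of_ne i j hij, count_move i j hj m hm] using
          one_lt_mul'' hu (one_lt_count_tag i)
  · intro h
    induction h with
    | @intro u reply hmem _ ih =>
      refine attackerForces_iff.2 (List.forall_mem_map.2 fun i hi => ⟨reply i, ?_, ?_⟩)
      · simp only [roundMoves, taggedMoves, List.mem_map, List.mem_flatMap]
        exact ⟨_, ⟨i, hi, reply i, hmem i hi, rfl⟩, mul_inv_cancel_left _ _⟩
      · refine or_iff_not_imp_left.2 fun hne => ih i hi hne fun k => ?_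
        rw [map_mul, hg, count_move k i hi _ (hmem i hi), one_mul]

end Tags

section Strategies

variable {A D : List B3} {g : B3}

theorem bg3Pos_succ_eq_bg3Pos (c : B3) (δ : ℕ → B3) (st : List B3 → B3) (k : ℕ) :
    bg3Pos c δ st (k + 1) =
      bg3Pos (c * δ 0 * st [δ 0]) (fun i => δ (i + 1)) (fun l => st (δ 0 :: l)) k := by
  induction k with
  | zero => simp [bg3Pos]
  | succ k ih =>
    rw [bg3Pos, ih, bg3Pos, List.range_succ_eq_map (n := k + 1)]
    simp [Function.comp_def]

theorem bg3Pos_congr {c : B3} {δ : ℕ → B3} {st st' : List B3 → B3}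
    (h : ∀ l, l ≠ [] → st l = st' l) (k : ℕ) : bg3Pos c δ st k = bg3Pos c δ st' k := by
  induction k with
  | zero => rfl
  | succ k ih => rw [bg3Pos, bg3Pos, ih, h _ (by simp)]

theorem bg3AttackerWins_of_forall_round (hD : D ≠ [])
    (h : ∀ d ∈ D, ∃ a ∈ A, g * d * a = 1 ∨ BG3AttackerWins A D (g * d * a)) :
    BG3AttackerWins A D g := by
  classical
  obtain ⟨d₀, hd₀⟩ := List.exists_mem_of_ne_nil D hD
  choose! a ha hwin using h
  have strategies (d : B3) : ∃ st : List B3 → B3, (∀ hist, (∀ x ∈ hist, x ∈ D) → st hist ∈ A) ∧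
      (d ∈ D → g * d * a d ≠ 1 → ∀ δ : ℕ → B3, (∀ i, δ i ∈ D) →
        ∃ n, bg3Pos (g * d * a d) δ st (n + 1) = 1) := by
    by_cases hd : d ∈ D ∧ g * d * a d ≠ 1
    · obtain ⟨st, hst, hst_win⟩ := (hwin d hd.1).resolve_left hd.2
      exact ⟨st, hst, fun _ _ => hst_win⟩
    · exact ⟨fun _ => a d₀, fun _ _ => ha d₀ hd₀, fun hdD hne => absurd ⟨hdD, hne⟩ hd⟩
  choose st hst hst_win using strategies
  let combined : List B3 → B3
    | [] => a d₀
    | d :: l => if l = [] then a d else st d l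
  refine ⟨combined, fun hist hhist => ?_, fun δ hδ => ?_⟩
  · rcases hist with _ | ⟨d, l⟩
    · exact ha d₀ hd₀
    · by_cases hl : l = []
      · simpa [combined, hl] using ha d (hhist d (by simp))
      · simpa [combined, hl] using hst d l fun x hx => hhist x (List.mem_cons_of_mem d hx)
  · by_cases hne : g * δ 0 * a (δ 0) = 1
    · exact ⟨0, by simpa [bg3Pos, combined] using hne⟩
    · obtain ⟨n, hn⟩ := hst_win (δ 0) (hδ 0) hne (fun i => δ (i + 1)) fun i => hδ _
      refine ⟨n + 1, ?_⟩
      rw [bg3Pos_succ_eq_bg3Pos, ← hn]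
      exact bg3Pos_congr (fun l hl => if_neg hl) _

/-- The infinite play of Defender who always answers the current braid `g` with `f g`, against the
Attacker strategy `st`. -/
def defenderPlay (f : B3 → B3) : B3 → (List B3 → B3) → ℕ → B3
  | g, _, 0 => f g
  | g, st, k + 1 => defenderPlay f (g * f g * st [f g]) (fun l => st (f g :: l)) k

theorem defenderPlay_mem_and_bg3Pos_ne_one {f : B3 → B3} {Safe : B3 → Prop}
    (safe_step : ∀ g, Safe g → f g ∈ D ∧ ∀ a ∈ A, g * f g * a ≠ 1 ∧ Safe (g * f g * a)) (k : ℕ)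
    {st : List B3 → B3} (hst : ∀ hist, (∀ x ∈ hist, x ∈ D) → st hist ∈ A) (hg : Safe g) :
    defenderPlay f g st k ∈ D ∧ bg3Pos g (defenderPlay f g st) st (k + 1) ≠ 1 := by
  obtain ⟨hf, hnext⟩ := safe_step g hg
  obtain ⟨hne, hsafe⟩ := hnext (st [f g]) (hst _ (by simpa using hf))
  induction k generalizing g st with
  | zero => exact ⟨hf, by simpa [bg3Pos, defenderPlay] using hne⟩
  | succ k ih =>
    have hst' (hist : List B3) (h : ∀ x ∈ hist, x ∈ D) : st (f g :: hist) ∈ A :=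
      hst _ (List.forall_mem_cons.2 ⟨hf, h⟩)
    obtain ⟨hf', hnext'⟩ := safe_step _ hsafe
    obtain ⟨hne', hsafe'⟩ := hnext' _ (hst' [_] (by simpa using hf'))
    rw [bg3Pos_succ_eq_bg3Pos]
    exact ih hst' hsafe hf' hnext' hne' hsafe'

theorem not_bg3AttackerWins_of_invariant (Safe : B3 → Prop)
    (safe_step : ∀ g, Safe g → ∃ d ∈ D, ∀ a ∈ A, g * d * a ≠ 1 ∧ Safe (g * d * a))
    (hg : Safe g) : ¬ BG3AttackerWins A D g := by
  rintro ⟨st, hst, hwin⟩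
  choose! f hf using safe_step
  have play (k : ℕ) := defenderPlay_mem_and_bg3Pos_ne_one hf k hst hg
  obtain ⟨n, hn⟩ := hwin (defenderPlay f g st) fun k => (play k).1
  exact (play n).2 hn

theorem bg3AttackerWins_iff_attackerForces (hD : D ≠ []) :
    BG3AttackerWins A D g ↔ AttackerForces D (roundMoves A) g := by
  constructor
  · refine not_imp_not.1 (not_bg3AttackerWins_of_invariant (¬ AttackerForces D (roundMoves A) ·) ?_)
    intro u hu
    simpa only [roundMoves, List.forall_mem_map, mul_assoc] using not_attackerForces_iff.1 hu
  · intro h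
    induction h with
    | intro reply hmem _ ih =>
      refine bg3AttackerWins_of_forall_round hD fun d hd => ?_
      obtain ⟨a, ha, hreply⟩ := List.mem_map.1 (hmem d hd)
      refine ⟨a, ha, or_iff_not_imp_left.2 fun hne => ?_⟩
      rw [mul_assoc, hreply] at hne ⊢
      exact ih d hd hne

end Strategies

section Embedding

open SemidirectProduct

/-- The first Artin generator of the braid group. -/
def sigma₁ : B3 := PresentedGroup.of 0

/-- The second Artin generator of the braid group. -/
def sigma₂ : B3 := PresentedGroup.of 1

/-- Garside's half twist. -/
def halfTwist : B3 := sigma₁ * sigma₂ * sigma₁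

theorem sigma₂_mul_sigma₁_mul_sigma₂ : sigma₂ * sigma₁ * sigma₂ = halfTwist :=
  (PresentedGroup.mk_eq_mk_of_mul_inv_mem (rels := braidRels3) rfl).symm

theorem halfTwist_semiconj_sigma₁ : SemiconjBy halfTwist sigma₁ sigma₂ := by
  rw [SemiconjBy, ← sigma₂_mul_sigma₁_mul_sigma₂, mul_assoc _ _ sigma₁, mul_assoc,
    ← mul_assoc sigma₁, ← halfTwist, sigma₂_mul_sigma₁_mul_sigma₂]

theorem halfTwist_semiconj_sigma₂ : SemiconjBy halfTwist sigma₂ sigma₁ := by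
  rw [SemiconjBy, ← sigma₂_mul_sigma₁_mul_sigma₂, ← mul_assoc, ← mul_assoc, ← halfTwist,
    sigma₂_mul_sigma₁_mul_sigma₂]

/-- The full twist, which generates the center of the braid group. -/
def fullTwist : B3 := halfTwist * halfTwist

theorem fullTwist_commute (g : B3) : Commute fullTwist g := by
  have h : (⊤ : Subgroup B3) ≤ Subgroup.centralizer {fullTwist} := by
    rw [← PresentedGroup.closure_range_of, Subgroup.closure_le]
    rintro _ ⟨i, rfl⟩
    rw [SetLike.mem_coe, Subgroup.mem_centralizer_singleton_iff]
    fin_cases i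
    · exact (halfTwist_semiconj_sigma₂.mul_left halfTwist_semiconj_sigma₁).symm
    · exact (halfTwist_semiconj_sigma₁.mul_left halfTwist_semiconj_sigma₂).symm
  exact (Subgroup.mem_centralizer_singleton_iff.1 (h (Subgroup.mem_top g))).symm

/-- The automorphism `x₀ ↦ x₁`, `x₁ ↦ x₀⁻¹ x₁` of the free group of rank two, by which `σ₁` acts on
the kernel of the exponent sum. -/
def monodromy : MulAut (FreeGroup (Fin 2)) :=
  MonoidHom.toMulEquiv
    (FreeGroup.lift ![FreeGroup.of 1, (FreeGroup.of 0)⁻¹ * FreeGroup.of 1])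
    (FreeGroup.lift ![FreeGroup.of 0 * (FreeGroup.of 1)⁻¹, FreeGroup.of 0])
    (by ext i; fin_cases i <;> simp)
    (by ext i; fin_cases i <;> simp)

theorem monodromy_of_zero : monodromy (FreeGroup.of 0) = FreeGroup.of 1 := by
  simp [monodromy]

theorem monodromy_of_one :
    monodromy (FreeGroup.of 1) = (FreeGroup.of 0)⁻¹ * FreeGroup.of 1 := by
  simp [monodromy]

/-- The homomorphism from the braid group to `F₂ ⋊ ℤ` sending `σ₁` to the stable letter `t` and
`σ₂` to `x₀ t`. -/
def braidToSemidirect :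
    B3 →* FreeGroup (Fin 2) ⋊[zpowersHom (MulAut _) monodromy] Multiplicative ℤ :=
  PresentedGroup.toGroup (rels := braidRels3)
    (f := ![inr (Multiplicative.ofAdd 1), inl (FreeGroup.of 0) * inr (Multiplicative.ofAdd 1)])
    (by
      rintro _ rfl
      rw [map_mul, map_inv, mul_inv_eq_one]
      ext <;> simp [monodromy_of_zero, monodromy_of_one, pow_two])

theorem braidToSemidirect_sigma₁ : braidToSemidirect sigma₁ = inr (Multiplicative.ofAdd 1) := by
  simp [braidToSemidirect, sigma₁]

theorem braidToSemidirect_sigma₂ :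
    braidToSemidirect sigma₂ = inl (FreeGroup.of 0) * inr (Multiplicative.ofAdd 1) := by
  simp [braidToSemidirect, sigma₂]

/-- A section of `braidToSemidirect` over the normal free subgroup. -/
def freeToBraid : FreeGroup (Fin 2) →* B3 :=
  FreeGroup.lift ![sigma₂ * sigma₁⁻¹, sigma₁ * (sigma₂ * sigma₁⁻¹) * sigma₁⁻¹]

theorem braidToSemidirect_freeToBraid (u : FreeGroup (Fin 2)) :
    braidToSemidirect (freeToBraid u) = inl u := by
  suffices h : braidToSemidirect.comp freeToBraid = inl from DFunLike.congr_fun h u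
  ext i <;> fin_cases i <;>
    simp [freeToBraid, braidToSemidirect_sigma₁, braidToSemidirect_sigma₂, monodromy_of_zero]

theorem rightHom_braidToSemidirect_fullTwist :
    rightHom (braidToSemidirect fullTwist) = Multiplicative.ofAdd 6 := by
  simp only [fullTwist, halfTwist, map_mul, braidToSemidirect_sigma₁, braidToSemidirect_sigma₂,
    rightHom_inl, rightHom_inr]
  rfl

/-- The free group of rank two and the center of the braid group generate a direct product. -/
def freeProdIntToBraid : FreeGroup (Fin 2) × Multiplicative ℤ →* B3 :=
  freeToBraid.noncommCoprod (zpowersHom B3 fullTwist) fun u _ =>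
    ((fullTwist_commute (freeToBraid u)).zpow_left _).symm

theorem freeProdIntToBraid_injective : Function.Injective freeProdIntToBraid := by
  rw [injective_iff_map_eq_one]
  rintro ⟨u, k⟩ h
  replace h : freeToBraid u * fullTwist ^ k.toAdd = 1 := h
  replace h : inl u * braidToSemidirect fullTwist ^ k.toAdd = 1 := by
    rw [← braidToSemidirect_freeToBraid, ← map_zpow, ← map_mul, h, map_one]
  have hk : k.toAdd = 0 := by
    replace h := congrArg rightHom h
    rw [map_mul, map_zpow, map_one, rightHom_inl, rightHom_braidToSemidirect_fullTwist,
      one_mul, ← ofAdd_zsmul, ofAdd_eq_one] at h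
    simpa using h
  rw [hk, zpow_zero, mul_one, map_eq_one_iff inl inl_injective] at h
  exact Prod.mk_eq_one.2 ⟨h, hk⟩

/-- The automorphism of the free group on `ℤ` that shifts the generators by one. -/
def shiftAut : MulAut (FreeGroup ℤ) := FreeGroup.freeGroupCongr (Equiv.addRight 1)

theorem shiftAut_zpow_of (k i : ℤ) : (shiftAut ^ k) (FreeGroup.of i) = FreeGroup.of (i + k) := by
  have h (i : ℤ) : shiftAut (FreeGroup.of i) = FreeGroup.of (i + 1) := by simp [shiftAut]
  induction k generalizing i with
  | zero => simp
  | succ n ih => rw [zpow_add_one, MulAut.mul_apply, h, ih, add_right_comm, add_assoc]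
  | pred n ih =>
    have h' : shiftAut⁻¹ (FreeGroup.of i) = FreeGroup.of (i - 1) := by
      rw [MulAut.inv_apply, MulEquiv.symm_apply_eq, h, sub_add_cancel]
    rw [zpow_sub_one, MulAut.mul_apply, h', ih, sub_add_eq_add_sub, add_sub_assoc]

/-- The embedding of the free group of infinite rank into the free group of rank two given by the
conjugates `x₀ⁱ x₁ x₀⁻ⁱ`. -/
def freeIntToFree : FreeGroup ℤ →* FreeGroup (Fin 2) :=
  FreeGroup.lift fun i => FreeGroup.of 0 ^ i * FreeGroup.of 1 * (FreeGroup.of 0 ^ i)⁻¹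

theorem freeIntToFree_injective : Function.Injective freeIntToFree := by
  let toShift : FreeGroup (Fin 2) →*
      FreeGroup ℤ ⋊[zpowersHom (MulAut (FreeGroup ℤ)) shiftAut] Multiplicative ℤ :=
    FreeGroup.lift ![inr (Multiplicative.ofAdd 1), inl (FreeGroup.of 0)]
  have h : toShift.comp freeIntToFree = inl := by
    ext1 i
    simp only [toShift, MonoidHom.comp_apply, freeIntToFree, FreeGroup.lift_apply_of, map_mul,
      map_zpow, map_inv, Matrix.cons_val_zero, Matrix.cons_val_one]
    rw [← map_zpow, ← map_inv, ← inl_aut, ← ofAdd_zsmul, zpowersHom_apply, toAdd_ofAdd,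
      shiftAut_zpow_of, smul_eq_mul, mul_one, zero_add]
  refine Function.Injective.of_comp (f := toShift) ?_
  rw [← MonoidHom.coe_comp, h]
  exact inl_injective

theorem exists_injective_free_prod_int_to_braid (γ : Type*) [Countable γ] :
    ∃ f : FreeGroup γ × Multiplicative ℤ →* B3, Function.Injective f := by
  obtain ⟨e, he⟩ := Countable.exists_injective_nat γ
  refine ⟨freeProdIntToBraid.comp <| MonoidHom.prodMap
    (freeIntToFree.comp (FreeGroup.map fun x => (e x : ℤ))) (MonoidHom.id _), ?_⟩
  exact freeProdIntToBraid_injective.comp <| Function.Injective.prodMap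
    (freeIntToFree_injective.comp (FreeGroup.map_injective (Nat.cast_injective.comp he)))
    Function.injective_id

end Embedding

section Words

theorem braid3_append (v w : BraidWord3) : braid3 (v ++ w) = braid3 v * braid3 w := by
  simp [braid3]

theorem braid3_surjective : Function.Surjective braid3 := by
  intro g
  obtain ⟨u, rfl⟩ := PresentedGroup.mk_surjective braidRels3 g
  refine ⟨u.toWord, ?_⟩
  have hlift : FreeGroup.lift (PresentedGroup.of (rels := braidRels3)) =
      PresentedGroup.mk braidRels3 := by
    ext i
    simp [PresentedGroup.of]
  rw [← hlift]
  conv_rhs => rw [← FreeGroup.mk_toWord (x := u), FreeGroup.lift_mk]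
  simp only [braid3, Bool.cond_eq_ite]

end Words

section Affine

/-- The slope of an affine bijection of the line. -/
def slope (f : ℚ ≃ᵃ[ℚ] ℚ) : ℚ := f.linear 1

/-- The value at the origin of an affine bijection of the line. -/
def translation (f : ℚ ≃ᵃ[ℚ] ℚ) : ℚ := f 0

theorem linear_apply_eq_slope_mul (f : ℚ ≃ᵃ[ℚ] ℚ) (x : ℚ) : f.linear x = slope f * x := by
  simpa [slope, mul_comm] using f.linear.map_smul x 1

theorem slope_one : slope 1 = 1 := rfl

theorem slope_mul (f g : ℚ ≃ᵃ[ℚ] ℚ) : slope (f * g) = slope f * slope g :=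
  linear_apply_eq_slope_mul f (slope g)

theorem slope_inv (f : ℚ ≃ᵃ[ℚ] ℚ) : slope f⁻¹ = (slope f)⁻¹ :=
  eq_inv_of_mul_eq_one_left (by rw [← slope_mul, inv_mul_cancel, slope_one])

theorem translation_one : translation 1 = 0 := rfl

theorem translation_mul (f g : ℚ ≃ᵃ[ℚ] ℚ) :
    translation (f * g) = slope f * translation g + translation f := by
  rw [← linear_apply_eq_slope_mul]
  simpa [translation] using f.map_vadd 0 (g 0)

theorem translation_inv (f : ℚ ≃ᵃ[ℚ] ℚ) : translation f⁻¹ = -(slope f⁻¹ * translation f) := by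
  rw [eq_neg_iff_add_eq_zero, add_comm, ← translation_mul, inv_mul_cancel, translation_one]

/-- The translation of the line by one. -/
def increment : ℚ ≃ᵃ[ℚ] ℚ := AffineEquiv.constVAdd ℚ ℚ 1

theorem slope_increment : slope increment = 1 := by simp [slope, increment]

theorem translation_increment : translation increment = 1 := by simp [translation, increment]

/-- The dilation of the line by two. -/
def doubling : ℚ ≃ᵃ[ℚ] ℚ := (LinearEquiv.smulOfNeZero ℚ ℚ 2 two_ne_zero).toAffineEquiv

theorem slope_doubling : slope doubling = 2 := mul_one 2

theorem translation_doubling : translation doubling = 0 := by simp [translation, doubling]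

end Affine

section StackGroup

variable {γ : Type*}

/-- The group in which games are played: a free group, holding a stack, times a central counter. -/
abbrev StackGroup (γ : Type*) := FreeGroup γ × Multiplicative ℤ

namespace StackGroup

/-- The generator of the free factor. -/
def gen (x : γ) : StackGroup γ := (FreeGroup.of x, 1)

/-- The element `k` of the central factor. -/
def central (k : ℤ) : StackGroup γ := (1, Multiplicative.ofAdd k)

theorem central_zero : central 0 = (1 : StackGroup γ) := rfl

theorem central_mul_central (j k : ℤ) :
    central j * central k = (central (j + k) : StackGroup γ) := rfl

theorem central_commute (k : ℤ) (u : StackGroup γ) : Commute (central k) u := by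
  rw [Commute, SemiconjBy, Prod.ext_iff]
  exact ⟨(Commute.one_left u.1).eq, mul_comm _ u.2⟩

/-- The homomorphism to `ℤ` with prescribed values on the free generators and on `central 1`. -/
def weightHom (φ : γ → ℤ) (k : ℤ) : StackGroup γ →* Multiplicative ℤ :=
  (FreeGroup.lift (Multiplicative.ofAdd ∘ φ)).coprod (zpowersHom _ (Multiplicative.ofAdd k))

/-- Additive notation for `weightHom`. -/
def weightSum (φ : γ → ℤ) (k : ℤ) (u : StackGroup γ) : ℤ := (weightHom φ k u).toAdd

variable (φ : γ → ℤ) (k : ℤ)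

theorem weightHom_gen (x : γ) : weightHom φ k (gen x) = Multiplicative.ofAdd (φ x) := by
  rw [weightHom, gen, MonoidHom.coprod_apply, FreeGroup.lift_apply_of, map_one, mul_one,
    Function.comp_apply]

theorem weightHom_central (m : ℤ) : weightHom φ k (central m) = Multiplicative.ofAdd (m * k) := by
  rw [weightHom, central, MonoidHom.coprod_apply, map_one, one_mul, zpowersHom_apply, toAdd_ofAdd,
    ← ofAdd_zsmul, smul_eq_mul]

theorem weightSum_one : weightSum φ k 1 = 0 := by simp [weightSum]

theorem weightSum_mul (u v : StackGroup γ) :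
    weightSum φ k (u * v) = weightSum φ k u + weightSum φ k v := by simp [weightSum]

theorem weightSum_inv (u : StackGroup γ) : weightSum φ k u⁻¹ = -weightSum φ k u := by
  simp [weightSum]

theorem weightSum_gen (x : γ) : weightSum φ k (gen x) = φ x := by
  simp [weightSum, weightHom_gen]

theorem weightSum_central (m : ℤ) : weightSum φ k (central m) = m * k := by
  rw [weightSum, weightHom_central, toAdd_ofAdd]

/-- The action on the line in which the free generators act as prescribed and the center acts
trivially. -/
def affineAction (ρ : γ → ℚ ≃ᵃ[ℚ] ℚ) : StackGroup γ →* ℚ ≃ᵃ[ℚ] ℚ :=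
  (FreeGroup.lift ρ).comp (MonoidHom.fst _ _)

theorem affineAction_gen (ρ : γ → ℚ ≃ᵃ[ℚ] ℚ) (x : γ) : affineAction ρ (gen x) = ρ x := by
  simp [affineAction, gen]

theorem affineAction_central (ρ : γ → ℚ ≃ᵃ[ℚ] ℚ) (m : ℤ) : affineAction ρ (central m) = 1 := by
  simp [affineAction, central]

end StackGroup

end StackGroup

/-- A finite system that builds words letter by letter. Each letter has an integer weight in each of
several dimensions and may only be appended when certain linear functions of the word are negative.
The dimension `zero` is trivial; it makes unsatisfiable guards available. -/
structure GuardedSystem (Λ σ : Type*) where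
  /-- The letters that may be appended. -/
  letters : List Λ
  /-- The contribution of a letter to the value of a word. -/
  weight : σ → Λ → ℤ
  /-- A letter may be appended to `w` if `value s w + m < 0` for each of its guards `(s, m)`. -/
  guards : Λ → List (σ × ℤ)
  /-- A dimension in which every word has value zero. -/
  zero : σ
  weight_zero : ∀ l, weight zero l = 0

namespace GuardedSystem

variable {Λ σ : Type*} (M : GuardedSystem Λ σ)

/-- The total weight of a word. -/
def value (s : σ) (w : List Λ) : ℤ := (w.map (M.weight s)).sum

theorem value_append (s : σ) (v w : List Λ) : M.value s (v ++ w) = M.value s v + M.value s w := by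
  simp [value]

theorem value_singleton (s : σ) (l : Λ) : M.value s [l] = M.weight s l := by simp [value]

theorem value_zero (w : List Λ) : M.value M.zero w = 0 := by
  simp [value, funext M.weight_zero]

/-- All guards of the letter hold at the word. -/
def Enabled (w : List Λ) (l : Λ) : Prop := ∀ p ∈ M.guards l, M.value p.1 w + p.2 < 0

/-- `Step w' w` says that `w'` arises from `w` by appending an enabled letter, so that
`Acc M.Step w` says that all runs from `w` are finite. -/
def Step (w' w : List Λ) : Prop := ∃ l ∈ M.letters, M.Enabled w l ∧ w' = w ++ [l]

theorem exists_step_of_not_acc {w : List Λ} (h : ¬ Acc M.Step w) :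
    ∃ l ∈ M.letters, M.Enabled w l ∧ ¬ Acc M.Step (w ++ [l]) := by
  by_contra! hacc
  exact h (Acc.intro w fun _ ⟨l, hl, hen, hw⟩ => hw ▸ hacc l hl hen)

/-- The free generators for the stack game of a guarded system. -/
inductive StackSymbol (Λ σ : Type*)
  | tag (i : Option Λ)
  | letter (l : Λ)
  | build
  | audit (s : σ)
  deriving Countable

open StackGroup StackSymbol

variable {M} {s : σ} {l : Λ} {w : List Λ} {m : ℤ}

section Positions

/-- The group element that holds a word. -/
def stack (w : List Λ) : StackGroup (StackSymbol Λ σ) := (w.map fun l => gen (letter l)).prod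

theorem stack_cons (l : Λ) (w : List Λ) :
    stack (l :: w) = (gen (letter l) * stack w : StackGroup (StackSymbol Λ σ)) := by
  simp [stack]

theorem stack_append (v w : List Λ) :
    stack (v ++ w) = (stack v * stack w : StackGroup (StackSymbol Λ σ)) := by
  simp [stack]

theorem stack_singleton (l : Λ) : stack [l] = (gen (letter l) : StackGroup (StackSymbol Λ σ)) := by
  simp [stack]

/-- The positions in which Attacker keeps following the run of the system. -/
def building (w : List Λ) : StackGroup (StackSymbol Λ σ) := stack w * gen build

/-- The positions in which Attacker unwinds the stack while the counter sums up the values of its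
letters in dimension `s`. -/
def auditing (s : σ) (w : List Λ) (m : ℤ) : StackGroup (StackSymbol Λ σ) :=
  stack w * gen (audit s) * central m

/-- Attacker appends the letter that Defender has announced. -/
def push (l : Λ) : StackGroup (StackSymbol Λ σ) := (gen build)⁻¹ * gen (letter l) * gen build

/-- Attacker claims that the guard `p` is violated. -/
def accuse (p : σ × ℤ) : StackGroup (StackSymbol Λ σ) :=
  (gen build)⁻¹ * gen (audit p.1) * central p.2

variable (M) in
/-- Attacker removes a letter from the stack during an audit. -/
def pop (s : σ) (l : Λ) : StackGroup (StackSymbol Λ σ) :=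
  (gen (audit s))⁻¹ * (gen (letter l))⁻¹ * gen (audit s) * central (M.weight s l)

variable (M) in
/-- Attacker removes the last letter together with the audit marker. -/
def clear (s : σ) (l : Λ) : StackGroup (StackSymbol Λ σ) :=
  (gen (audit s))⁻¹ * (gen (letter l))⁻¹ * central (M.weight s l)

/-- Attacker decreases a positive counter. -/
def burn : StackGroup (StackSymbol Λ σ) := central (-1)

theorem building_mul_push :
    building w * push l = (building (w ++ [l]) : StackGroup (StackSymbol Λ σ)) := by
  simp [building, push, stack_append, stack_singleton, mul_assoc]

theorem building_mul_accuse (p : σ × ℤ) : building w * accuse p = auditing p.1 w p.2 := by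
  simp [building, accuse, auditing, mul_assoc]

theorem auditing_append_mul_pop :
    auditing s (w ++ [l]) m * M.pop s l = auditing s w (m + M.weight s l) := by
  rw [auditing, mul_assoc, (central_commute m _).eq]
  simp [pop, auditing, stack_append, stack_singleton, mul_assoc, ← central_mul_central,
    (central_commute m _).eq]

theorem auditing_singleton_mul_clear :
    auditing s [l] m * M.clear s l = central (m + M.weight s l) := by
  rw [auditing, mul_assoc, (central_commute m _).eq]
  simp [clear, stack_singleton, mul_assoc, ← central_mul_central, (central_commute m _).eq]

end Positions

section Moves

variable (M)

/-- Defender either announces a letter or passes. -/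
def labels : List (Option Λ) := none :: M.letters.map some

/-- The claims `value s w + m ≥ 0` by which Attacker may answer an announcement: after a pass this
is a claim that always holds. -/
def claims (i : Option Λ) : List (σ × ℤ) := i.elim [(M.zero, 0)] M.guards

/-- The dimensions that occur in claims. -/
def dimensions : List σ := M.labels.flatMap fun i => (M.claims i).map Prod.fst

/-- Attacker's moves after the announcement `i`. -/
def moves (i : Option Λ) : List (StackGroup (StackSymbol Λ σ)) :=
  i.toList.map push ++ (M.claims i).map accuse ++
    burn :: M.dimensions.flatMap fun s => M.letters.flatMap fun l => [M.pop s l, M.clear s l]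

variable {M}

theorem mem_moves {i : Option Λ} {u : StackGroup (StackSymbol Λ σ)} :
    u ∈ M.moves i ↔ (∃ l, i = some l ∧ u = push l) ∨ (∃ p ∈ M.claims i, u = accuse p) ∨ u = burn ∨
      ∃ s ∈ M.dimensions, ∃ l ∈ M.letters, u = M.pop s l ∨ u = M.clear s l := by
  simp [moves, eq_comm]

theorem push_mem_moves : push l ∈ M.moves (some l) :=
  mem_moves.2 (Or.inl ⟨l, rfl, rfl⟩)

theorem accuse_mem_moves {i : Option Λ} {p : σ × ℤ} (hp : p ∈ M.claims i) :
    accuse p ∈ M.moves i :=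
  mem_moves.2 (Or.inr (Or.inl ⟨p, hp, rfl⟩))

theorem burn_mem_moves (i : Option Λ) : burn ∈ M.moves i :=
  mem_moves.2 (Or.inr (Or.inr (Or.inl rfl)))

theorem pop_mem_moves (i : Option Λ) (hs : s ∈ M.dimensions) (hl : l ∈ M.letters) :
    M.pop s l ∈ M.moves i :=
  mem_moves.2 (Or.inr (Or.inr (Or.inr ⟨s, hs, l, hl, Or.inl rfl⟩)))

theorem clear_mem_moves (i : Option Λ) (hs : s ∈ M.dimensions) (hl : l ∈ M.letters) :
    M.clear s l ∈ M.moves i :=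
  mem_moves.2 (Or.inr (Or.inr (Or.inr ⟨s, hs, l, hl, Or.inr rfl⟩)))

theorem none_mem_labels : none ∈ M.labels := List.mem_cons_self

theorem some_mem_labels (hl : l ∈ M.letters) : some l ∈ M.labels :=
  List.mem_cons_of_mem _ (List.mem_map_of_mem hl)

theorem mem_dimensions {i : Option Λ} {p : σ × ℤ} (hi : i ∈ M.labels) (hp : p ∈ M.claims i) :
    p.1 ∈ M.dimensions :=
  List.mem_flatMap.2 ⟨i, hi, List.mem_map_of_mem hp⟩

end Moves

section Attacker

theorem forces_central {n : ℕ} : AttackerForces M.labels M.moves (central (n + 1)) := by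
  induction n with
  | zero =>
    refine attackerForces_iff.2 fun i _ => ⟨burn, burn_mem_moves i, Or.inl ?_⟩
    simp [burn, central_mul_central, central_zero]
  | succ n ih =>
    refine attackerForces_iff.2 fun i _ => ⟨burn, burn_mem_moves i, Or.inr ?_⟩
    simpa [burn, central_mul_central] using ih

theorem central_eq_one_or_forces (hm : 0 ≤ m) :
    central m = (1 : StackGroup (StackSymbol Λ σ)) ∨
      AttackerForces M.labels M.moves (central m) := by
  obtain ⟨_ | n, rfl⟩ := Int.eq_ofNat_of_zero_le hm
  · exact Or.inl central_zero
  · exact Or.inr (mod_cast forces_central)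

theorem forces_auditing (hs : s ∈ M.dimensions) (hne : w ≠ []) (hw : ∀ l ∈ w, l ∈ M.letters)
    (hvalue : 0 ≤ M.value s w + m) : AttackerForces M.labels M.moves (auditing s w m) := by
  induction w using List.reverseRecOn generalizing m with
  | nil => exact absurd rfl hne
  | append_singleton w l ih =>
    simp only [List.mem_append, List.mem_singleton, or_imp, forall_and,
      forall_eq] at hw
    rw [value_append, value_singleton, add_assoc, add_comm _ m] at hvalue
    refine attackerForces_iff.2 fun i _ => ?_
    rcases eq_or_ne w [] with rfl | hwne
    · refine ⟨M.clear s l, clear_mem_moves i hs hw.2, ?_⟩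
      rw [List.nil_append, auditing_singleton_mul_clear]
      exact central_eq_one_or_forces (by simpa [value] using hvalue)
    · refine ⟨M.pop s l, pop_mem_moves i hs hw.2, Or.inr ?_⟩
      rw [auditing_append_mul_pop]
      exact ih hwne hw.1 hvalue

theorem forces_building_of_acc (hacc : Acc M.Step w) (hne : w ≠ []) (hw : ∀ l ∈ w, l ∈ M.letters) :
    AttackerForces M.labels M.moves (building w) := by
  induction hacc with
  | intro w _ ih =>
    refine attackerForces_iff.2 fun i hi => ?_
    by_cases hclaims : ∃ p ∈ M.claims i, 0 ≤ M.value p.1 w + p.2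
    · obtain ⟨p, hp, hvalue⟩ := hclaims
      refine ⟨accuse p, accuse_mem_moves hp, Or.inr ?_⟩
      rw [building_mul_accuse]
      exact forces_auditing (mem_dimensions hi hp) hne hw hvalue
    · push Not at hclaims
      rcases i with _ | l
      · simpa [value_zero] using hclaims (M.zero, 0) List.mem_cons_self
      · have hl : l ∈ M.letters := by simpa [labels] using hi
        refine ⟨push l, push_mem_moves, Or.inr ?_⟩
        rw [building_mul_push]
        refine ih _ ⟨l, hl, hclaims, rfl⟩ (by simp) ?_
        simpa [or_imp, forall_and] using ⟨hw, hl⟩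

end Attacker

section Defender

variable {r : σ} {u v : StackGroup (StackSymbol Λ σ)}

/-- The exponent sum of the building marker. -/
def buildExponent : StackGroup (StackSymbol Λ σ) → ℤ := weightSum (fun | build => 1 | _ => 0) 0

/-- The exponent sum of the letters. -/
def height : StackGroup (StackSymbol Λ σ) → ℤ := weightSum (fun | letter _ => 1 | _ => 0) 0

variable (M) in
/-- The counter plus the values of the letters in dimension `s`. Audits in dimension `s` preserve
it. -/
def balance (s : σ) : StackGroup (StackSymbol Λ σ) → ℤ :=
  weightSum (fun | letter l => M.weight s l | _ => 0) 1

open Classical in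
/-- The action on the line in which letters are increments, the building marker doubles, and of the
audit markers all but the one for `s` halve. -/
noncomputable def auditAction (s : σ) : StackGroup (StackSymbol Λ σ) →* ℚ ≃ᵃ[ℚ] ℚ :=
  affineAction fun
    | tag _ => 1
    | letter _ => increment
    | build => doubling
    | audit r => if r = s then 1 else doubling⁻¹

/-- The slope of `auditAction`. -/
noncomputable def rate (s : σ) (u : StackGroup (StackSymbol Λ σ)) : ℚ := slope (auditAction s u)

/-- The amount by which the height exceeds the translation of `auditAction`. It vanishes on honest
positions, and it measures how far Attacker has deviated from auditing the actual stack in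
dimension `s`. -/
noncomputable def slack (s : σ) (u : StackGroup (StackSymbol Λ σ)) : ℚ :=
  height u - translation (auditAction s u)

theorem buildExponent_mul : buildExponent (u * v) = buildExponent u + buildExponent v :=
  weightSum_mul ..

theorem balance_mul : M.balance s (u * v) = M.balance s u + M.balance s v :=
  weightSum_mul ..

theorem rate_mul : rate s (u * v) = rate s u * rate s v := by
  rw [rate, rate, rate, map_mul, slope_mul]

theorem slack_mul (s : σ) (u v : StackGroup (StackSymbol Λ σ)) :
    slack s (u * v) = slack s u + height v - rate s u * translation (auditAction s v) := by
  simp only [slack, rate, height, weightSum_mul, map_mul, translation_mul]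
  push_cast
  ring

attribute [local simp] buildExponent height balance auditAction slope_mul slope_inv slope_one
  slope_increment slope_doubling translation_mul translation_inv translation_one
  translation_increment translation_doubling weightSum_one weightSum_mul weightSum_inv weightSum_gen
  weightSum_central affineAction_gen affineAction_central

theorem buildExponent_stack (w : List Λ) :
    buildExponent (stack w : StackGroup (StackSymbol Λ σ)) = 0 := by
  induction w with
  | nil => simp [stack]
  | cons l w ih => simpa [stack_cons] using ih

theorem balance_stack (w : List Λ) : M.balance s (stack w) = M.value s w := by
  induction w with
  | nil => simp [stack, value]
  | cons l w ih => simpa [stack_cons, value] using ih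

theorem rate_stack (w : List Λ) : rate s (stack w : StackGroup (StackSymbol Λ σ)) = 1 := by
  induction w with
  | nil => simp [stack, rate]
  | cons l w ih => simpa [stack_cons, rate] using ih

theorem slack_stack (w : List Λ) : slack s (stack w : StackGroup (StackSymbol Λ σ)) = 0 := by
  induction w with
  | nil => simp [stack, slack]
  | cons l w ih =>
    have hslack : slack s (gen (letter l) : StackGroup (StackSymbol Λ σ)) = 0 := by simp [slack]
    have hrate : rate s (gen (letter l) : StackGroup (StackSymbol Λ σ)) = 1 := by simp [rate]
    rw [stack_cons, slack_mul, hslack, hrate, one_mul, zero_add]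
    exact ih

/-- A position that, according to Attacker's claims, can still be unwound in dimension `s`. -/
structure Tracked (M : GuardedSystem Λ σ) (s : σ) (u : StackGroup (StackSymbol Λ σ)) : Prop where
  exponent : buildExponent u = 0 ∨ buildExponent u = 1 ∧ s = M.zero
  exponent_add_one_le_rate : buildExponent u + 1 ≤ rate s u
  slack_nonneg : 0 ≤ slack s u

/-- A quantity that Attacker can no longer bring back to zero. -/
def Doomed (M : GuardedSystem Λ σ) (s : σ) (u : StackGroup (StackSymbol Λ σ)) : Prop :=
  M.balance s u < 0 ∨ 0 < slack s u

/-- The common features of removing a letter, either in dimension `s` or, with a twofold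
translation, in another one. -/
structure Unwinds (M : GuardedSystem Λ σ) (s : σ) (v : StackGroup (StackSymbol Λ σ)) : Prop where
  exponent : buildExponent v = 0
  height_eq : height v = -1
  one_le_rate : 1 ≤ rate s v
  translation_eq : translation (auditAction s v) = -1 ∧ M.balance s v = 0 ∨
    translation (auditAction s v) = -2

theorem unwinds_pop (r s : σ) (l : Λ) : M.Unwinds s (M.pop r l) where
  exponent := by simp [pop]
  height_eq := by simp [pop]
  one_le_rate := by by_cases h : r = s <;> simp [pop, rate, h]
  translation_eq := by by_cases h : r = s <;> simp [pop, h]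

theorem unwinds_clear (r s : σ) (l : Λ) : M.Unwinds s (M.clear r l) where
  exponent := by simp [clear]
  height_eq := by simp [clear]
  one_le_rate := by by_cases h : r = s <;> simp [clear, rate, h]
  translation_eq := by by_cases h : r = s <;> simp [clear, h]

theorem Tracked.mul_unwinds (hu : M.Tracked s u) (hv : M.Unwinds s v)
    (hdoom : M.balance s u < buildExponent u ∨ 0 < slack s u) :
    M.Tracked s (u * v) ∧ M.Doomed s (u * v) := by
  have hexponent : buildExponent (u * v) = buildExponent u := by
    rw [buildExponent_mul, hv.exponent, add_zero]
  have hslack : slack s (u * v) = slack s u - 1 - rate s u * translation (auditAction s v) := by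
    rw [slack_mul, hv.height_eq]
    push_cast
    ring
  have hlt : (buildExponent u : ℚ) + 1 ≤ rate s u := hu.exponent_add_one_le_rate
  have hone : 1 ≤ rate s u := by
    rcases hu.exponent with h | ⟨h, -⟩ <;> rw [h] at hlt <;> push_cast at hlt <;> linarith
  have hrate : rate s u ≤ rate s (u * v) :=
    calc rate s u ≤ rate s u * rate s v :=
          le_mul_of_one_le_right (zero_le_one.trans hone) hv.one_le_rate
      _ = rate s (u * v) := rate_mul.symm
  have hnonneg := hu.slack_nonneg
  refine ⟨⟨by rw [hexponent]; exact hu.exponent, by rw [hexponent]; exact hlt.trans hrate, ?_⟩, ?_⟩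
  · rcases hv.translation_eq with ⟨h, -⟩ | h <;> rw [hslack, h] <;> linarith
  · rw [Doomed, balance_mul, hslack]
    rcases hv.translation_eq with ⟨h, hb⟩ | h <;> rw [h]
    · rw [hb, add_zero]
      rcases hu.exponent with he | ⟨he, -⟩ <;> rw [he] at hlt hdoom
      · exact hdoom.imp id fun hpos => by linarith
      · exact Or.inr (by push_cast at hlt; linarith)
    · exact Or.inr (by linarith)

theorem Tracked.mul_burn (hu : M.Tracked s u)
    (hdoom : M.balance s u < buildExponent u ∨ 0 < slack s u) :
    M.Tracked s (u * burn) ∧ M.Doomed s (u * burn) := by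
  have hbalance : M.balance s (u * burn) = M.balance s u - 1 := by simp [burn, sub_eq_add_neg]
  have hexponent : buildExponent (u * burn) = buildExponent u := by simp [burn]
  have hrate : rate s (u * burn) = rate s u := by simp [burn, rate]
  have hslack : slack s (u * burn) = slack s u := by simp [burn, slack]
  refine ⟨⟨hexponent ▸ hu.exponent, by rw [hexponent, hrate]; exact hu.exponent_add_one_le_rate,
    hslack ▸ hu.slack_nonneg⟩, hdoom.imp (fun h => ?_) fun h => hslack ▸ h⟩
  rcases hu.exponent with h | h <;> omega

theorem Tracked.mul_accuse_zero (hu : M.Tracked M.zero u) (hexponent : buildExponent u = 1)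
    (hdoom : M.Doomed M.zero u) :
    M.Tracked M.zero (u * accuse (M.zero, 0)) ∧ M.Doomed M.zero (u * accuse (M.zero, 0)) := by
  have hexponent' : buildExponent (u * accuse (M.zero, 0)) = 0 := by
    rw [buildExponent_mul, hexponent]
    simp [accuse]
  have hbalance : M.balance M.zero (u * accuse (M.zero, 0)) = M.balance M.zero u := by
    simp [accuse]
  have hrate : rate M.zero (u * accuse (M.zero, 0)) = rate M.zero u * 2⁻¹ := by
    simp [accuse, rate]
  have hslack : slack M.zero (u * accuse (M.zero, 0)) = slack M.zero u := by
    rw [slack_mul]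
    simp [accuse]
  have hlt := hu.exponent_add_one_le_rate
  rw [hexponent] at hlt
  refine ⟨⟨Or.inl hexponent', ?_, hslack ▸ hu.slack_nonneg⟩, ?_⟩
  · rw [hexponent', hrate]
    push_cast at hlt ⊢
    linarith
  · rwa [Doomed, hbalance, hslack]

variable (M) in
/-- The positions in which Defender needs no system any more: passing forever, he keeps Attacker
from reaching the identity. -/
def Deviated (u : StackGroup (StackSymbol Λ σ)) : Prop :=
  buildExponent u < 0 ∨ ∃ s, M.Tracked s u ∧ M.Doomed s u

theorem Deviated.ne_one (hu : M.Deviated u) : u ≠ 1 := by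
  rintro rfl
  rcases hu with h | ⟨s, -, h | h⟩ <;> simp [slack] at h

theorem Deviated.mul_mem_moves_none (hu : M.Deviated u) (hv : v ∈ M.moves none) :
    M.Deviated (u * v) := by
  have hv' : v = accuse (M.zero, 0) ∨ v = burn ∨
      ∃ r l, v = M.pop r l ∨ v = M.clear r l := by
    rcases mem_moves.1 hv with ⟨l, h, -⟩ | ⟨p, hp, rfl⟩ | rfl | ⟨r, -, l, -, h⟩
    · cases h
    · exact Or.inl (by rw [List.mem_singleton.1 hp])
    · exact Or.inr (Or.inl rfl)
    · exact Or.inr (Or.inr ⟨r, l, h⟩)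
  rcases hu with hneg | ⟨s, htracked, hdoom⟩
  · have hexponent : buildExponent v ≤ 0 := by
      rcases hv' with rfl | rfl | ⟨r, l, rfl | rfl⟩ <;> simp [accuse, burn, pop, clear]
    exact Or.inl (by rw [buildExponent_mul]; omega)
  · have hdoom' : M.balance s u < buildExponent u ∨ 0 < slack s u :=
      hdoom.imp_left fun h => by rcases htracked.exponent with h' | h' <;> omega
    rcases hv' with rfl | rfl | ⟨r, l, rfl | rfl⟩
    · rcases htracked.exponent with h | ⟨h, rfl⟩
      · exact Or.inl (by rw [buildExponent_mul, h]; simp [accuse])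
      · exact Or.inr ⟨_, htracked.mul_accuse_zero h hdoom⟩
    · exact Or.inr ⟨s, htracked.mul_burn hdoom'⟩
    · exact Or.inr ⟨s, htracked.mul_unwinds (unwinds_pop r s l) hdoom'⟩
    · exact Or.inr ⟨s, htracked.mul_unwinds (unwinds_clear r s l) hdoom'⟩

theorem buildExponent_building (w : List Λ) :
    buildExponent (building w : StackGroup (StackSymbol Λ σ)) = 1 := by
  rw [building, buildExponent_mul, buildExponent_stack]
  simp

theorem building_ne_one : building w ≠ (1 : StackGroup (StackSymbol Λ σ)) := fun h => by
  simpa [h] using buildExponent_building (σ := σ) w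

theorem tracked_building (w : List Λ) : M.Tracked M.zero (building w) where
  exponent := Or.inr ⟨buildExponent_building w, rfl⟩
  exponent_add_one_le_rate := by
    rw [buildExponent_building, building, rate_mul, rate_stack]
    norm_num [rate]
  slack_nonneg := by
    rw [building, slack_mul, slack_stack]
    simp

theorem balance_building_lt (w : List Λ) :
    M.balance M.zero (building w) < buildExponent (building w : StackGroup (StackSymbol Λ σ)) := by
  rw [buildExponent_building, building, balance_mul, balance_stack, value_zero]
  simp

theorem tracked_auditing (s : σ) (w : List Λ) (m : ℤ) : M.Tracked s (auditing s w m) := by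
  have hexponent : buildExponent (auditing s w m : StackGroup (StackSymbol Λ σ)) = 0 := by
    rw [auditing, buildExponent_mul, buildExponent_mul, buildExponent_stack]
    simp
  refine ⟨Or.inl hexponent, ?_, ?_⟩
  · rw [hexponent, auditing, rate_mul, rate_mul, rate_stack]
    simp [rate]
  · rw [auditing, slack_mul, slack_mul, slack_stack]
    simp

theorem balance_auditing (s : σ) (w : List Λ) (m : ℤ) :
    M.balance s (auditing s w m) = M.value s w + m := by
  rw [auditing, balance_mul, balance_mul, balance_stack]
  simp

theorem deviated_building_mul {i : Option Λ} (hv : v ∈ M.moves i)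
    (hpush : ∀ l, i = some l → v ≠ push l) (hclaims : ∀ p ∈ M.claims i, M.value p.1 w + p.2 < 0) :
    M.Deviated (building w * v) := by
  have htracked := tracked_building (M := M) w
  have hdoom := Or.inl (b := 0 < slack M.zero (building w)) (balance_building_lt (M := M) w)
  rcases mem_moves.1 hv with ⟨l, hl, rfl⟩ | ⟨p, hp, rfl⟩ | rfl | ⟨r, -, l, -, rfl | rfl⟩
  · exact absurd rfl (hpush l hl)
  · rw [building_mul_accuse]
    refine Or.inr ⟨p.1, tracked_auditing .., Or.inl ?_⟩
    rw [balance_auditing]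
    exact hclaims p hp
  · exact Or.inr ⟨_, htracked.mul_burn hdoom⟩
  · exact Or.inr ⟨_, htracked.mul_unwinds (unwinds_pop r _ l) hdoom⟩
  · exact Or.inr ⟨_, htracked.mul_unwinds (unwinds_clear r _ l) hdoom⟩

theorem not_forces_building_of_not_acc (hacc : ¬ Acc M.Step w) :
    ¬ AttackerForces M.labels M.moves (building w) := by
  let Safe (u : StackGroup (StackSymbol Λ σ)) : Prop :=
    (∃ w, u = building w ∧ ¬ Acc M.Step w) ∨ M.Deviated u
  refine not_attackerForces_of_invariant Safe ?_ (Or.inl ⟨w, rfl, hacc⟩)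
  rintro u (⟨w, rfl, hacc⟩ | hu)
  · obtain ⟨l, hl, henabled, hacc'⟩ := M.exists_step_of_not_acc hacc
    refine ⟨some l, some_mem_labels hl, fun v hv => ?_⟩
    by_cases hpush : v = push l
    · rw [hpush, building_mul_push]
      exact ⟨building_ne_one, Or.inl ⟨_, rfl, hacc'⟩⟩
    · have hdev : M.Deviated (building w * v) :=
        deviated_building_mul hv (fun k hk => by cases hk; exact hpush) henabled
      exact ⟨hdev.ne_one, Or.inr hdev⟩
  · refine ⟨none, none_mem_labels, fun v hv => ?_⟩
    have hdev := hu.mul_mem_moves_none hv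
    exact ⟨hdev.ne_one, Or.inr hdev⟩

theorem forces_building_iff_acc (hne : w ≠ []) (hw : ∀ l ∈ w, l ∈ M.letters) :
    AttackerForces M.labels M.moves (building w) ↔ Acc M.Step w :=
  ⟨not_imp_not.1 not_forces_building_of_not_acc, fun h => forces_building_of_acc h hne hw⟩

end Defender

theorem exists_roundMoves_game (M : GuardedSystem Λ σ) :
    ∃ A D : List (StackGroup (StackSymbol Λ σ)), D ≠ [] ∧ ∀ w, w ≠ [] → (∀ l ∈ w, l ∈ M.letters) →
      (AttackerForces D (roundMoves A) (building w) ↔ Acc M.Step w) := by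
  classical
  let tagOf (i : Option Λ) : StackGroup (StackSymbol Λ σ) := gen (tag i)
  let count (i : Option Λ) : StackGroup (StackSymbol Λ σ) →* Multiplicative ℤ :=
    weightHom (fun | tag j => if j = i then 1 else 0 | _ => 0) 0
  have count_stack (i : Option Λ) (w : List Λ) : count i (stack w) = 1 := by
    induction w with
    | nil => simp [stack]
    | cons l w ih => simpa [stack_cons, count, weightHom_gen] using ih
  refine ⟨taggedMoves tagOf M.labels M.moves, M.labels.map tagOf, by simp [labels],
    fun w hne hw => ?_⟩
  rw [attackerForces_taggedMoves count, forces_building_iff_acc hne hw]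
  · intro i
    simpa [count, tagOf, weightHom_gen] using Multiplicative.ofAdd_lt.2 one_pos
  · intro i j hij
    simp [count, tagOf, weightHom_gen, hij.symm]
  · intro i j _ v hv
    rcases mem_moves.1 hv with ⟨l, -, rfl⟩ | ⟨p, -, rfl⟩ | rfl | ⟨r, -, l, -, rfl | rfl⟩ <;>
      simp [count, push, accuse, burn, pop, clear, weightHom_gen, weightHom_central]
  · intro i
    simp [building, count_stack, count, weightHom_gen]

theorem exists_braid_game [Countable Λ] [Countable σ] (M : GuardedSystem Λ σ) :
    ∃ (A D : List BraidWord3) (letterWord : Λ → BraidWord3) (buildWord : BraidWord3),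
      ∀ w, w ≠ [] → (∀ l ∈ w, l ∈ M.letters) →
        braid3 (w.flatMap letterWord ++ buildWord) ≠ 1 ∧
          (BG3AttackerWins (A.map braid3) (D.map braid3)
            (braid3 (w.flatMap letterWord ++ buildWord)) ↔ Acc M.Step w) := by
  obtain ⟨A, D, hD, hgame⟩ := M.exists_roundMoves_game
  obtain ⟨f, hf⟩ := exists_injective_free_prod_int_to_braid (StackSymbol Λ σ)
  let word : B3 → BraidWord3 := Function.surjInv braid3_surjective
  have braid3_word (g : B3) : braid3 (word g) = g := Function.surjInv_eq braid3_surjective g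
  have map_word (B : List (StackGroup (StackSymbol Λ σ))) :
      (B.map (word ∘ f)).map braid3 = B.map f := by
    simp only [List.map_map, Function.comp_def, braid3_word]
  let letterWord (l : Λ) : BraidWord3 := word (f (gen (letter l)))
  have braid3_flatMap (w : List Λ) : braid3 (w.flatMap letterWord) = f (stack w) := by
    induction w with
    | nil => simp [stack, braid3]
    | cons l w ih => rw [List.flatMap_cons, braid3_append, braid3_word, ih, stack_cons, map_mul]
  refine ⟨A.map (word ∘ f), D.map (word ∘ f), letterWord, word (f (gen build)),
    fun w hne hw => ?_⟩
  have braid3_building :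
      braid3 (w.flatMap letterWord ++ word (f (gen build))) = f (building w) := by
    rw [braid3_append, braid3_flatMap, braid3_word, building, map_mul]
  rw [braid3_building, map_word, map_word, ne_eq, map_eq_one_iff f hf,
    bg3AttackerWins_iff_attackerForces (by simpa using hD), attackerForces_roundMoves_map f hf]
  exact ⟨building_ne_one, hgame w hne hw⟩

end GuardedSystem

/-- Programs over counters indexed by `ℕ`. The program `loop r p` decrements the counter `r` and
runs `p` until the counter `r` is zero at the start of an iteration. -/
inductive LoopProgram
  | skip
  | inc (r : ℕ)
  | seq (p q : LoopProgram)
  | loop (r : ℕ) (p : LoopProgram)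
  deriving Countable, DecidableEq

namespace LoopProgram

/-- The programs still to be run and the values of the counters. -/
abbrev Config : Type := List LoopProgram × (ℕ → ℕ)

/-- The execution of one instruction. -/
def step : Config → Option Config
  | ([], _) => none
  | (skip :: K, s) => some (K, s)
  | (inc r :: K, s) => some (K, Function.update s r (s r + 1))
  | (seq p q :: K, s) => some (p :: q :: K, s)
  | (loop r p :: K, s) =>
    if s r = 0 then some (K, s) else some (p :: loop r p :: K, Function.update s r (s r - 1))

/-- `Next c' c` says that `c'` is the configuration after `c`. -/
def Next (c' c : Config) : Prop := step c = some c'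

/-- The execution from the configuration is finite. -/
def Halts (c : Config) : Prop := Acc Next c

/-- The lists of programs that occur while `p` runs, with `K` still to be run afterwards. -/
def controlPointsBefore : LoopProgram → List LoopProgram → List (List LoopProgram)
  | skip, K => [skip :: K]
  | inc r, K => [inc r :: K]
  | seq p q, K => (seq p q :: K) :: (controlPointsBefore p (q :: K) ++ controlPointsBefore q K)
  | loop r p, K => (loop r p :: K) :: controlPointsBefore p (loop r p :: K)

/-- The lists of programs that occur while `p` runs. -/
def controlPoints (p : LoopProgram) : List (List LoopProgram) := [] :: controlPointsBefore p []

theorem cons_mem_controlPointsBefore (p : LoopProgram) (K : List LoopProgram) :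
    p :: K ∈ controlPointsBefore p K := by
  cases p <;> simp [controlPointsBefore]

theorem singleton_mem_controlPoints (p : LoopProgram) : [p] ∈ controlPoints p :=
  List.mem_cons_of_mem _ (cons_mem_controlPointsBefore p [])

theorem mem_controlPointsBefore_or_eq_of_step {p : LoopProgram} {K : List LoopProgram}
    {c c' : Config} (hc : c.1 ∈ controlPointsBefore p K) (h : step c = some c') :
    c'.1 ∈ controlPointsBefore p K ∨ c'.1 = K := by
  obtain ⟨L, s⟩ := c
  induction p generalizing K with
  | skip =>
    obtain rfl := List.mem_singleton.1 hc
    cases h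
    exact Or.inr rfl
  | inc r =>
    obtain rfl := List.mem_singleton.1 hc
    cases h
    exact Or.inr rfl
  | seq p q ihp ihq =>
    have hstart := cons_mem_controlPointsBefore p (q :: K)
    have hmid := cons_mem_controlPointsBefore q K
    simp only [controlPointsBefore, List.mem_cons, List.mem_append] at hc ⊢
    rcases hc with rfl | hc | hc
    · cases h
      tauto
    · rcases ihp hc with h | h
      · tauto
      · rw [h]
        tauto
    · rcases ihq hc with h | h <;> tauto
  | loop r p ih =>
    have hstart := cons_mem_controlPointsBefore p (loop r p :: K)
    simp only [controlPointsBefore, List.mem_cons] at hc ⊢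
    rcases hc with rfl | hc
    · rw [step] at h
      split_ifs at h <;> cases h <;> tauto
    · rcases ih hc with h | h <;> tauto

theorem mem_controlPoints_of_step {p : LoopProgram} {c c' : Config} (hc : c.1 ∈ controlPoints p)
    (h : step c = some c') : c'.1 ∈ controlPoints p := by
  obtain ⟨L, s⟩ := c
  rcases List.mem_cons.1 hc with rfl | hc
  · cases h
  · exact List.mem_cons.2 (mem_controlPointsBefore_or_eq_of_step hc h).symm

section Simulation

/-- The linear functions of a configuration that occur in guards. -/
inductive Coordinate
  | zero
  | pos (r : ℕ)
  | neg (r : ℕ)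
  | point (K : List LoopProgram)
  deriving Countable

open Coordinate

/-- The value of a coordinate. That of `point K` is `-1` at the control point `K` and `0`
elsewhere, so that it is negative exactly at `K`. -/
def coordinate (c : Config) : Coordinate → ℤ
  | zero => 0
  | pos r => c.2 r
  | neg r => -c.2 r
  | point K => -Pi.single (M := fun _ => ℤ) c.1 1 K

/-- A change of the control point together with a change of one counter, subject to the tests that
`coordinate c x + m < 0` for `(x, m) ∈ tests`. -/
structure Transition where
  source : List LoopProgram
  target : List LoopProgram
  counter : ℕ
  change : ℤ
  tests : List (Coordinate × ℤ)
  deriving Countable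

/-- The transitions by which the execution may go on. -/
def transitions : List LoopProgram → List Transition
  | [] => []
  | skip :: K => [⟨skip :: K, K, 0, 0, []⟩]
  | inc r :: K => [⟨inc r :: K, K, r, 1, []⟩]
  | seq p q :: K => [⟨seq p q :: K, p :: q :: K, 0, 0, []⟩]
  | loop r p :: K =>
    [⟨loop r p :: K, K, 0, 0, [(pos r, -1)]⟩,
      ⟨loop r p :: K, p :: loop r p :: K, r, -1, [(neg r, 0)]⟩]

theorem source_of_mem_transitions {K : List LoopProgram} {t : Transition}
    (ht : t ∈ transitions K) : t.source = K := by
  rcases K with _ | ⟨_ | _ | _ | _, K⟩ <;> simp only [transitions, List.mem_cons,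
    List.not_mem_nil, or_false] at ht
  all_goals first | rw [ht] | rcases ht with rfl | rfl <;> rfl

namespace Transition

/-- All tests of the transition hold. -/
def Passes (t : Transition) (c : Config) : Prop := ∀ g ∈ t.tests, coordinate c g.1 + g.2 < 0

/-- The transition leads from `c` to `c'`. -/
def Leads (t : Transition) (c c' : Config) : Prop :=
  c'.1 = t.target ∧ ∀ r, (c'.2 r : ℤ) = c.2 r + Pi.single (M := fun _ => ℤ) t.counter t.change r

end Transition

theorem cast_update_add (s : ℕ → ℕ) (r n : ℕ) (m : ℤ) (h : (n : ℤ) = s r + m) (i : ℕ) :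
    (Function.update s r n i : ℤ) = s i + Pi.single (M := fun _ => ℤ) r m i := by
  rcases eq_or_ne i r with rfl | hi <;> simp [*]

theorem exists_transition_of_step {c c' : Config} (h : step c = some c') :
    ∃ t ∈ transitions c.1, t.Passes c ∧ t.Leads c c' := by
  obtain ⟨K, s⟩ := c
  rcases K with _ | ⟨_ | r | _ | ⟨r, p⟩, K⟩ <;> simp only [step] at h
  on_goal 5 => split_ifs at h with hr
  all_goals cases h
  · exact ⟨_, List.mem_singleton_self _, by simp [Transition.Passes], rfl, by simp⟩
  · exact ⟨_, List.mem_singleton_self _, by simp [Transition.Passes], rfl,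
      cast_update_add _ _ _ _ (by simp)⟩
  · exact ⟨_, List.mem_singleton_self _, by simp [Transition.Passes], rfl, by simp⟩
  · exact ⟨_, List.mem_cons_self, by simp [Transition.Passes, coordinate, hr], rfl, by simp⟩
  · exact ⟨_, List.mem_cons_of_mem _ List.mem_cons_self,
      by simp [Transition.Passes, coordinate]; omega, rfl,
      cast_update_add _ _ _ _ (by dsimp only; omega)⟩

theorem exists_step_of_transition {c : Config} {t : Transition} (ht : t ∈ transitions c.1)
    (hpass : t.Passes c) : ∃ c', step c = some c' ∧ t.Leads c c' := by
  obtain ⟨K, s⟩ := c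
  rcases K with _ | ⟨_ | r | _ | ⟨r, p⟩, K⟩ <;>
    simp only [transitions, List.mem_cons, List.not_mem_nil, or_false] at ht
  · exact ⟨_, rfl, by simp [ht, Transition.Leads]⟩
  · exact ⟨_, rfl, by rw [ht], by rw [ht]; exact cast_update_add _ _ _ _ (by simp)⟩
  · exact ⟨_, rfl, by simp [ht, Transition.Leads]⟩
  · rcases ht with rfl | rfl <;> have hr := hpass _ (List.mem_singleton_self _) <;>
      simp only [coordinate] at hr
    · exact ⟨_, if_pos (by omega), by simp [Transition.Leads]⟩
    · exact ⟨_, if_neg (by omega), rfl, cast_update_add _ _ _ _ (by dsimp only; omega)⟩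

/-- The letters of the words that record a run: an initial control point and input, followed by
transitions. -/
inductive Letter
  | start
  | input
  | transition (t : Transition)
  deriving Countable

open Letter

/-- The change of a coordinate that a letter records in a run of `p`. -/
def weight (p : LoopProgram) : Coordinate → Letter → ℤ
  | pos r, input => Pi.single (M := fun _ => ℤ) 0 1 r
  | neg r, input => -Pi.single (M := fun _ => ℤ) 0 1 r
  | point K, start => -Pi.single (M := fun _ => ℤ) [p] 1 K
  | pos r, transition t => Pi.single (M := fun _ => ℤ) t.counter t.change r
  | neg r, transition t => -Pi.single (M := fun _ => ℤ) t.counter t.change r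
  | point K, transition t => Pi.single (M := fun _ => ℤ) t.source 1 K -
      Pi.single (M := fun _ => ℤ) t.target 1 K
  | _, _ => 0

/-- The system that builds the runs of `p`. The letters `start` and `input` have a guard that never
holds: they only occur in initial words. -/
def guardedSystem (p : LoopProgram) : GuardedSystem Letter Coordinate where
  letters := start :: input :: ((controlPoints p).flatMap transitions).map transition
  weight := weight p
  guards
    | transition t => (point t.source, 0) :: t.tests
    | _ => [(zero, 0)]
  zero := zero
  weight_zero l := by cases l <;> rfl

/-- The word that records the start of `p` with input `n` in counter zero. -/
def inputWord (n : ℕ) : List Letter := start :: List.replicate n input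

theorem mem_letters_of_mem_inputWord (p : LoopProgram) {n : ℕ} {l : Letter}
    (hl : l ∈ inputWord n) : l ∈ p.guardedSystem.letters := by
  rcases List.mem_cons.1 hl with rfl | hl
  · exact List.mem_cons_self
  · rw [List.eq_of_mem_replicate hl]
    exact List.mem_cons_of_mem _ List.mem_cons_self

variable {p : LoopProgram} {c c' : Config} {t : Transition} {w : List Letter}

/-- The word records a run of `p` that ends in `c`. -/
def Records (p : LoopProgram) (w : List Letter) (c : Config) : Prop :=
  ∀ x, p.guardedSystem.value x w = coordinate c x

theorem records_inputWord (p : LoopProgram) (n : ℕ) :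
    p.Records (inputWord n) ([p], Pi.single 0 n) := by
  intro x
  cases x with
  | zero => exact p.guardedSystem.value_zero _
  | point K => simp [GuardedSystem.value, inputWord, guardedSystem, weight, coordinate]
  | pos r | neg r =>
    rcases eq_or_ne r 0 with rfl | hr <;>
      simp [GuardedSystem.value, inputWord, guardedSystem, weight, coordinate, *]

theorem Records.append_transition (hw : p.Records w c) (ht : t.source = c.1)
    (hlead : t.Leads c c') : p.Records (w ++ [transition t]) c' := by
  intro x
  rw [GuardedSystem.value_append, GuardedSystem.value_singleton, hw x]
  cases x with
  | zero => rfl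
  | pos r => exact (hlead.2 r).symm
  | neg r =>
    simp only [coordinate, guardedSystem, weight, hlead.2 r]
    ring
  | point K =>
    simp only [coordinate, guardedSystem, weight, hlead.1, ht]
    ring

theorem Records.enabled_transition_iff (hw : p.Records w c) :
    p.guardedSystem.Enabled w (transition t) ↔ c.1 = t.source ∧ t.Passes c := by
  have hpoint : coordinate c (point t.source) + 0 < 0 ↔ c.1 = t.source := by
    by_cases h : t.source = c.1 <;> simp [coordinate, h, eq_comm (a := c.1)]
  simp only [GuardedSystem.Enabled, guardedSystem, List.forall_mem_cons, Transition.Passes,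
    ← hpoint]
  simp only [← hw _, guardedSystem]

theorem not_enabled_of_guards_eq {l : Letter} (h : p.guardedSystem.guards l = [(zero, 0)]) :
    ¬ p.guardedSystem.Enabled w l := fun hen => by
  have := hen (zero, 0) (by simp [h])
  rw [show zero = p.guardedSystem.zero from rfl, GuardedSystem.value_zero] at this
  exact absurd this (by simp)

theorem Records.exists_step (hw : p.Records w c) {w' : List Letter}
    (h : p.guardedSystem.Step w' w) : ∃ c', step c = some c' ∧ p.Records w' c' := by
  obtain ⟨_ | _ | t, hl, hen, rfl⟩ := h
  · exact absurd hen (not_enabled_of_guards_eq rfl)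
  · exact absurd hen (not_enabled_of_guards_eq rfl)
  · obtain ⟨hsource, hpass⟩ := hw.enabled_transition_iff.1 hen
    have ht : t ∈ transitions c.1 := by
      obtain ⟨K, -, ht⟩ : ∃ K ∈ controlPoints p, t ∈ transitions K := by
        simpa [guardedSystem] using hl
      rwa [hsource, source_of_mem_transitions ht]
    obtain ⟨c', hstep, hlead⟩ := exists_step_of_transition ht hpass
    exact ⟨c', hstep, hw.append_transition hsource.symm hlead⟩

theorem Records.exists_word_step (hw : p.Records w c) (hc : c.1 ∈ controlPoints p)
    (h : step c = some c') : ∃ w', p.guardedSystem.Step w' w ∧ p.Records w' c' := by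
  obtain ⟨t, ht, hpass, hlead⟩ := exists_transition_of_step h
  have hsource := source_of_mem_transitions ht
  refine ⟨w ++ [transition t], ⟨transition t, ?_, ?_, rfl⟩, hw.append_transition hsource hlead⟩
  · exact List.mem_cons_of_mem _ (List.mem_cons_of_mem _ (List.mem_map_of_mem
      (List.mem_flatMap.2 ⟨c.1, hc, ht⟩)))
  · exact hw.enabled_transition_iff.2 ⟨hsource.symm, hpass⟩

theorem Records.acc_iff_halts (hw : p.Records w c) (hc : c.1 ∈ controlPoints p) :
    Acc p.guardedSystem.Step w ↔ Halts c := by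
  constructor
  · intro h
    induction h generalizing c with
    | intro w _ ih =>
      refine Acc.intro c fun c' hstep => ?_
      obtain ⟨w', hword, hw'⟩ := hw.exists_word_step hc hstep
      exact ih w' hword hw' (mem_controlPoints_of_step hc hstep)
  · intro h
    induction h generalizing w with
    | intro c _ ih =>
      refine Acc.intro w fun w' hword => ?_
      obtain ⟨c', hstep, hw'⟩ := hw.exists_step hword
      exact ih c' hstep hw' (mem_controlPoints_of_step hc hstep)

theorem acc_inputWord_iff_halts (p : LoopProgram) (n : ℕ) :
    Acc p.guardedSystem.Step (inputWord n) ↔ Halts ([p], Pi.single 0 n) :=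
  (records_inputWord p n).acc_iff_halts (singleton_mem_controlPoints p)

end Simulation

section Execution

open Relation Function

variable {p q : LoopProgram} {r : ℕ} {s s₁ s₂ : ℕ → ℕ}

theorem Halts.of_transGen {c c' : Config} (h : TransGen Next c' c) (h' : Halts c') : Halts c := by
  have of_next {c c' : Config} (h : Next c' c) (h' : Halts c') : Halts c :=
    Acc.intro c fun d hd => by rwa [Option.some.inj (hd.symm.trans h)]
  induction h with
  | single h => exact of_next h h'
  | tail _ h ih => exact of_next h ih

/-- The execution of `p` with counters `s` ends with counters `s'`. -/
def Executes (p : LoopProgram) (s s' : ℕ → ℕ) : Prop :=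
  ∀ K, TransGen Next (K, s') (p :: K, s)

theorem executes_skip (s : ℕ → ℕ) : skip.Executes s s := fun _ => .single rfl

theorem executes_inc (r : ℕ) (s : ℕ → ℕ) : (inc r).Executes s (update s r (s r + 1)) :=
  fun _ => .single rfl

theorem Executes.seq (hp : p.Executes s s₁) (hq : q.Executes s₁ s₂) :
    (seq p q).Executes s s₂ := fun K => ((hq K).trans (hp (q :: K))).tail rfl

theorem executes_loop_of_eq_zero (h : s r = 0) : (loop r p).Executes s s :=
  fun _ => .single (if_pos h)

theorem Executes.transGen_loop (hr : s r ≠ 0) (hp : p.Executes (update s r (s r - 1)) s₁)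
    (K : List LoopProgram) : TransGen Next (loop r p :: K, s₁) (loop r p :: K, s) :=
  (hp (loop r p :: K)).tail (if_neg hr)

theorem exists_executes_loop (I : ℕ → (ℕ → ℕ) → Prop) (hr : ∀ i s, I i s → s r = i)
    (hbody : ∀ i s, I (i + 1) s → ∃ s', p.Executes (update s r i) s' ∧ I i s') {i : ℕ}
    (hs : I i s) : ∃ s', (loop r p).Executes s s' ∧ I 0 s' := by
  induction i generalizing s with
  | zero => exact ⟨s, executes_loop_of_eq_zero (hr 0 s hs), hs⟩
  | succ i ih =>
    have hri := hr _ s hs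
    obtain ⟨s₁, hexec, hs₁⟩ := hbody i s hs
    obtain ⟨s₂, hloop, hs₂⟩ := ih hs₁
    refine ⟨s₂, fun K => (hloop K).trans (Executes.transGen_loop (by omega) ?_ K), hs₂⟩
    rwa [hri, Nat.add_sub_cancel]

theorem halts_loop_iff_exists_eq_zero (I : ℕ → (ℕ → ℕ) → Prop) (flag : ℕ → ℕ)
    (hr : ∀ k s, I k s → s r = flag k)
    (hbody : ∀ k s, I k s → ∃ s', p.Executes (update s r (s r - 1)) s' ∧ I (k + 1) s')
    (hs : I 0 s) : Halts ([loop r p], s) ↔ ∃ k, flag k = 0 := by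
  constructor
  · intro h
    by_contra! hflag
    have not_acc (c : Config) (hc : Acc (TransGen Next) c) :
        ∀ k s, I k s → c ≠ ([loop r p], s) := by
      induction hc with
      | intro c _ ih =>
        rintro k s hs rfl
        obtain ⟨s', hexec, hs'⟩ := hbody k s hs
        exact ih _ (hexec.transGen_loop (hr k s hs ▸ hflag k) []) (k + 1) s' hs' rfl
    exact not_acc _ h.transGen 0 s hs rfl
  · rintro ⟨k, hk⟩
    have halts_of_add_eq (j : ℕ) : ∀ i s, i + j = k → I i s → Halts ([loop r p], s) := by
      induction j with
      | zero =>
        rintro i s rfl hs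
        refine Halts.of_transGen (executes_loop_of_eq_zero ((hr i s hs).trans hk) []) ?_
        exact Acc.intro _ fun _ h => nomatch h
      | succ j ih =>
        intro i s hij hs
        rcases eq_or_ne (s r) 0 with h0 | h0
        · refine Halts.of_transGen (executes_loop_of_eq_zero h0 []) ?_
          exact Acc.intro _ fun _ h => nomatch h
        · obtain ⟨s', hexec, hs'⟩ := hbody i s hs
          exact Halts.of_transGen (hexec.transGen_loop h0 []) (ih (i + 1) s' (by omega) hs')
    exact halts_of_add_eq k 0 s (by omega) hs

end Execution

section Compilation

open Function

variable {s : ℕ → ℕ} {a b t : ℕ}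

/-- Sets the counter `r` to zero. -/
def clear (r : ℕ) : LoopProgram := loop r skip

theorem executes_clear (r : ℕ) (s : ℕ → ℕ) : (clear r).Executes s (update s r 0) := by
  obtain ⟨_, h, rfl⟩ := exists_executes_loop (r := r) (p := skip) (s := s) (i := s r)
    (fun i u => u = update s r i) (by rintro i _ rfl; simp)
    (by rintro i _ rfl; exact ⟨_, executes_skip _, by simp⟩) (by simp)
  exact h

/-- Adds the counter `a` to the counter `b` and sets `a` to zero. -/
def move (a b : ℕ) : LoopProgram := loop a (inc b)

theorem executes_move (hab : a ≠ b) (s : ℕ → ℕ) :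
    (move a b).Executes s (update (update s b (s b + s a)) a 0) := by
  obtain ⟨u, h, hu⟩ := exists_executes_loop (r := a) (p := inc b) (s := s) (i := s a)
    (fun i u => u a = i ∧ u b + i = s b + s a ∧ ∀ x, x ≠ a → x ≠ b → u x = s x)
    (by tauto) (fun i u hu => ⟨_, executes_inc _ _, by grind [update_apply]⟩) (by tauto)
  have hfinal : u = update (update s b (s b + s a)) a 0 := by
    ext x
    grind [update_apply]
  exact hfinal ▸ h

/-- Adds the counter `a` to the counters `b` and `t` and sets `a` to zero. -/
def moveBoth (a b t : ℕ) : LoopProgram := loop a (seq (inc b) (inc t))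

theorem executes_moveBoth (hab : a ≠ b) (hat : a ≠ t) (hbt : b ≠ t) (s : ℕ → ℕ) :
    (moveBoth a b t).Executes s (update (update (update s b (s b + s a)) t (s t + s a)) a 0) := by
  obtain ⟨u, h, hu⟩ := exists_executes_loop (r := a) (p := seq (inc b) (inc t)) (s := s) (i := s a)
    (fun i u => u a = i ∧ u b + i = s b + s a ∧ u t + i = s t + s a ∧
      ∀ x, x ≠ a → x ≠ b → x ≠ t → u x = s x)
    (by tauto)
    (fun i u hu => ⟨_, (executes_inc _ _).seq (executes_inc _ _), by grind [update_apply]⟩)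
    (by tauto)
  have hfinal : u = update (update (update s b (s b + s a)) t (s t + s a)) a 0 := by
    ext x
    grind [update_apply]
  exact hfinal ▸ h

/-- Copies the counter `a` to the counter `b` and sets the auxiliary counter `t` to zero. -/
def copy (a b t : ℕ) : LoopProgram :=
  seq (clear b) (seq (clear t) (seq (moveBoth a b t) (move t a)))

theorem executes_copy (hab : a ≠ b) (hat : a ≠ t) (hbt : b ≠ t) (s : ℕ → ℕ) :
    (copy a b t).Executes s (update (update s b (s a)) t 0) := by
  have h := (executes_clear b s).seq ((executes_clear t _).seq
    ((executes_moveBoth hab hat hbt _).seq (executes_move hat.symm _)))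
  refine cast (congrArg _ (funext fun x => ?_)) h
  grind [update_apply]

/-- The program computes `f` from the counters `args` into the counter `out` and preserves all other
counters below `m`. -/
def Computes {n : ℕ} (p : LoopProgram) (m : ℕ) (args : Fin n → ℕ) (out : ℕ)
    (f : List.Vector ℕ n → ℕ) : Prop :=
  ∀ s, ∃ s', p.Executes s s' ∧ s' out = f (List.Vector.ofFn fun i => s (args i)) ∧
    ∀ x, x < m → x ≠ out → s' x = s x

/-- For all choices of the counters some program computes `f`. -/
def LoopComputable {n : ℕ} (f : List.Vector ℕ n → ℕ) : Prop :=
  ∀ (m : ℕ) (args : Fin n → ℕ) (out : ℕ), (∀ i, args i < m) → out < m → (∀ i, args i ≠ out) →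
    ∃ p : LoopProgram, p.Computes m args out f

theorem loopComputable_zero : LoopComputable (n := 0) fun _ => 0 := fun _ _ out _ _ _ =>
  ⟨clear out, fun s => ⟨_, executes_clear out s, by simp, fun _ _ hx => by simp [hx]⟩⟩

theorem loopComputable_succ : LoopComputable (n := 1) fun v => v.head.succ := by
  intro m args out hargs hout hne
  refine ⟨seq (copy (args 0) out m) (inc out), fun s =>
    ⟨_, (executes_copy (hne 0) (hargs 0).ne hout.ne s).seq (executes_inc _ _), ?_, ?_⟩⟩
  · simp [hout.ne]
  · grind [update_apply]

theorem loopComputable_get {n : ℕ} (i : Fin n) : LoopComputable fun v => v.get i := by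
  intro m args out hargs hout hne
  refine ⟨copy (args i) out m, fun s =>
    ⟨_, executes_copy (hne i) (hargs i).ne hout.ne s, ?_, ?_⟩⟩
  · simp [hout.ne]
  · grind [update_apply]

theorem exists_executes_tuple {k n m : ℕ} {g : Fin n → List.Vector ℕ k → ℕ}
    (hg : ∀ i, LoopComputable (g i)) {args : Fin k → ℕ} (hargs : ∀ i, args i < m) :
    ∃ p : LoopProgram, ∀ s, ∃ s', p.Executes s s' ∧
      (∀ i : Fin n, s' (m + i) = g i (List.Vector.ofFn fun j => s (args j))) ∧
      ∀ x, x < m → s' x = s x := by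
  induction n with
  | zero => exact ⟨skip, fun s => ⟨s, executes_skip s, fun i => i.elim0, fun _ _ => rfl⟩⟩
  | succ n ih =>
    obtain ⟨p, hp⟩ := ih fun i => hg i.castSucc
    obtain ⟨q, hq⟩ := hg (Fin.last n) (m + n + 1) args (m + n)
      (fun i => by have := hargs i; omega) (by omega) (fun i => by have := hargs i; omega)
    refine ⟨seq p q, fun s => ?_⟩
    obtain ⟨s₁, hexec₁, htuple, hkeep₁⟩ := hp s
    obtain ⟨s₂, hexec₂, hlast, hkeep₂⟩ := hq s₁
    refine ⟨s₂, hexec₁.seq hexec₂, fun i => ?_, fun x hx => ?_⟩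
    · induction i using Fin.lastCases with
      | last => simpa only [hkeep₁ _ (hargs _), Fin.val_last] using hlast
      | cast i =>
        rw [Fin.val_castSucc, hkeep₂ _ (by omega) (by omega)]
        exact htuple i
    · rw [hkeep₂ x (by omega) (by omega), hkeep₁ x hx]

theorem LoopComputable.comp {k n : ℕ} {f : List.Vector ℕ n → ℕ} {g : Fin n → List.Vector ℕ k → ℕ}
    (hf : LoopComputable f) (hg : ∀ i, LoopComputable (g i)) :
    LoopComputable fun v => f (List.Vector.ofFn fun i => g i v) := by
  intro m args out hargs hout _
  obtain ⟨p, hp⟩ := exists_executes_tuple hg hargs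
  obtain ⟨q, hq⟩ := hf (m + n) (fun i => m + i) out (fun i => by have := i.2; omega)
    (by omega) (fun i => by omega)
  refine ⟨seq p q, fun s => ?_⟩
  obtain ⟨s₁, hexec₁, htuple, hkeep₁⟩ := hp s
  obtain ⟨s₂, hexec₂, hvalue, hkeep₂⟩ := hq s₁
  refine ⟨s₂, hexec₁.seq hexec₂, by simpa only [htuple] using hvalue, fun x hx hxout => ?_⟩
  rw [hkeep₂ x (by omega) hxout, hkeep₁ x hx]

/-- Primitive recursion computes its values in `out`, with the number of remaining iterations in
`m` and that of completed iterations in `m + 1`. -/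
def primrecLoop (m out : ℕ) (q : LoopProgram) : LoopProgram :=
  loop m (seq q (seq (copy (m + 2) out (m + 3)) (inc (m + 1))))

theorem exists_executes_primrecLoop {n m out : ℕ} {args : Fin n → ℕ} {q : LoopProgram}
    {g : List.Vector ℕ (n + 2) → ℕ} (hargs : ∀ i, args i < m) (hout : out < m)
    (hne : ∀ i, args i ≠ out)
    (hq : q.Computes (m + 3) (Fin.cons (m + 1) (Fin.cons out args)) (m + 2) g) (hs : s (m + 1) = 0)
    {value : ℕ → ℕ} (hzero : value 0 = s out)
    (hsucc : ∀ y, value (y + 1) = g (y ::ᵥ value y ::ᵥ List.Vector.ofFn fun i => s (args i))) :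
    ∃ s', (primrecLoop m out q).Executes s s' ∧ s' out = value (s m) ∧
      ∀ x, x < m → x ≠ out → s' x = s x := by
  let Invariant (i : ℕ) (u : ℕ → ℕ) : Prop := u m = i ∧ u (m + 1) + i = s m ∧
    u out = value (u (m + 1)) ∧ ∀ x, x < m → x ≠ out → u x = s x
  have hbody (i : ℕ) (u : ℕ → ℕ) (hu : Invariant (i + 1) u) : ∃ u',
      (seq q (seq (copy (m + 2) out (m + 3)) (inc (m + 1)))).Executes (update u m i) u' ∧
        Invariant i u' := by
    obtain ⟨-, hindex, hvalue, hkeep⟩ := hu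
    obtain ⟨u', hexec, hu', hkeep'⟩ := hq (update u m i)
    refine ⟨_, hexec.seq ((executes_copy (by omega) (by omega) (by omega) u').seq
      (executes_inc _ _)), ?_⟩
    have htail (j : Fin n) : update u m i (args j) = s (args j) := by
      rw [update_of_ne (hargs j).ne, hkeep _ (hargs j) (hne j)]
    have hnext : u' (m + 2) = value (u (m + 1) + 1) := by
      rw [hu', hsucc]
      change g (update u m i (m + 1) ::ᵥ update u m i out ::ᵥ
        List.Vector.ofFn fun j => update u m i (args j)) = _
      simp only [htail, update_of_ne hout.ne, update_of_ne m.succ_ne_self, hvalue]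
    grind [update_apply]
  obtain ⟨s', hexec, -, hindex, hs'⟩ := exists_executes_loop Invariant (fun _ _ hu => hu.1) hbody
    (show Invariant (s m) s by simp [Invariant, hs, hzero])
  rw [add_zero] at hindex
  exact ⟨s', hexec, hindex ▸ hs'⟩

theorem LoopComputable.prec {n : ℕ} {f : List.Vector ℕ n → ℕ} {g : List.Vector ℕ (n + 2) → ℕ}
    (hf : LoopComputable f) (hg : LoopComputable g) :
    LoopComputable fun v : List.Vector ℕ (n + 1) =>
      v.head.rec (f v.tail) fun y IH => g (y ::ᵥ IH ::ᵥ v.tail) := by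
  intro m args out hargs hout hne
  obtain ⟨p, hp⟩ := hf (m + 2) (fun i => args i.succ) out
    (fun i => by have := hargs i.succ; omega) (by omega) (fun i => hne i.succ)
  obtain ⟨q, hq⟩ := hg (m + 3) (Fin.cons (m + 1) (Fin.cons out fun i => args i.succ)) (m + 2)
    (Fin.cases (by simp) (Fin.cases (by simp; omega) fun i => by
      have := hargs i.succ; simp; omega))
    (by omega)
    (Fin.cases (by simp) (Fin.cases (by simp; omega) fun i => by
      have := hargs i.succ; simp; omega))
  refine ⟨seq (copy (args 0) m (m + 1)) (seq p (primrecLoop m out q)), fun s => ?_⟩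
  obtain ⟨s₁, hexec₁, hvalue₁, hkeep₁⟩ := hp (update (update s m (s (args 0))) (m + 1) 0)
  have hargs₀ (i : Fin n) :
      update (update s m (s (args 0))) (m + 1) 0 (args i.succ) = s (args i.succ) := by
    grind [update_apply]
  have hargs₁ (i : Fin n) : s₁ (args i.succ) = s (args i.succ) := by grind [update_apply]
  have hcounter : s₁ m = s (args 0) := by grind [update_apply]
  let tail := List.Vector.ofFn fun i : Fin n => s (args i.succ)
  obtain ⟨s₂, hexec₂, hvalue₂, hkeep₂⟩ := exists_executes_primrecLoop (s := s₁)
    (value := fun y => y.rec (f tail) fun y IH => g (y ::ᵥ IH ::ᵥ tail))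
    (fun i => hargs i.succ) hout (fun i => hne i.succ) hq (by grind [update_apply])
    (by simp [hvalue₁, hargs₀, tail]) (by simp only [hargs₁, tail, implies_true])
  have hargs_zero := hargs 0
  refine ⟨s₂, (executes_copy (by omega) (by omega) (by omega) s).seq (hexec₁.seq hexec₂), ?_, ?_⟩
  · rw [hvalue₂, hcounter]
    simp [tail, List.Vector.tail_ofFn]
  · grind [update_apply]

theorem loopComputable_of_primrec {n : ℕ} {f : List.Vector ℕ n → ℕ} (hf : Nat.Primrec' f) :
    LoopComputable f := by
  induction hf with
  | zero => exact loopComputable_zero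
  | succ => exact loopComputable_succ
  | get i => exact loopComputable_get i
  | comp g _ _ hf hg => exact hf.comp hg
  | prec _ _ hf hg => exact hf.prec hg

theorem exists_halts_iff_exists_eq_zero {g : ℕ → ℕ → ℕ} (hg : Primrec₂ g) :
    ∃ p : LoopProgram, ∀ n, Halts ([p], Pi.single 0 n) ↔ ∃ k, g n k = 0 := by
  obtain ⟨q, hq⟩ := loopComputable_of_primrec (Nat.Primrec'.prim_iff₂.2 hg) 3
    (fun i : Fin 2 => i) 2 (fun i => by omega) (by omega) (fun i => by omega)
  let search := loop 2 (seq q (inc 1))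
  have halts_search_iff (n : ℕ) :
      Halts ([search], update (Pi.single 0 n) 2 1) ↔ ∃ k, g n k = 0 := by
    let flag (k : ℕ) : ℕ := k.casesOn 1 (g n)
    have hflag : (∃ k, flag k = 0) ↔ ∃ k, g n k = 0 := by
      rw [← Nat.or_exists_add_one]
      simp [flag]
    rw [← hflag]
    refine halts_loop_iff_exists_eq_zero (fun k s => s 0 = n ∧ s 1 = k ∧ s 2 = flag k) flag
      (by tauto) (fun k s hs => ?_) (by simp [flag])
    obtain ⟨s', hexec, hvalue, hkeep⟩ := hq (update s 2 (s 2 - 1))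
    have hvalue' : s' 2 = g (s 0) (s 1) := hvalue
    exact ⟨_, hexec.seq (executes_inc 1 s'), by grind [update_apply]⟩
  refine ⟨seq (inc 2) search, fun n => ?_⟩
  have hrun : Relation.TransGen Next ([search], update (Pi.single 0 n) 2 1)
      ([seq (inc 2) search], Pi.single 0 n) := (executes_inc 2 _ [search]).tail rfl
  rw [← halts_search_iff]
  exact ⟨fun h => Acc.inv_of_transGen h hrun, Halts.of_transGen hrun⟩

end Compilation

open Nat.Partrec in
theorem exists_halts_encode_iff_eval_dom : ∃ p : LoopProgram, ∀ c : Code,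
    Halts ([p], Pi.single 0 (Encodable.encode c)) ↔ (c.eval 0).Dom := by
  let g (n k : ℕ) : ℕ := (Code.evaln k (Denumerable.ofNat Code n) 0).casesOn 1 fun _ => 0
  have hg : Primrec₂ g := by
    have hevaln : Primrec fun x : ℕ × ℕ => Code.evaln x.2 (Denumerable.ofNat Code x.1) 0 :=
      Code.primrec_evaln.comp (Primrec.pair (Primrec.pair Primrec.snd
        ((Primrec.ofNat Code).comp Primrec.fst)) (Primrec.const 0))
    exact Primrec.option_casesOn hevaln (Primrec.const 1) (Primrec.const 0).to₂
  obtain ⟨p, hp⟩ := exists_halts_iff_exists_eq_zero hg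
  refine ⟨p, fun c => ?_⟩
  have hzero (k : ℕ) : g (Encodable.encode c) k = 0 ↔ ∃ x, x ∈ Code.evaln k c 0 := by
    simp only [g, Denumerable.ofNat_encode]
    cases Code.evaln k c 0 <;> simp
  simp only [hp, hzero, Part.dom_iff_mem, Code.evaln_complete]
  exact exists_comm

theorem primrec_flatMap_inputWord {α : Type*} [Primcodable α] (f : Letter → List α) :
    Primrec fun n => (inputWord n).flatMap f := by
  have hflatMap (n : ℕ) :
      (inputWord n).flatMap f = f .start ++ (List.range n).flatMap fun _ => f .input := by
    rw [inputWord, List.flatMap_cons, List.flatMap_replicate, List.flatMap_def, List.map_const',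
      List.length_range]
  simp only [hflatMap]
  exact Primrec.list_append.comp (.const _)
    (Primrec.list_flatMap Primrec.list_range (Primrec₂.const _))

end LoopProgram

end BraidGame

open BraidGame LoopProgram Nat.Partrec in
theorem braid_game_B3_undecidable_general :
    ∃ A D : List BraidWord3, ¬ ComputablePred fun c : BraidWord3 =>
      braid3 c ≠ 1 ∧ BG3AttackerWins (A.map braid3) (D.map braid3) (braid3 c) := by
  obtain ⟨p, hp⟩ := exists_halts_encode_iff_eval_dom
  obtain ⟨A, D, letterWord, buildWord, hgame⟩ := p.guardedSystem.exists_braid_game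
  refine ⟨A, D, fun hcomp => ComputablePred.halting_problem 0 ?_⟩
  let start (c : Code) : BraidWord3 :=
    (inputWord (Encodable.encode c)).flatMap letterWord ++ buildWord
  have hstart : Primrec start :=
    Primrec.list_append.comp ((primrec_flatMap_inputWord letterWord).comp Primrec.encode) (.const _)
  refine ComputablePred.computable_of_manyOneReducible ⟨start, hstart.to_comp, fun c => ?_⟩ hcomp
  obtain ⟨hne, hwins⟩ := hgame (inputWord (Encodable.encode c)) (List.cons_ne_nil _ _)
    fun _ => mem_letters_of_mem_inputWord p
  calc (c.eval 0).Dom ↔ Halts ([p], Pi.single 0 (Encodable.encode c)) := (hp c).symm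
    _ ↔ Acc p.guardedSystem.Step (inputWord (Encodable.encode c)) :=
      (acc_inputWord_iff_halts p _).symm
    _ ↔ BG3AttackerWins (A.map braid3) (D.map braid3) (braid3 (start c)) := hwins.symm
    _ ↔ _ := (and_iff_right hne).symm

/-- It is undecidable whether Attacker has a winning strategy in the Braid Game on `B₃`
starting from a non-trivial braid. -/
theorem braid_game_B3_undecidable :
    ¬ ComputablePred (fun inst : BG3Instance =>
      braid3 inst.2.2 ≠ 1 ∧
      BG3AttackerWins (inst.1.map braid3) (inst.2.1.map braid3) (braid3 inst.2.2)) := by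
  obtain ⟨A, D, hAD⟩ := braid_game_B3_undecidable_general
  exact fun hcomp => hAD <| ComputablePred.computable_of_manyOneReducible
    ⟨fun c => (A, D, c), (Computable.const A).pair ((Computable.const D).pair Computable.id),
      fun _ => Iff.rfl⟩ hcomp
end

section
/- It is undecidable whether Attacker has a winning strategy in the Braid Game on the braid group B₅ starting from the trivial braid: the predicate on encoded instances (Attacker's finite list of braid words a₁, …, a_r and Defender's finite list of braid words d₁, …, d_s, all braid words being finite words over σ₁^{±1}, σ₂^{±1}, σ₃^{±1}, σ₄^{±1}, the initial braid being fixed as the identity of B₅) asserting that Attacker has a winning strategy is not a computable predicate. -/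
open FreeGroup in
/-- The Artin relators of the 5-strand braid group: `σ_i σ_j = σ_j σ_i` for `|i − j| ≥ 2`
and `σ_i σ_{i+1} σ_i = σ_{i+1} σ_i σ_{i+1}` for `1 ≤ i ≤ 3`. -/
def braidRels5 : Set (FreeGroup (Fin 4)) :=
  {of 0 * of 2 * (of 2 * of 0)⁻¹,
   of 0 * of 3 * (of 3 * of 0)⁻¹,
   of 1 * of 3 * (of 3 * of 1)⁻¹,
   of 0 * of 1 * of 0 * (of 1 * of 0 * of 1)⁻¹,
   of 1 * of 2 * of 1 * (of 2 * of 1 * of 2)⁻¹,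
   of 2 * of 3 * of 2 * (of 3 * of 2 * of 3)⁻¹}

/-- The 5-strand braid group `B₅`, presented with generators `σ₁, σ₂, σ₃, σ₄` and the
Artin relations. -/
abbrev B5 : Type := PresentedGroup braidRels5

/-- A braid word over `σ₁^{±1}, …, σ₄^{±1}`: each letter is a generator index together with
a sign (`true` for the generator, `false` for its inverse). -/
abbrev BraidWord5 : Type := List (Fin 4 × Bool)

/-- The element of `B₅` represented by a braid word. -/
def braid5 (w : BraidWord5) : B5 :=
  (w.map fun p =>
    if p.2 then (PresentedGroup.of (rels := braidRels5) p.1)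
    else (PresentedGroup.of (rels := braidRels5) p.1)⁻¹).prod

/-- An encoded instance of the Braid Game on `B₅` starting from the trivial braid:
Attacker's finite list of braid words and Defender's finite list of braid words. -/
abbrev BG5Instance : Type := List BraidWord5 × List BraidWord5

/-- The configuration (a braid in `B₅`) after `k` rounds of the Braid Game, starting from
`c0`, when Defender plays the sequence of braids `δ` and Attacker follows the strategy `st`
(a function of the finite history of Defender's choices so far); moves act by right
composition, Defender first. -/
def bg5Pos (c0 : B5) (δ : ℕ → B5) (st : List B5 → B5) : ℕ → B5
  | 0 => c0
  | k + 1 => bg5Pos c0 δ st k * δ k * st ((List.range (k + 1)).map δ)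

/-- Attacker has a winning strategy in the Braid Game on `B₅` with Attacker's braid list
`A`, Defender's braid list `D` and initial braid `c0`: there is a strategy, choosing a
braid from `A` for every finite history of Defender's choices, such that every infinite
play consistent with it reaches the trivial braid after some Attacker move. -/
def BG5AttackerWins (A D : List B5) (c0 : B5) : Prop :=
  ∃ st : List B5 → B5,
    (∀ hist, (∀ x ∈ hist, x ∈ D) → st hist ∈ A) ∧
    ∀ δ : ℕ → B5, (∀ i, δ i ∈ D) → ∃ n, bg5Pos c0 δ st (n + 1) = 1

/-!
`B₅` contains `F × ℤ` with `F` a free group of infinite rank: `F` lies in the subgroup generated by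
`σ₁` and `σ₂`, which commute with `σ₄`, and an injective homomorphism carries the game along. In
`F × ℤ`, Defender's letters are meant to spell an endless history of edges as a growing positive
word. Attacker can challenge the last letter; if he does so, he consumes the history letter by
letter while he adds up integer weights in the counter, and he can win if and only if the resulting
total is nonnegative. Replies that deviate from this leave behind a letter that is never cancelled.

The edges are the transitions of a counter machine. State and registers are sums over the history,
so with a few linear checks Attacker can refute precisely the histories that are not runs, and
Defender survives if and only if the machine runs forever. A fixed machine has a halting problem
that is undecidable in the initial value `n` of a register, and the moves of the corresponding game
are computable in `n`, for they have the form `a * t ^ n`.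
-/

namespace BraidGame

section GroupGame

variable {G H : Type*} [Monoid G] [Monoid H] {A D : Set G} {g : G}

/-- Attacker's winning region for the Braid Game played in a monoid `G` with move sets `A` for
Attacker and `D` for Defender, Defender moving first. Being an inductive predicate, it asks that
every play following Attacker's responses reaches `1` after finitely many rounds; reaching `1`
before the first round does not count. -/
inductive Forces (A D : Set G) : G → Prop
  | intro (g : G) (respond : G → G) (mem : ∀ x ∈ D, respond x ∈ A)
      (next : ∀ x ∈ D, g * x * respond x ≠ 1 → Forces A D (g * x * respond x)) : Forces A D g

theorem forces_iff :
    Forces A D g ↔ ∀ x ∈ D, ∃ y ∈ A, g * x * y = 1 ∨ Forces A D (g * x * y) := by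
  refine ⟨fun h x hx => ?_, fun h => ?_⟩
  · obtain ⟨_, respond, mem, next⟩ := h
    exact ⟨respond x, mem x hx, or_iff_not_imp_left.2 (next x hx)⟩
  · choose! respond mem next using h
    exact .intro g respond mem fun x hx => (next x hx).resolve_left

theorem not_forces_iff :
    ¬ Forces A D g ↔ ∃ x ∈ D, ∀ y ∈ A, g * x * y ≠ 1 ∧ ¬ Forces A D (g * x * y) := by
  rw [forces_iff]
  push Not
  rfl

theorem Forces.not_of_invariant {P : G → Prop} (hg : P g)
    (step : ∀ g, P g → ∃ x ∈ D, ∀ y ∈ A, g * x * y ≠ 1 ∧ P (g * x * y)) : ¬ Forces A D g := by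
  intro h
  induction h with
  | intro g respond mem _ ih =>
    obtain ⟨x, hx, hy⟩ := step g hg
    obtain ⟨hne, hP⟩ := hy _ (mem x hx)
    exact ih x hx hne hP

theorem forces_image_iff {φ : G →* H} (hφ : Function.Injective φ) :
    Forces (φ '' A) (φ '' D) (φ g) ↔ Forces A D g := by
  constructor
  · generalize hk : φ g = k
    intro h
    induction h generalizing g with
    | intro k respond mem _ ih =>
      subst hk
      refine forces_iff.2 fun x hx => ?_
      obtain ⟨y, hy, hxy⟩ := mem (φ x) ⟨x, hx, rfl⟩
      refine ⟨y, hy, or_iff_not_imp_left.2 fun hne => ?_⟩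
      have himage : φ (g * x * y) = φ g * φ x * respond (φ x) := by simp only [map_mul, hxy]
      exact ih (φ x) ⟨x, hx, rfl⟩ (himage ▸ (map_ne_one_iff φ hφ).2 hne) himage
  · intro h
    induction h with
    | intro g respond mem _ ih =>
      refine forces_iff.2 ?_
      rintro _ ⟨x, hx, rfl⟩
      refine ⟨φ (respond x), ⟨_, mem x hx, rfl⟩, ?_⟩
      rw [← map_mul, ← map_mul, map_eq_one_iff φ hφ]
      exact or_iff_not_imp_left.2 (ih x hx)

end GroupGame

section Strategies

variable {A D : List B5} {c : B5} {δ : ℕ → B5}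

theorem bg5Pos_congr {st st' : List B5 → B5} (h : ∀ x hist, st (x :: hist) = st' (x :: hist))
    (n : ℕ) : bg5Pos c δ st n = bg5Pos c δ st' n := by
  induction n with
  | zero => rfl
  | succ n ih => rw [bg5Pos, bg5Pos, ih, List.range_succ_eq_map, List.map_cons, h]

theorem bg5Pos_succ' (st : List B5 → B5) (n : ℕ) :
    bg5Pos c δ st (n + 1) =
      bg5Pos (c * δ 0 * st [δ 0]) (fun i => δ (i + 1)) (fun hist => st (δ 0 :: hist)) n := by
  induction n with
  | zero => rfl
  | succ n ih =>
    rw [bg5Pos, ih, bg5Pos, List.range_succ_eq_map, List.map_cons, List.map_map]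
    rfl

theorem exists_strategy (hA : A ≠ []) (h : Forces {x | x ∈ A} {x | x ∈ D} c) :
    ∃ st : List B5 → B5, (∀ hist, (∀ x ∈ hist, x ∈ D) → st hist ∈ A) ∧
      ∀ δ : ℕ → B5, (∀ i, δ i ∈ D) → ∃ n, bg5Pos c δ st (n + 1) = 1 := by
  classical
  obtain ⟨a, ha⟩ := List.exists_mem_of_ne_nil A hA
  induction h with
  | intro c respond mem _ ih =>
    choose! later later_mem later_wins using ih
    let tail (x : B5) : List B5 → B5 :=
      if x ∈ D ∧ c * x * respond x ≠ 1 then later x else fun _ => a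
    let st : List B5 → B5
      | [] => a
      | [x] => respond x
      | x :: y :: hist => tail x (y :: hist)
    refine ⟨st, fun hist hhist => ?_, fun δ hδ => ?_⟩
    · match hist with
      | [] => exact ha
      | [x] => exact mem x (hhist x List.mem_cons_self)
      | x :: y :: hist =>
        simp only [st, tail]
        split_ifs with hx
        · exact later_mem x hx.1 hx.2 _ fun z hz => hhist z (List.mem_cons_of_mem _ hz)
        · exact ha
    · by_cases hwon : c * δ 0 * respond (δ 0) = 1
      · exact ⟨0, hwon⟩
      · obtain ⟨n, hn⟩ := later_wins (δ 0) (hδ 0) hwon (fun i => δ (i + 1)) fun i => hδ (i + 1)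
        refine ⟨n + 1, ?_⟩
        rw [bg5Pos_succ', bg5Pos_congr (st' := later (δ 0)), hn]
        intro y hist
        simp only [st, tail, if_pos (And.intro (hδ 0) hwon)]

theorem exists_play (f : B5 → B5) (c : B5) (st : List B5 → B5) :
    ∃ δ : ℕ → B5, ∀ n, δ n = f (bg5Pos c δ st n) := by
  let play (n : ℕ) : List B5 × B5 := n.rec ([], c) fun _ s =>
    (s.1 ++ [f s.2], s.2 * f s.2 * st (s.1 ++ [f s.2]))
  have play_spec (n : ℕ) : (play n).1 = (List.range n).map (fun i => f (play i).2) ∧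
      (play n).2 = bg5Pos c (fun i => f (play i).2) st n := by
    induction n with
    | zero => exact ⟨rfl, rfl⟩
    | succ n ih =>
      have hhist : (List.range (n + 1)).map (fun i => f (play i).2) =
          (play n).1 ++ [f (play n).2] := by
        rw [List.range_succ, List.map_append, List.map_singleton, ih.1]
      refine ⟨hhist.symm, ?_⟩
      rw [bg5Pos, hhist, ← ih.2]
  exact ⟨fun n => f (play n).2, fun n => congrArg f (play_spec n).2⟩

theorem forces_of_bg5AttackerWins (h : BG5AttackerWins A D c) :
    Forces {x | x ∈ A} {x | x ∈ D} c := by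
  obtain ⟨st, st_mem, st_wins⟩ := h
  by_contra hc
  have defense (g : B5) (hg : ¬ Forces {x | x ∈ A} {x | x ∈ D} g) := not_forces_iff.1 hg
  choose! f f_mem f_spec using defense
  obtain ⟨δ, hδ⟩ := exists_play f c st
  have δ_mem {n : ℕ} (hn : ¬ Forces {x | x ∈ A} {x | x ∈ D} (bg5Pos c δ st n)) : δ n ∈ D :=
    hδ n ▸ f_mem _ hn
  have evades (n : ℕ) : (∀ x ∈ (List.range n).map δ, x ∈ D) ∧
      ¬ Forces {x | x ∈ A} {x | x ∈ D} (bg5Pos c δ st n) := by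
    induction n with
    | zero => exact ⟨by simp, hc⟩
    | succ n ih =>
      have hhist : ∀ x ∈ (List.range (n + 1)).map δ, x ∈ D := by
        rw [List.range_succ, List.map_append, List.map_singleton, List.forall_mem_append]
        exact ⟨ih.1, by simpa using δ_mem ih.2⟩
      refine ⟨hhist, ?_⟩
      rw [bg5Pos, hδ n]
      exact (f_spec _ ih.2 _ (st_mem _ hhist)).2
  obtain ⟨n, hn⟩ := st_wins δ fun i => δ_mem (evades i).2
  refine (f_spec _ (evades n).2 _ (st_mem _ (evades (n + 1)).1)).1 ?_
  rw [← hδ n]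
  exact hn

theorem bg5AttackerWins_iff_forces (hA : A ≠ []) :
    BG5AttackerWins A D c ↔ Forces {x | x ∈ A} {x | x ∈ D} c :=
  ⟨forces_of_bg5AttackerWins, exists_strategy hA⟩

end Strategies

/-! ### A copy of `FreeGroup ℕ × ℤ` inside `B₅` -/

section Embedding

/-- The plane shear `(x, y) ↦ (x - y, y)`, the image of `σ₁` under the reduced Burau
representation of `B₃` at `t = -1`. -/
def shearFst : (ℤ × ℤ) ≃ₗ[ℤ] (ℤ × ℤ) where
  toFun v := (v.1 - v.2, v.2)
  invFun v := (v.1 + v.2, v.2)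
  left_inv v := by simp
  right_inv v := by simp
  map_add' v w := by ext <;> simp; ring
  map_smul' c v := by ext <;> simp; ring

/-- The plane shear `(x, y) ↦ (x, y + x)`, the image of `σ₂` under the reduced Burau
representation of `B₃` at `t = -1`. -/
def shearSnd : (ℤ × ℤ) ≃ₗ[ℤ] (ℤ × ℤ) where
  toFun v := (v.1, v.2 + v.1)
  invFun v := (v.1, v.2 - v.1)
  left_inv v := by simp
  right_inv v := by simp
  map_add' v w := by ext <;> simp; ring
  map_smul' c v := by ext <;> simp; ring

/-- The words `x⁻⁴ⁱ y⁻⁴ x⁴ⁱ`, which generate a free group when `x` and `y` are the two shears. -/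
def conjFourthPow {G : Type*} [Group G] (x y : G) (i : ℕ) : G :=
  (x ^ (4 * i))⁻¹ * (y ^ 4)⁻¹ * x ^ (4 * i)

theorem shearFst_pow_smul (n : ℕ) (v : ℤ × ℤ) :
    (shearFst ^ n) • v = (v.1 - n * v.2, v.2) := by
  induction n with
  | zero => simp
  | succ n ih =>
    rw [pow_succ', mul_smul, ih]
    ext
    · change v.1 - n * v.2 - v.2 = _
      push_cast
      ring
    · rfl

theorem shearFst_pow_inv_smul (n : ℕ) (v : ℤ × ℤ) :
    (shearFst ^ n)⁻¹ • v = (v.1 + n * v.2, v.2) := by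
  rw [inv_smul_eq_iff, shearFst_pow_smul]
  simp

theorem shearSnd_pow_four_smul (v : ℤ × ℤ) : (shearSnd ^ 4) • v = (v.1, v.2 + 4 * v.1) := by
  simp only [pow_succ, pow_zero, one_mul, mul_smul]
  ext
  · rfl
  · change v.2 + v.1 + v.1 + v.1 + v.1 = _
    ring

theorem shearSnd_pow_four_inv_smul (v : ℤ × ℤ) :
    (shearSnd ^ 4)⁻¹ • v = (v.1, v.2 - 4 * v.1) := by
  rw [inv_smul_eq_iff, shearSnd_pow_four_smul]
  simp

theorem conjFourthPow_shear_smul (i : ℕ) (v : ℤ × ℤ) :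
    conjFourthPow shearFst shearSnd i • v =
      (v.1 - 4 * i * v.2 + 4 * i * (v.2 - 4 * (v.1 - 4 * i * v.2)),
        v.2 - 4 * (v.1 - 4 * i * v.2)) := by
  simp only [conjFourthPow, mul_smul, shearFst_pow_smul, shearFst_pow_inv_smul,
    shearSnd_pow_four_inv_smul, Nat.cast_mul, Nat.cast_ofNat]

theorem conjFourthPow_shear_inv_smul (i : ℕ) (v : ℤ × ℤ) :
    (conjFourthPow shearFst shearSnd i)⁻¹ • v =
      (v.1 - 4 * i * v.2 + 4 * i * (v.2 + 4 * (v.1 - 4 * i * v.2)),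
        v.2 + 4 * (v.1 - 4 * i * v.2)) := by
  simp only [conjFourthPow, mul_inv_rev, inv_inv, mul_smul, shearFst_pow_smul,
    shearFst_pow_inv_smul, shearSnd_pow_four_smul, Nat.cast_mul, Nat.cast_ofNat]

/-- The nonzero vectors of the plane, on which the shears play ping-pong. -/
def nonzeroVectors : SubMulAction (((ℤ × ℤ) ≃ₗ[ℤ] (ℤ × ℤ))) (ℤ × ℤ) where
  carrier := {v | v ≠ 0}
  smul_mem' g _ hv := (smul_ne_zero_iff_ne g).2 hv

/-- The nonzero vectors whose inverse slope `x / y` is within distance `1` of `4 * i`. -/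
def cone (i : ℕ) : Set nonzeroVectors := {v | |v.1.1 - 4 * i * v.1.2| < |v.1.2|}

/-- The half of `cone i` where `x / y ≤ 4 * i`. -/
def leftCone (i : ℕ) : Set nonzeroVectors :=
  {v | v ∈ cone i ∧ (v.1.1 - 4 * i * v.1.2) * v.1.2 ≤ 0}

/-- The half of `cone i` where `4 * i < x / y`. -/
def rightCone (i : ℕ) : Set nonzeroVectors :=
  {v | v ∈ cone i ∧ 0 < (v.1.1 - 4 * i * v.1.2) * v.1.2}

theorem disjoint_cone {i j : ℕ} (hij : i ≠ j) : Disjoint (cone i) (cone j) := by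
  refine Set.disjoint_left.2 fun v hi hj => ?_
  have hi : |v.1.1 - 4 * i * v.1.2| < |v.1.2| := hi
  have hj : |v.1.1 - 4 * j * v.1.2| < |v.1.2| := hj
  have hne : 1 ≤ |(i : ℤ) - j| := Int.one_le_abs (sub_ne_zero.2 (Nat.cast_injective.ne hij))
  have hdiff : 4 * (|(i : ℤ) - j| * |v.1.2|) ≤
      |v.1.1 - 4 * j * v.1.2| + |v.1.1 - 4 * i * v.1.2| :=
    calc 4 * (|(i : ℤ) - j| * |v.1.2|)
        = |(v.1.1 - 4 * j * v.1.2) - (v.1.1 - 4 * i * v.1.2)| := by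
          rw [← abs_mul, ← Nat.abs_ofNat 4, ← abs_mul]
          ring_nf
      _ ≤ _ := abs_sub _ _
  linarith [mul_le_mul_of_nonneg_right hne (abs_nonneg v.1.2), abs_nonneg v.1.2]

theorem abs_lt_abs_sub_four_mul {u q : ℤ} (hne : u ≠ 0 ∨ q ≠ 0) (h : ¬ (|u| < |q| ∧ 0 < u * q)) :
    |u| < |q - 4 * u| ∧ u * (q - 4 * u) ≤ 0 := by
  have hpos : 0 < u ^ 2 + q ^ 2 := by
    rcases hne with hu | hq <;> positivity
  rw [← sq_lt_sq] at h ⊢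
  rcases not_and_or.1 h with hle | hle <;> constructor <;>
    nlinarith [sq_nonneg u, sq_nonneg q, sq_nonneg (u - q)]

theorem abs_lt_abs_add_four_mul {u q : ℤ} (hne : u ≠ 0 ∨ q ≠ 0) (h : ¬ (|u| < |q| ∧ u * q ≤ 0)) :
    |u| < |q + 4 * u| ∧ 0 < u * (q + 4 * u) := by
  have hpos : 0 < u ^ 2 + q ^ 2 := by
    rcases hne with hu | hq <;> positivity
  rw [← sq_lt_sq] at h ⊢
  rcases not_and_or.1 h with hle | hle <;> constructor <;>
    nlinarith [sq_nonneg u, sq_nonneg q, sq_nonneg (u + q)]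

theorem cone_coordinates_ne_zero (i : ℕ) (v : nonzeroVectors) :
    v.1.1 - 4 * i * v.1.2 ≠ 0 ∨ v.1.2 ≠ 0 := by
  rcases v with ⟨⟨p, q⟩, hv⟩
  by_contra! h
  refine hv ?_
  obtain ⟨hp, rfl⟩ : p - 4 * i * q = 0 ∧ q = 0 := h
  simpa using hp

theorem injective_lift_conjFourthPow_shear :
    Function.Injective (FreeGroup.lift (conjFourthPow shearFst shearSnd)) := by
  refine FreeGroup.injective_lift_of_ping_pong _ leftCone rightCone (fun i => ?_)
    (fun i j hij => (disjoint_cone hij).mono (fun _ h => h.1) (fun _ h => h.1))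
    (fun i j hij => (disjoint_cone hij).mono (fun _ h => h.1) (fun _ h => h.1))
    (fun i j => ?_) (fun i => ?_) (fun i => ?_)
  · exact ⟨⟨(4 * i, 1), fun h => one_ne_zero (congrArg Prod.snd h)⟩, by simp [leftCone, cone]⟩
  · rcases eq_or_ne i j with rfl | hij
    · exact Set.disjoint_left.2 fun v hl hr => hl.2.not_gt hr.2
    · exact (disjoint_cone hij).mono (fun _ h => h.1) (fun _ h => h.1)
  · rintro _ ⟨v, hv, rfl⟩
    have h := abs_lt_abs_sub_four_mul (cone_coordinates_ne_zero i v) hv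
    simpa [leftCone, cone, conjFourthPow_shear_smul, -LinearEquiv.smul_def] using h
  · rintro _ ⟨v, hv, rfl⟩
    have h := abs_lt_abs_add_four_mul (cone_coordinates_ne_zero i v) hv
    simpa [rightCone, cone, conjFourthPow_shear_inv_smul, -LinearEquiv.smul_def] using h

/-- The generator `σ_{i+1}` as a braid. -/
def artin (i : Fin 4) : B5 := PresentedGroup.of i

/-- The image of `σ_{i+1}` under the reduced Burau representation at `t = -1`. -/
def burauGenerator : Fin 4 → Equiv.Perm (ℤ × ℤ × ℤ × ℤ)
  | 0 => ⟨fun v => (v.1 - v.2.1, v.2.1, v.2.2.1, v.2.2.2),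
      fun v => (v.1 + v.2.1, v.2.1, v.2.2.1, v.2.2.2), fun v => by simp, fun v => by simp⟩
  | 1 => ⟨fun v => (v.1, v.2.1 + (v.1 - v.2.2.1), v.2.2.1, v.2.2.2),
      fun v => (v.1, v.2.1 - (v.1 - v.2.2.1), v.2.2.1, v.2.2.2),
      fun v => by simp, fun v => by simp⟩
  | 2 => ⟨fun v => (v.1, v.2.1, v.2.2.1 + (v.2.1 - v.2.2.2), v.2.2.2),
      fun v => (v.1, v.2.1, v.2.2.1 - (v.2.1 - v.2.2.2), v.2.2.2),
      fun v => by simp, fun v => by simp⟩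
  | 3 => ⟨fun v => (v.1, v.2.1, v.2.2.1, v.2.2.2 + v.2.2.1),
      fun v => (v.1, v.2.1, v.2.2.1, v.2.2.2 - v.2.2.1), fun v => by simp, fun v => by simp⟩

theorem lift_burauGenerator_eq_one :
    ∀ r ∈ braidRels5, FreeGroup.lift burauGenerator r = 1 := by
  rintro r (rfl | rfl | rfl | rfl | rfl | rfl) <;>
  · simp only [map_mul, map_inv, FreeGroup.lift_apply_of, mul_inv_eq_one]
    ext v <;> simp [burauGenerator] <;> ring

/-- The reduced Burau representation of `B₅` at `t = -1`. -/
def burau : B5 →* Equiv.Perm (ℤ × ℤ × ℤ × ℤ) :=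
  PresentedGroup.toGroup lift_burauGenerator_eq_one

theorem burau_artin (i : Fin 4) : burau (artin i) = burauGenerator i :=
  PresentedGroup.toGroup.of _

/-- The pairs of a braid and a plane automorphism such that the Burau representation of the braid
restricts to that automorphism on the plane spanned by the first two basis vectors. -/
def planeRestriction : Subgroup (B5 × ((ℤ × ℤ) ≃ₗ[ℤ] (ℤ × ℤ))) where
  carrier := {p | ∀ v : ℤ × ℤ, burau p.1 (v.1, v.2, 0, 0) = ((p.2 • v).1, (p.2 • v).2, 0, 0)}
  one_mem' v := by simp
  mul_mem' {p p'} hp hp' v := by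
    rw [Prod.fst_mul, map_mul, Equiv.Perm.mul_apply, hp', hp]
    simp
  inv_mem' {p} hp v := by
    rw [Prod.fst_inv, map_inv, Equiv.Perm.inv_eq_iff_eq, hp]
    simp

/-- The copy of the free basis element `i` in the subgroup of `B₅` generated by `σ₁` and `σ₂`. -/
def freeBraid (i : ℕ) : B5 := conjFourthPow (artin 0) (artin 1) i

theorem artin_zero_mem_planeRestriction : (artin 0, shearFst) ∈ planeRestriction := fun v => by
  rw [burau_artin]
  rfl

theorem artin_one_mem_planeRestriction : (artin 1, shearSnd) ∈ planeRestriction := fun v => by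
  rw [burau_artin]
  simp [burauGenerator, shearSnd]

theorem artin_three_mem_planeRestriction : (artin 3, 1) ∈ planeRestriction := fun v => by
  rw [burau_artin]
  simp [burauGenerator]

theorem lift_freeBraid_mem_planeRestriction (w : FreeGroup ℕ) :
    (FreeGroup.lift freeBraid w, FreeGroup.lift (conjFourthPow shearFst shearSnd) w) ∈
      planeRestriction := by
  have hgen (i : ℕ) : (freeBraid i, conjFourthPow shearFst shearSnd i) ∈ planeRestriction :=
    mul_mem (mul_mem (inv_mem (pow_mem artin_zero_mem_planeRestriction _))
      (inv_mem (pow_mem artin_one_mem_planeRestriction 4)))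
      (pow_mem artin_zero_mem_planeRestriction _)
  induction w using FreeGroup.induction_on with
  | C1 => exact one_mem _
  | of i => simpa using hgen i
  | inv_of i h => simpa using inv_mem h
  | mul w w' h h' => simpa using mul_mem h h'

theorem commute_artin_three {i : Fin 4} (hi : i = 0 ∨ i = 1) : Commute (artin i) (artin 3) := by
  refine mul_inv_eq_one.1 (PresentedGroup.one_of_mem (rels := braidRels5) ?_)
  rcases hi with rfl | rfl <;> simp [braidRels5]

theorem commute_lift_freeBraid_artin_three (w : FreeGroup ℕ) :
    Commute (FreeGroup.lift freeBraid w) (artin 3) := by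
  have h0 := commute_artin_three (.inl rfl)
  have h1 := commute_artin_three (.inr rfl)
  have hgen (i : ℕ) : Commute (freeBraid i) (artin 3) :=
    (((h0.pow_left _).inv_left).mul_left (h1.pow_left _).inv_left).mul_left (h0.pow_left _)
  induction w using FreeGroup.induction_on with
  | C1 => simp
  | of i => simpa using hgen i
  | inv_of i h => simpa using h.inv_left
  | mul w w' h h' => simpa using h.mul_left h'

/-- The exponent sum of a braid. -/
def exponentSum : B5 →* Multiplicative ℤ :=
  PresentedGroup.toGroup (f := fun _ => Multiplicative.ofAdd 1) (by
    rintro r (rfl | rfl | rfl | rfl | rfl | rfl) <;> simp)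

/-- The copy of `FreeGroup ℕ × ℤ` in `B₅`: the free factor lies in the subgroup generated by `σ₁`
and `σ₂`, and the central factor is generated by `σ₄`. -/
noncomputable def freeProdInt : FreeGroup ℕ × Multiplicative ℤ →* B5 :=
  (FreeGroup.lift freeBraid).noncommCoprod (zpowersHom B5 (artin 3)) fun w k =>
    (commute_lift_freeBraid_artin_three w).zpow_right k.toAdd

theorem freeProdInt_injective : Function.Injective freeProdInt := by
  rw [injective_iff_map_eq_one]
  rintro ⟨w, k⟩ h
  replace h : FreeGroup.lift freeBraid w * artin 3 ^ k.toAdd = 1 := h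
  have hmem : (FreeGroup.lift freeBraid w * artin 3 ^ k.toAdd,
      FreeGroup.lift (conjFourthPow shearFst shearSnd) w) ∈ planeRestriction := by
    simpa using mul_mem (lift_freeBraid_mem_planeRestriction w)
      (zpow_mem artin_three_mem_planeRestriction k.toAdd)
  have hw : w = 1 := by
    refine injective_lift_conjFourthPow_shear ?_
    rw [map_one]
    ext v : 1
    have hv := hmem v
    rw [h, map_one] at hv
    simp only [Equiv.Perm.one_apply, Prod.mk.injEq] at hv
    exact Prod.ext hv.1.symm hv.2.1.symm
  have hk : exponentSum (artin 3 ^ k.toAdd) = k := by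
    rw [map_zpow, exponentSum, artin, PresentedGroup.toGroup.of]
    exact Multiplicative.toAdd.injective (by simp)
  rw [hw, map_one, one_mul] at h
  rw [h, map_one] at hk
  rw [hw, ← hk, Prod.mk_one_one]

end Embedding

/-! ### Words over stack symbols -/

section PositiveWords

variable {α : Type*}

/-- The positive word spelled by a stack, which is listed from its top, the last letter of the
word, to its bottom, the first. -/
def positiveWord : List α → FreeGroup α
  | [] => 1
  | a :: l => positiveWord l * FreeGroup.of a

theorem toWord_mul_mk_of_cancel [DecidableEq α] {g : FreeGroup α} {t : α × Bool}
    {L : List (α × Bool)} (hg : g.toWord = L ++ [(t.1, !t.2)]) :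
    (g * FreeGroup.mk [t]).toWord = L := by
  have hL : FreeGroup.IsReduced L :=
    (hg ▸ FreeGroup.isReduced_toWord (x := g)).infix (List.prefix_append _ _).isInfix
  have hgt : g * FreeGroup.mk [t] = FreeGroup.mk L := by
    rw [← FreeGroup.mk_toWord (x := g), hg, FreeGroup.mul_mk, List.append_assoc]
    exact Quot.sound (by simpa using FreeGroup.Red.Step.not_rev (L₁ := L) (L₂ := []))
  rw [hgt, FreeGroup.toWord_mk, hL.reduce_eq]

theorem toWord_mul_mk_of_not_cancel [DecidableEq α] {g : FreeGroup α} {t : α × Bool}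
    (hg : (t.1, !t.2) ∉ g.toWord.getLast?) :
    (g * FreeGroup.mk [t]).toWord = g.toWord ++ [t] := by
  rw [FreeGroup.toWord_mul, FreeGroup.toWord_mk, FreeGroup.reduce_singleton]
  refine FreeGroup.IsReduced.reduce_eq (List.isChain_append.2
    ⟨FreeGroup.isReduced_toWord, .singleton _, fun s hs s' hs' hst => ?_⟩)
  obtain rfl : t = s' := by simpa using hs'
  by_contra hne
  exact hg (by rwa [← hst, ← Bool.eq_not_of_ne hne])

theorem toWord_positiveWord [DecidableEq α] (l : List α) :
    (positiveWord l).toWord = (l.map fun a => (a, true)).reverse := by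
  induction l with
  | nil => rfl
  | cons a l ih =>
    rw [positiveWord, FreeGroup.of, toWord_mul_mk_of_not_cancel, ih, List.map_cons,
      List.reverse_cons]
    rw [ih]
    intro h
    simpa using List.mem_of_mem_getLast? h

theorem positiveWord_eq_one_iff {l : List α} : positiveWord l = 1 ↔ l = [] := by
  classical
  rw [← FreeGroup.toWord_eq_nil_iff, toWord_positiveWord, List.reverse_eq_nil_iff,
    List.map_eq_nil_iff]

end PositiveWords

/-! ### The word game -/

/-- The letters Defender can push. `edge x` records that the history is to be extended by `x`,
`bottom` marks the beginning of the history, and `spare` is a waiting move. -/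
inductive StackSymbol (E : Type*)
  | bottom
  | spare
  | edge (x : E)
  deriving DecidableEq, Fintype, Countable

/-- The letters of the free group in which the word game is played. `mode (y, c)` marks that
Attacker is evaluating the history below it to refute check `c` on Defender's last letter `y`. -/
inductive Letter (E C : Type*)
  | symbol (y : StackSymbol E)
  | mode (q : StackSymbol E × C)
  deriving DecidableEq, Countable

/-- What Attacker can do once he has cancelled Defender's last letter `y`: `challenge c` starts
evaluating check `c` on `y`, `count q x` and `final q` consume the history edge `x`, respectively
its bottom, in mode `q`, and `decrement` and `discard` do nothing to the stack. -/
inductive Reply (E C : Type*)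
  | challenge (c : C)
  | count (q : StackSymbol E × C) (x : E)
  | final (q : StackSymbol E × C)
  | decrement
  | discard
  deriving Fintype

/-- Linear checks on the extension of a history in `List E` by an edge: `weight x c y` is the
contribution of the edge `y` of the history to the check `c` on `x`, and `offset x c` is the
contribution of the empty history. -/
structure Weighting (E C : Type*) where
  weight : E → C → E → ℤ
  offset : E → C → ℤ

/-- The positions of the word game: a group word, and a counter. -/
abbrev Config (E C : Type*) : Type _ := FreeGroup (Letter E C) × Multiplicative ℤ

namespace Weighting

variable {E C : Type*} (W : Weighting E C)

/-- The weights extended by `0` to the checks on `bottom` and `spare`, which Attacker thus wins. -/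
def modeWeight : StackSymbol E × C → E → ℤ
  | (.edge x, c), y => W.weight x c y
  | _, _ => 0

/-- The offsets extended by `0` to the checks on `bottom` and `spare`. -/
def modeOffset : StackSymbol E × C → ℤ
  | (.edge x, c) => W.offset x c
  | _ => 0

/-- The value of a check on a history, which is listed from its most recent edge. -/
def total (q : StackSymbol E × C) (u : List E) : ℤ :=
  W.modeOffset q + (u.map (W.modeWeight q)).sum

/-- The extension of the history `u` by `x` passes all checks. -/
def Passes (x : E) (u : List E) : Prop := ∀ c, W.total (.edge x, c) u < 0

/-- Defender can extend the empty history forever such that all checks are passed. -/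
def Sustainable : Prop :=
  ∃ V : Set (List E), [] ∈ V ∧ ∀ u ∈ V, ∃ x, W.Passes x u ∧ x :: u ∈ V

/-- The group word of a reply to Defender's letter `y`, after the cancellation of `y`. -/
def replyWord (y : StackSymbol E) : Reply E C → FreeGroup (Letter E C)
  | .challenge c => .of (.mode (y, c))
  | .count q x => (.of (.mode q))⁻¹ * (.of (.symbol (.edge x)))⁻¹ * .of (.mode q)
  | .final q => (.of (.mode q))⁻¹ * (.of (.symbol .bottom))⁻¹
  | .decrement => 1
  | .discard => 1

/-- The counter change of a reply to Defender's letter `y`. Discarding `bottom` costs `1`, so that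
Attacker cannot win by discarding Defender's first letter if it is `bottom`. -/
def replyWeight (y : StackSymbol E) : Reply E C → ℤ
  | .challenge _ => 0
  | .count q x => W.modeWeight q x
  | .final q => W.modeOffset q
  | .decrement => -1
  | .discard => match y with
    | .bottom => -1
    | _ => 0

/-- Attacker's moves: `none` leaves Defender's letter in place, and `some (y, r)` is the reply `r`
to Defender's letter `y`. -/
def attack : Option (StackSymbol E × Reply E C) → Config E C
  | none => 1
  | some (y, r) => ((.of (.symbol y))⁻¹ * replyWord y r, .ofAdd (W.replyWeight y r))

/-- Defender's moves. -/
def defend (y : StackSymbol E) : Config E C := (.of (.symbol y), 1)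

end Weighting

section Replies

variable {E C : Type*} (W : Weighting E C) {l : List (Letter E C)} {k : ℤ} {y : StackSymbol E}

open Letter Weighting

/-- The history `u`, listed from its most recent edge, as a stack. -/
def historyStack : List E → List (Letter E C)
  | [] => [symbol .bottom]
  | x :: u => symbol (.edge x) :: historyStack u

theorem historyStack_ne_mode_cons {u : List E} {q : StackSymbol E × C} :
    historyStack u ≠ mode q :: l := by
  cases u <;> simp [historyStack]

/-- The position with stack `l` and counter `k`. -/
def position (l : List (Letter E C)) (k : ℤ) : Config E C := (positiveWord l, .ofAdd k)

theorem position_mul_defend : position l k * defend y = position (symbol y :: l) k :=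
  Prod.ext rfl (mul_one _)

theorem position_mul_defend_mul_attack (r : Reply E C) :
    position l k * defend y * W.attack (some (y, r)) =
      (positiveWord l * replyWord y r, .ofAdd (k + W.replyWeight y r)) :=
  Prod.ext (by simp [position, defend, attack, mul_assoc]) (by simp [position, defend, attack])

theorem position_reply_pass :
    position l k * defend y * W.attack none = position (symbol y :: l) k :=
  (mul_one _).trans position_mul_defend

theorem position_reply_challenge (c : C) :
    position l k * defend y * W.attack (some (y, .challenge c)) =
      position (mode (y, c) :: l) k := by
  rw [position_mul_defend_mul_attack, replyWeight, add_zero]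
  rfl

theorem position_reply_count (q : StackSymbol E × C) (x : E) :
    position (mode q :: symbol (.edge x) :: l) k * defend y * W.attack (some (y, .count q x)) =
      position (mode q :: l) (k + W.modeWeight q x) := by
  rw [position_mul_defend_mul_attack]
  simp [position, positiveWord, replyWord, replyWeight, ← mul_assoc]

theorem position_reply_final (q : StackSymbol E × C) :
    position (mode q :: symbol .bottom :: l) k * defend y * W.attack (some (y, .final q)) =
      position l (k + W.modeOffset q) := by
  rw [position_mul_defend_mul_attack]
  simp [position, positiveWord, replyWord, replyWeight, ← mul_assoc]

theorem position_reply_decrement :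
    position l k * defend y * W.attack (some (y, .decrement)) = position l (k - 1) := by
  rw [position_mul_defend_mul_attack, replyWord, mul_one]
  rfl

theorem position_reply_discard (hy : y ≠ .bottom) :
    position l k * defend y * W.attack (some (y, .discard)) = position l k := by
  rw [position_mul_defend_mul_attack, replyWord, mul_one]
  cases y <;> simp [position, replyWeight] at hy ⊢

theorem position_reply_discard_bottom :
    position l k * defend .bottom * W.attack (some (.bottom, .discard)) = position l (k - 1) := by
  rw [position_mul_defend_mul_attack, replyWord, mul_one]
  rfl

end Replies

section AttackerWins

variable {E C : Type*} {W : Weighting E C} {g : Config E C} {u : List E} {k : ℤ}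

open Letter Weighting

/-- Attacker's winning region in the word game. -/
abbrev Weighting.AttackerForces (W : Weighting E C) : Config E C → Prop :=
  Forces (Set.range W.attack) (Set.range defend)

theorem attackerForces_iff_s11 : W.AttackerForces g ↔
    ∀ y, ∃ m, g * defend y * W.attack m = 1 ∨ W.AttackerForces (g * defend y * W.attack m) := by
  simp only [AttackerForces, forces_iff (g := g), Set.forall_mem_range, Set.exists_range_iff]

theorem not_attackerForces_iff_s11 : ¬ W.AttackerForces g ↔
    ∃ y, ∀ m, g * defend y * W.attack m ≠ 1 ∧ ¬ W.AttackerForces (g * defend y * W.attack m) := by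
  rw [attackerForces_iff_s11]
  push Not
  rfl

theorem attackerForces_empty (hk : 0 < k) : W.AttackerForces (position [] k) := by
  induction k, hk using Int.leInduction with
  | base => exact attackerForces_iff_s11.2 fun y =>
      ⟨some (y, .decrement), .inl (position_reply_decrement W)⟩
  | succ k _ ih => exact attackerForces_iff_s11.2 fun y =>
      ⟨some (y, .decrement), .inr (by rwa [position_reply_decrement, add_sub_cancel_right])⟩

theorem attackerForces_mode {q : StackSymbol E × C} (hk : 0 ≤ k + W.total q u) :
    W.AttackerForces (position (mode q :: historyStack u) k) := by
  refine attackerForces_iff_s11.2 fun y => ?_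
  induction u generalizing k y with
  | nil =>
    refine ⟨some (y, .final q), ?_⟩
    rw [historyStack, position_reply_final]
    rw [total, List.map_nil, List.sum_nil, add_zero] at hk
    refine hk.eq_or_lt.imp (fun h => ?_) attackerForces_empty
    rw [← h]
    rfl
  | cons x u ih =>
    refine ⟨some (y, .count q x), .inr ?_⟩
    rw [historyStack, position_reply_count]
    refine attackerForces_iff_s11.2 (ih ?_)
    simp only [total, List.map_cons, List.sum_cons] at hk ⊢
    linarith

theorem total_bottom (c : C) : W.total (.bottom, c) u = 0 := by
  have hweight : W.modeWeight (.bottom, c) = fun _ => 0 := rfl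
  simp [total, modeOffset, hweight]

theorem total_spare (c : C) : W.total (.spare, c) u = 0 := by
  have hweight : W.modeWeight (.spare, c) = fun _ => 0 := rfl
  simp [total, modeOffset, hweight]

theorem exists_sustaining_edge [Nonempty C]
    (hu : ¬ W.AttackerForces (position (historyStack u) 0)) :
    ∃ x, W.Passes x u ∧ ¬ W.AttackerForces (position (historyStack (x :: u)) 0) := by
  obtain ⟨y, hy⟩ := not_attackerForces_iff_s11.1 hu
  have passes (c : C) : W.total (y, c) u < 0 := by
    by_contra! h
    refine (hy (some (y, .challenge c))).2 ?_
    rw [position_reply_challenge]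
    exact attackerForces_mode (by rwa [zero_add])
  obtain ⟨c⟩ := ‹Nonempty C›
  match y with
  | .bottom => exact absurd (passes c) (total_bottom c).not_lt
  | .spare => exact absurd (passes c) (total_spare c).not_lt
  | .edge x => exact ⟨x, passes, position_reply_pass W ▸ (hy none).2⟩

theorem attackerForces_one_of_not_sustainable [Nonempty C] (hW : ¬ W.Sustainable) :
    W.AttackerForces 1 := by
  have hnil : W.AttackerForces (position (historyStack []) 0) := by
    by_contra h
    exact hW ⟨{u | ¬ W.AttackerForces (position (historyStack u) 0)}, h,
      fun _ => exists_sustaining_edge⟩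
  refine attackerForces_iff_s11.2 fun y => ?_
  rw [show (1 : Config E C) = position [] 0 from rfl]
  by_cases hy : y = .bottom
  · exact ⟨none, .inr (by rwa [position_reply_pass, hy])⟩
  · exact ⟨some (y, .discard), .inl (position_reply_discard W hy)⟩

end AttackerWins

section DefenderWins

variable {E C : Type*} [DecidableEq E] [DecidableEq C] {W : Weighting E C}
  {g : FreeGroup (Letter E C)} {l : List (Letter E C)} {k : ℤ} {y : StackSymbol E}
  {V : Set (List E)} {u : List E}

open Letter Weighting

/-- The signed letters that Attacker's moves can cancel only if Defender lets them: inverses of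
symbols, and `spare`. -/
def Irremovable (t : Letter E C × Bool) : Prop :=
  (∃ y, t = (symbol y, false)) ∨ t = (symbol .spare, true)

/-- Words that Defender can keep away from `1` forever. -/
def Dead (g : FreeGroup (Letter E C)) : Prop := ∃ t ∈ g.toWord, Irremovable t

theorem Dead.mul_mk {t : Letter E C × Bool} (hg : Dead g) (ht : ¬ Irremovable (t.1, !t.2)) :
    Dead (g * .mk [t]) := by
  obtain ⟨s, hs, hirr⟩ := hg
  by_cases hlast : (t.1, !t.2) ∈ g.toWord.getLast?
  · obtain ⟨L, hL⟩ := List.getLast?_eq_some_iff.1 hlast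
    have hsL : s ∈ L := by
      rw [hL, List.mem_append, List.mem_singleton] at hs
      exact hs.resolve_right fun h => ht (h ▸ hirr)
    exact ⟨s, (toWord_mul_mk_of_cancel hL).symm ▸ hsL, hirr⟩
  · exact ⟨s, by rw [toWord_mul_mk_of_not_cancel hlast]; exact List.mem_append_left _ hs, hirr⟩

theorem dead_mul_mk {t : Letter E C × Bool} (hlast : (t.1, !t.2) ∉ g.toWord.getLast?)
    (ht : Irremovable t) : Dead (g * .mk [t]) :=
  ⟨t, by simp [toWord_mul_mk_of_not_cancel hlast], ht⟩

theorem Dead.mul_replyWord (hg : Dead g) (r : Reply E C) : Dead (g * replyWord y r) := by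
  have mul_mode {g : FreeGroup (Letter E C)} (hg : Dead g) (q : StackSymbol E × C) :
      Dead (g * .of (mode q)) := hg.mul_mk (by simp [Irremovable])
  have mul_inv_mode {g : FreeGroup (Letter E C)} (hg : Dead g) (q : StackSymbol E × C) :
      Dead (g * (.of (mode q))⁻¹) := hg.mul_mk (t := (mode q, false)) (by simp [Irremovable])
  have mul_inv_symbol {g : FreeGroup (Letter E C)} (hg : Dead g) {y : StackSymbol E}
      (hy : y ≠ .spare) : Dead (g * (.of (symbol y))⁻¹) :=
    hg.mul_mk (t := (symbol y, false)) (by simp [Irremovable, hy])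
  match r with
  | .challenge c => exact mul_mode hg _
  | .count q x =>
    simpa only [replyWord, mul_assoc] using
      mul_mode (mul_inv_symbol (y := .edge x) (mul_inv_mode hg q) (by simp)) q
  | .final q =>
    simpa only [replyWord, mul_assoc] using
      mul_inv_symbol (y := .bottom) (mul_inv_mode hg q) (by simp)
  | .decrement => simpa only [replyWord, mul_one] using hg
  | .discard => simpa only [replyWord, mul_one] using hg

theorem dead_mul_inv_symbol (hg : (symbol y, true) ∉ g.toWord.getLast?) :
    Dead (g * (.of (symbol y))⁻¹) :=
  dead_mul_mk (t := (symbol y, false)) hg (.inl ⟨y, rfl⟩)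

theorem dead_positiveWord_mul_inv_symbol (hl : l.head? ≠ some (symbol y)) :
    Dead (positiveWord l * (.of (symbol y))⁻¹) := by
  refine dead_mul_inv_symbol ?_
  rw [toWord_positiveWord, List.getLast?_reverse, List.head?_map]
  simpa using hl

theorem dead_positiveWord_mul_inv_mode_mul_inv_symbol {q : StackSymbol E × C}
    (hl : ∀ l', l ≠ mode q :: symbol y :: l') :
    Dead (positiveWord l * ((.of (mode q))⁻¹ * (.of (symbol y))⁻¹)) := by
  rw [← mul_assoc]
  by_cases hmode : l.head? = some (mode q)
  · obtain ⟨l, rfl⟩ := List.head?_eq_some_iff.1 hmode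
    rw [positiveWord, mul_inv_cancel_right]
    refine dead_positiveWord_mul_inv_symbol fun hsymbol => ?_
    obtain ⟨l, rfl⟩ := List.head?_eq_some_iff.1 hsymbol
    exact hl l rfl
  · refine dead_mul_inv_symbol ?_
    have hword : (positiveWord l * (.of (mode q))⁻¹).toWord =
        (positiveWord l).toWord ++ [(mode q, false)] := by
      refine toWord_mul_mk_of_not_cancel (t := (mode q, false)) ?_
      rw [toWord_positiveWord, List.getLast?_reverse, List.head?_map]
      simpa using hmode
    simp [hword]

theorem dead_positiveWord_mul_replyWord_count {q : StackSymbol E × C} {x : E}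
    (hl : ∀ l', l ≠ mode q :: symbol (.edge x) :: l') :
    Dead (positiveWord l * replyWord y (.count q x)) := by
  rw [replyWord, ← mul_assoc]
  exact (dead_positiveWord_mul_inv_mode_mul_inv_symbol hl).mul_mk (by simp [Irremovable])

theorem Dead.exists_defense {p : Config E C} (hp : Dead p.1) :
    ∃ y, ∀ m, Dead (p * defend y * W.attack m).1 := by
  obtain ⟨y, hy⟩ : ∃ y : StackSymbol E, (symbol y, false) ∉ p.1.toWord.getLast? := by
    by_contra! h
    simpa using Option.mem_unique (h .bottom) (h .spare)
  have hword : (p.1 * .of (symbol y)).toWord = p.1.toWord ++ [(symbol y, true)] :=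
    toWord_mul_mk_of_not_cancel (t := (symbol y, true)) hy
  refine ⟨y, fun m => ?_⟩
  match m with
  | none =>
    obtain ⟨t, ht, hirr⟩ := hp
    refine ⟨t, ?_, hirr⟩
    rw [attack, mul_one, Prod.fst_mul, defend, hword]
    exact List.mem_append_left _ ht
  | some (y', r) =>
    rw [attack, Prod.fst_mul, Prod.fst_mul, defend, ← mul_assoc]
    by_cases hyy' : y' = y
    · rw [hyy', mul_inv_cancel_right]
      exact hp.mul_replyWord r
    · refine (dead_mul_inv_symbol ?_).mul_replyWord r
      simpa [hword] using Ne.symm hyy'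

/-- The stacks and counters that Defender maintains, given a set `V` of histories in which he can
sustain his play. -/
inductive Safe (W : Weighting E C) (V : Set (List E)) : List (Letter E C) → ℤ → Prop
  | exhausted {k : ℤ} (hk : k < 0) : Safe W V [] k
  | history {u : List E} {k : ℤ} (hu : u ∈ V) (hk : k ≤ 0) : Safe W V (historyStack u) k
  | evaluation {q : StackSymbol E × C} {u : List E} {k : ℤ} (hk : k + W.total q u < 0) :
      Safe W V (mode q :: historyStack u) k
  | jammed {q : StackSymbol E × C} {l : List (Letter E C)} {k : ℤ}
      (hl : ∀ y, l.head? ≠ some (symbol y)) : Safe W V (mode q :: l) k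

/-- The positions after Attacker's moves that Defender maintains. -/
def Evades (W : Weighting E C) (V : Set (List E)) (p : Config E C) : Prop :=
  Dead p.1 ∨ ∃ l k, p = position l k ∧ Safe W V l k

theorem Safe.evades (h : Safe W V l k) : Evades W V (position l k) := .inr ⟨l, k, rfl, h⟩

theorem Evades.ne_one {p : Config E C} (hp : Evades W V p) : p ≠ 1 := by
  rintro rfl
  obtain ⟨t, ht, -⟩ | ⟨l, k, hlk, hsafe⟩ := hp
  · simp at ht
  · obtain rfl : l = [] := positiveWord_eq_one_iff.1 (congrArg Prod.fst hlk).symm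
    have hk : k = 0 := congrArg (fun p => p.2.toAdd) hlk.symm
    generalize hnil : ([] : List (Letter E C)) = l at hsafe
    cases hsafe with
    | exhausted hneg => exact hneg.ne hk
    | @history u => cases u <;> simp [historyStack] at hnil
    | evaluation => simp at hnil
    | jammed => simp at hnil

theorem evades_attack_of_safe
    (pass : y = .spare ∨ Safe W V (symbol y :: l) k)
    (challenge : ∀ c, Safe W V (mode (y, c) :: l) k)
    (count : ∀ q x l', l = mode q :: symbol (.edge x) :: l' →
      Safe W V (mode q :: l') (k + W.modeWeight q x))
    (final : ∀ q l', l = mode q :: symbol .bottom :: l' → Safe W V l' (k + W.modeOffset q))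
    (decrement : Safe W V l (k - 1)) (discard : y ≠ .bottom → Safe W V l k)
    (m : Option (StackSymbol E × Reply E C)) :
    Evades W V (position l k * defend y * W.attack m) := by
  rcases m with - | ⟨y', r⟩
  · rw [position_reply_pass]
    refine pass.elim (fun hy => .inl ⟨(symbol .spare, true), ?_, .inr rfl⟩) Safe.evades
    simp [position, toWord_positiveWord, hy]
  by_cases hy : y' = y
  swap
  · rw [position_mul_defend]
    have hpop : (symbol y :: l).head? ≠ some (symbol y') := by simpa using Ne.symm hy
    have hdead := (dead_positiveWord_mul_inv_symbol hpop).mul_replyWord (y := y') r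
    rw [mul_assoc] at hdead
    exact .inl hdead
  subst hy
  cases r with
  | challenge c => exact position_reply_challenge W c ▸ (challenge c).evades
  | count q x =>
    by_cases hl : ∃ l', l = mode q :: symbol (.edge x) :: l'
    · obtain ⟨l', rfl⟩ := hl
      exact position_reply_count W q x ▸ (count q x l' rfl).evades
    · rw [position_mul_defend_mul_attack]
      exact .inl (dead_positiveWord_mul_replyWord_count (not_exists.1 hl))
  | final q =>
    by_cases hl : ∃ l', l = mode q :: symbol .bottom :: l'
    · obtain ⟨l', rfl⟩ := hl
      exact position_reply_final W q ▸ (final q l' rfl).evades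
    · rw [position_mul_defend_mul_attack]
      exact .inl (dead_positiveWord_mul_inv_mode_mul_inv_symbol (not_exists.1 hl))
  | decrement => exact position_reply_decrement W ▸ decrement.evades
  | discard =>
    by_cases hy : y' = .bottom
    · subst hy
      exact position_reply_discard_bottom W ▸ decrement.evades
    · rw [position_reply_discard W hy]
      exact (discard hy).evades

theorem evades_empty_attack (hV : [] ∈ V) (hk : k ≤ 0) (m : Option (StackSymbol E × Reply E C)) :
    Evades W V (position [] k * defend .bottom * W.attack m) :=
  evades_attack_of_safe (.inr (.history hV hk)) (fun _ => .jammed (by simp)) (by simp) (by simp)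
    (.exhausted (by omega)) (absurd rfl) m

theorem evades_history_attack {x : E} (hx : W.Passes x u) (hu : u ∈ V) (hxu : x :: u ∈ V)
    (hk : k ≤ 0) (m : Option (StackSymbol E × Reply E C)) :
    Evades W V (position (historyStack u) k * defend (.edge x) * W.attack m) :=
  evades_attack_of_safe (.inr (.history hxu hk))
    (fun c => .evaluation (by linarith [hx c]))
    (fun _ _ _ h => absurd h historyStack_ne_mode_cons)
    (fun _ _ h => absurd h historyStack_ne_mode_cons)
    (.history hu (by omega)) (fun _ => .history hu hk) m

theorem evades_evaluation_attack {q : StackSymbol E × C} (hk : k + W.total q u < 0)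
    (m : Option (StackSymbol E × Reply E C)) :
    Evades W V (position (mode q :: historyStack u) k * defend .spare * W.attack m) := by
  refine evades_attack_of_safe (.inl rfl) (fun c => .jammed (by simp)) ?_ ?_
    (.evaluation (by omega)) (fun _ => .evaluation hk) m
  · intro q' x l' h
    obtain ⟨⟨⟩, hu⟩ := List.cons_eq_cons.1 h
    cases u with
    | nil => simp [historyStack] at hu
    | cons x u =>
      obtain ⟨⟨⟩, rfl⟩ := List.cons_eq_cons.1 hu
      refine .evaluation ?_
      simp only [total, List.map_cons, List.sum_cons] at hk ⊢
      linarith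
  · intro q' l' h
    obtain ⟨⟨⟩, hu⟩ := List.cons_eq_cons.1 h
    cases u with
    | nil =>
      obtain ⟨-, rfl⟩ := List.cons_eq_cons.1 hu
      exact .exhausted (by simpa [total] using hk)
    | cons x u => simp [historyStack] at hu

theorem evades_jammed_attack {q : StackSymbol E × C} (hl : ∀ y, l.head? ≠ some (symbol y))
    (m : Option (StackSymbol E × Reply E C)) :
    Evades W V (position (mode q :: l) k * defend .spare * W.attack m) := by
  have hne {q' : StackSymbol E × C} {y : StackSymbol E} {l' : List (Letter E C)} :
      mode q :: l ≠ mode q' :: symbol y :: l' := fun h => by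
    obtain ⟨-, rfl⟩ := List.cons_eq_cons.1 h
    exact hl y rfl
  exact evades_attack_of_safe (.inl rfl) (fun c => .jammed (by simp))
    (fun _ _ _ h => absurd h hne) (fun _ _ h => absurd h hne) (.jammed hl) (fun _ => .jammed hl) m

theorem Safe.exists_defense (hVnil : [] ∈ V) (hV : ∀ u ∈ V, ∃ x, W.Passes x u ∧ x :: u ∈ V)
    (h : Safe W V l k) : ∃ y, ∀ m, Evades W V (position l k * defend y * W.attack m) := by
  cases h with
  | exhausted hk => exact ⟨_, evades_empty_attack hVnil hk.le⟩
  | history hu hk =>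
    obtain ⟨x, hx, hxu⟩ := hV _ hu
    exact ⟨_, evades_history_attack hx hu hxu hk⟩
  | evaluation hk => exact ⟨_, evades_evaluation_attack hk⟩
  | jammed hl => exact ⟨_, evades_jammed_attack hl⟩

end DefenderWins

theorem not_attackerForces_one_of_sustainable {E C : Type*} {W : Weighting E C}
    (hW : W.Sustainable) : ¬ W.AttackerForces 1 := by
  classical
  obtain ⟨V, hVnil, hV⟩ := hW
  refine Forces.not_of_invariant (P := fun p => p = position [] 0 ∨ Evades W V p) (.inl rfl)
    fun p hp => ?_
  obtain ⟨y, hy⟩ : ∃ y, ∀ m, Evades W V (p * Weighting.defend y * W.attack m) := by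
    rcases hp with rfl | hdead | ⟨l, k, rfl, hsafe⟩
    · exact ⟨_, evades_empty_attack hVnil le_rfl⟩
    · obtain ⟨y, hy⟩ := hdead.exists_defense (W := W)
      exact ⟨y, fun m => .inl (hy m)⟩
    · exact hsafe.exists_defense hVnil hV
  exact ⟨_, ⟨y, rfl⟩, Set.forall_mem_range.2 fun m => ⟨(hy m).ne_one, .inr (hy m)⟩⟩

theorem attackerForces_one_iff {E C : Type*} [Nonempty C] {W : Weighting E C} :
    W.AttackerForces 1 ↔ ¬ W.Sustainable :=
  ⟨fun h hW => not_attackerForces_one_of_sustainable hW h, attackerForces_one_of_not_sustainable⟩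

theorem exists_attack_eq_mul_pow {E C : Type*} (w : E → C → E → ℤ) (b s : E → C → ℤ)
    (m : Option (StackSymbol E × Reply E C)) :
    ∃ t, ∀ n : ℕ, Weighting.attack ⟨w, fun x c => b x c + n * s x c⟩ m =
      Weighting.attack ⟨w, b⟩ m * t ^ n := by
  match m with
  | some (y, .final (.edge x, c)) =>
    refine ⟨(1, .ofAdd (s x c)), fun n => Prod.ext (by simp [Weighting.attack]) ?_⟩
    simp [Weighting.attack, Weighting.replyWeight, Weighting.modeOffset, ofAdd_add,
      ← ofAdd_nsmul]
  | none | some (_, .final (.bottom, _)) | some (_, .final (.spare, _))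
  | some (_, .challenge _) | some (_, .count _ _) | some (_, .decrement) | some (_, .discard) =>
    exact ⟨1, fun n => by rw [one_pow, mul_one]; rfl⟩

/-! ### Counter machines -/

/-- Instructions of a counter machine: halt, jump, increment a register, and decrement a register,
jumping to `q₁` if it is nonzero and to `q₀` otherwise. -/
inductive Instr (Q : Type*)
  | halt
  | jump (q : Q)
  | inc (r : ℕ) (q : Q)
  | test (r : ℕ) (q₀ q₁ : Q)

namespace Instr

variable {Q : Type*}

/-- The branch `b` of an instruction can be taken. Only `test` distinguishes the two branches, and
its branch `true` is that of a nonzero register. -/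
def Enabled : Instr Q → Bool → (ℕ → ℕ) → Prop
  | halt, _, _ => False
  | jump _, _, _ => True
  | inc _ _, _, _ => True
  | test r _ _, b, v => b = true ↔ v r ≠ 0

/-- The state after an instruction at state `q`. -/
def target : Instr Q → Q → Bool → Q
  | halt, q, _ => q
  | jump q', _, _ => q'
  | inc _ q', _, _ => q'
  | test _ q₀ q₁, _, b => bif b then q₁ else q₀

/-- The change of the registers by an instruction. -/
def delta : Instr Q → Bool → ℕ → ℤ
  | inc r _, _ => Pi.single r 1
  | test r _ _, true => Pi.single r (-1)
  | _, _ => 0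

/-- The linear part of the affine form in the registers that is negative if and only if the branch
is enabled. -/
def guardWeight : Instr Q → Bool → (ℕ → ℤ) →+ ℤ
  | test r _ _, true => -Pi.evalAddMonoidHom _ r
  | test r _ _, false => Pi.evalAddMonoidHom _ r
  | _, _ => 0

/-- The constant part of the affine form in the registers that is negative if and only if the branch
is enabled. -/
def guardBase : Instr Q → Bool → ℤ
  | halt, _ => 0
  | test _ _ _, true => 0
  | _, _ => -1

theorem guard_neg_iff (i : Instr Q) (b : Bool) (v : ℕ → ℕ) :
    i.guardBase b + i.guardWeight b (fun r => v r) < 0 ↔ i.Enabled b v := by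
  cases i <;> cases b <;> simp [guardBase, guardWeight, Enabled, Nat.pos_iff_ne_zero]

end Instr

section Machine

variable {Q : Type*} {M : Q → Instr Q} {q : Q} {v : ℕ → ℕ} {b : Bool}

/-- One step of the counter machine `M`. -/
def step (M : Q → Instr Q) : Q × (ℕ → ℕ) → Option (Q × (ℕ → ℕ))
  | (q, v) => match M q with
    | .halt => none
    | .jump q' => some (q', v)
    | .inc r q' => some (q', Function.update v r (v r + 1))
    | .test r q₀ q₁ =>
      some (if v r = 0 then (q₀, v) else (q₁, Function.update v r (v r - 1)))

/-- The machine `M` halts when started in the configuration `c`. -/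
def Halts (M : Q → Instr Q) (c : Q × (ℕ → ℕ)) : Prop := (StateTransition.eval (step M) c).Dom

theorem exists_enabled_of_step_ne_none (h : step M (q, v) ≠ none) : ∃ b, (M q).Enabled b v := by
  rw [step] at h
  cases hi : M q with
  | halt => simp [hi] at h
  | jump | inc => exact ⟨true, trivial⟩
  | test r => exact ⟨decide (v r ≠ 0), decide_eq_true_iff⟩

theorem step_eq_some_of_enabled (h : (M q).Enabled b v) : ∃ v',
    step M (q, v) = some ((M q).target q b, v') ∧ ∀ r, (v' r : ℤ) = v r + (M q).delta b r := by
  have cast_update (r m : ℕ) (z : ℤ) (hm : (m : ℤ) = v r + z) (s : ℕ) :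
      (Function.update v r m s : ℤ) = v s + (Pi.single r z : ℕ → ℤ) s := by
    obtain rfl | hs := eq_or_ne s r <;> simp [*]
  rw [step]
  cases hi : M q with
  | halt => exact absurd h (by simp [hi, Instr.Enabled])
  | jump => exact ⟨v, rfl, by simp [Instr.delta]⟩
  | inc r => exact ⟨_, rfl, cast_update _ _ _ (Nat.cast_succ _)⟩
  | test r =>
    rw [hi, Instr.Enabled] at h
    cases b with
    | false =>
      have hr : v r = 0 := by simpa using h
      exact ⟨v, by simp [hr, Instr.target], by simp [Instr.delta]⟩
    | true =>
      have hr : v r ≠ 0 := by simpa using h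
      exact ⟨_, by simp only [if_neg hr]; rfl, cast_update _ _ _ (by omega)⟩

end Machine

section MachineWeighting

variable {Q : Type*} {S : Set Q} {M : Q → Instr Q} {code : Q → ℤ} {q₀ q : Q} {v₀ v : ℕ → ℕ}
  {u : List (S × Bool)} {x : S × Bool}

/-- The checks on an extension of a history of a counter machine: the state in which the edge
starts must not be less than the current one, it must not be greater (both with respect to a
numbering of the states), and the edge must be enabled. -/
inductive Check
  | low
  | high
  | guard
  deriving Nonempty, DecidableEq

instance : Fintype Check := ⟨{.low, .high, .guard}, fun c => by cases c <;> decide⟩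

/-- The change of the state code along an edge, where `(q, b)` is the branch `b` at state `q`. -/
def displacement (M : Q → Instr Q) (code : Q → ℤ) (x : S × Bool) : ℤ :=
  code ((M x.1).target x.1 x.2) - code x.1

/-- The weights of the checks on a machine history. -/
def machineWeight (M : Q → Instr Q) (code : Q → ℤ) (x : S × Bool) : Check → S × Bool → ℤ
  | .low, y => displacement M code y
  | .high, y => -displacement M code y
  | .guard, y => (M x.1).guardWeight x.2 ((M y.1).delta y.2)

/-- The offsets of the checks on a machine history starting in state `q₀` with registers `v₀`. -/
def machineOffset (M : Q → Instr Q) (code : Q → ℤ) (q₀ : Q) (v₀ : ℕ → ℕ) (x : S × Bool) :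
    Check → ℤ
  | .low => code q₀ - code x.1 - 1
  | .high => code x.1 - code q₀ - 1
  | .guard => (M x.1).guardBase x.2 + (M x.1).guardWeight x.2 (fun r => v₀ r)

/-- The weighting whose sustainable plays are the infinite runs of `M` from `(q₀, v₀)`. -/
def machineWeighting (M : Q → Instr Q) (code : Q → ℤ) (q₀ : Q) (v₀ : ℕ → ℕ) :
    Weighting (S × Bool) Check :=
  ⟨machineWeight M code, machineOffset M code q₀ v₀⟩

/-- The history `u` leads from `(q₀, v₀)` to a configuration with the code and registers of `c`. -/
def Leads (M : Q → Instr Q) (code : Q → ℤ) (q₀ : Q) (v₀ : ℕ → ℕ) (u : List (S × Bool))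
    (c : Q × (ℕ → ℕ)) : Prop :=
  code c.1 = code q₀ + (u.map (displacement M code)).sum ∧
    (fun r => (c.2 r : ℤ)) = (fun r => (v₀ r : ℤ)) + (u.map fun y => (M y.1).delta y.2).sum

theorem leads_nil : Leads M code q₀ v₀ ([] : List (S × Bool)) (q₀, v₀) := by
  simp [Leads]

theorem Leads.cons {v' : ℕ → ℕ} (hu : Leads M code q₀ v₀ u (x.1, v))
    (hv' : ∀ r, (v' r : ℤ) = v r + (M x.1).delta x.2 r) :
    Leads M code q₀ v₀ (x :: u) ((M x.1).target x.1 x.2, v') := by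
  refine ⟨?_, funext fun r => ?_⟩
  · have h := hu.1
    simp only [List.map_cons, List.sum_cons, displacement] at h ⊢
    linarith
  · have h := congrFun hu.2 r
    simp only [List.map_cons, List.sum_cons, Pi.add_apply] at h ⊢
    linarith [hv' r]

theorem Leads.total_low (hu : Leads M code q₀ v₀ u (q, v)) :
    (machineWeighting M code q₀ v₀).total (.edge x, .low) u = code q - code x.1 - 1 := by
  have h := hu.1
  have hweight : (machineWeighting M code q₀ v₀).modeWeight (.edge x, .low) =
    displacement M code := rfl
  rw [Weighting.total, hweight]
  simp only [Weighting.modeOffset, machineWeighting, machineOffset] at h ⊢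
  linarith

theorem Leads.total_high (hu : Leads M code q₀ v₀ u (q, v)) :
    (machineWeighting M code q₀ v₀).total (.edge x, .high) u = code x.1 - code q - 1 := by
  have h := hu.1
  have hweight : (machineWeighting M code q₀ v₀).modeWeight (.edge x, .high) =
    (fun z => -z) ∘ displacement M code := rfl
  rw [Weighting.total, hweight, ← List.map_map, ← List.sum_neg]
  simp only [Weighting.modeOffset, machineWeighting, machineOffset] at h ⊢
  linarith

theorem Leads.total_guard (hu : Leads M code q₀ v₀ u (q, v)) :
    (machineWeighting M code q₀ v₀).total (.edge x, .guard) u =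
      (M x.1).guardBase x.2 + (M x.1).guardWeight x.2 (fun r => v r) := by
  have hweight : (machineWeighting M code q₀ v₀).modeWeight (.edge x, .guard) =
    (M x.1).guardWeight x.2 ∘ fun y => (M y.1).delta y.2 := rfl
  rw [Weighting.total, hweight, hu.2, map_add, map_list_sum, List.map_map, ← add_assoc]
  rfl

theorem Leads.passes_iff (hcode : Function.Injective code) (hu : Leads M code q₀ v₀ u (q, v)) :
    (machineWeighting M code q₀ v₀).Passes x u ↔ x.1 = q ∧ (M q).Enabled x.2 v := by
  have hcheck : (machineWeighting M code q₀ v₀).Passes x u ↔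
      code q - code x.1 - 1 < 0 ∧ code x.1 - code q - 1 < 0 ∧ (M x.1).Enabled x.2 v := by
    rw [← Instr.guard_neg_iff, ← hu.total_low, ← hu.total_high, ← hu.total_guard]
    exact ⟨fun h => ⟨h _, h _, h _⟩, fun ⟨hlow, hhigh, hguard⟩ c => by cases c <;> assumption⟩
  rw [hcheck, ← hcode.eq_iff]
  constructor
  · rintro ⟨hlow, hhigh, henabled⟩
    have hq : code x.1 = code q := by omega
    exact ⟨hq, hcode hq ▸ henabled⟩
  · rintro ⟨hq, henabled⟩
    exact ⟨by omega, by omega, (hcode hq).symm ▸ henabled⟩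

theorem Leads.cons_of_step {c : Q × (ℕ → ℕ)} (hcode : Function.Injective code)
    (hu : Leads M code q₀ v₀ u c) (hx : (machineWeighting M code q₀ v₀).Passes x u) :
    ∃ v', step M c = some ((M x.1).target x.1 x.2, v') ∧
      Leads M code q₀ v₀ (x :: u) ((M x.1).target x.1 x.2, v') := by
  obtain ⟨q, v⟩ := c
  obtain ⟨rfl, henabled⟩ := (hu.passes_iff hcode).1 hx
  obtain ⟨v', hstep, hv'⟩ := step_eq_some_of_enabled henabled
  exact ⟨v', hstep, hu.cons hv'⟩

theorem sustainable_of_not_halts (hcode : Function.Injective code) (hq₀ : q₀ ∈ S)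
    (hS : ∀ q ∈ S, ∀ b, (M q).target q b ∈ S) (h : ¬ Halts M (q₀, v₀)) :
    (machineWeighting (S := S) M code q₀ v₀).Sustainable := by
  refine ⟨{u | ∃ c, Leads M code q₀ v₀ u c ∧ c.1 ∈ S ∧ ¬ Halts M c},
    ⟨_, leads_nil, hq₀, h⟩, ?_⟩
  rintro u ⟨⟨q, v⟩, hu, hq, hhalt⟩
  have hstep : step M (q, v) ≠ none := fun hnone =>
    hhalt (Part.dom_iff_mem.2 ⟨_, StateTransition.mem_eval.2 ⟨.refl, hnone⟩⟩)
  obtain ⟨b, hb⟩ := exists_enabled_of_step_ne_none hstep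
  have hx := (hu.passes_iff (x := (⟨q, hq⟩, b)) hcode).2 ⟨rfl, hb⟩
  obtain ⟨v', hstep, hxu⟩ := hu.cons_of_step hcode hx
  refine ⟨_, hx, _, hxu, hS q hq b, fun hhalt' => hhalt ?_⟩
  rwa [Halts, StateTransition.reaches_eval (.single hstep)]

theorem not_sustainable_of_halts (hcode : Function.Injective code) (h : Halts M (q₀, v₀)) :
    ¬ (machineWeighting (S := S) M code q₀ v₀).Sustainable := by
  rintro ⟨V, hVnil, hV⟩
  obtain ⟨c, hc⟩ := Part.dom_iff_mem.1 h
  suffices ∀ u ∈ V, ¬ Leads M code q₀ v₀ u (q₀, v₀) from this [] hVnil leads_nil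
  refine StateTransition.evalInduction
    (C := fun c => ∀ u ∈ V, ¬ Leads M code q₀ v₀ u c) hc fun c _ ih u hu hlead => ?_
  obtain ⟨x, hx, hxu⟩ := hV u hu
  obtain ⟨v', hstep, hlead'⟩ := hlead.cons_of_step hcode hx
  exact ih _ hstep _ hxu hlead'

end MachineWeighting

/-! ### Loop programs -/

/-- Loop programs over registers: `loop r p` is `while r ≠ 0 do (r := r - 1; p)`. -/
inductive Prog
  | nop
  | inc (r : ℕ)
  | seq (p q : Prog)
  | loop (r : ℕ) (p : Prog)
  deriving Countable

/-- The counter machine that runs a list of programs. -/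
def progMachine : List Prog → Instr (List Prog)
  | [] => .halt
  | .nop :: κ => .jump κ
  | .inc r :: κ => .inc r κ
  | .seq p q :: κ => .jump (p :: q :: κ)
  | .loop r p :: κ => .test r κ (p :: .loop r p :: κ)

/-- The program `p` terminates and transforms the registers `v` to `v'`. -/
def Executes (p : Prog) (v v' : ℕ → ℕ) : Prop :=
  ∀ κ, StateTransition.Reaches (step progMachine) (p :: κ, v) (κ, v')

section Executes

open Function Prog StateTransition

variable {p q : Prog} {v v' v'' : ℕ → ℕ} {r s t : ℕ}

theorem executes_nop : Executes nop v v := fun _ => .single rfl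

theorem executes_inc : Executes (inc r) v (update v r (v r + 1)) := fun _ => .single rfl

theorem Executes.seq (hp : Executes p v v') (hq : Executes q v' v'') : Executes (seq p q) v v'' :=
  fun κ => .head rfl ((hp (q :: κ)).trans (hq κ))

theorem executes_loop_of_eq_zero (hr : v r = 0) : Executes (loop r p) v v :=
  fun κ => .single (by simp [step, progMachine, hr])

theorem Executes.reaches₁_loop (hr : v r ≠ 0) (hp : Executes p (update v r (v r - 1)) v')
    (κ : List Prog) :
    Reaches₁ (step progMachine) (loop r p :: κ, v) (loop r p :: κ, v') :=
  .head' (by simp [step, progMachine, hr]) (hp _)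

theorem executes_loop_of_ne_zero (hr : v r ≠ 0) (hp : Executes p (update v r (v r - 1)) v')
    (hloop : Executes (loop r p) v' v'') : Executes (loop r p) v v'' :=
  fun κ => (hp.reaches₁_loop hr κ).to_reflTransGen.trans (hloop κ)

theorem Executes.halts (h : Executes p v v') : Halts progMachine ([p], v) :=
  Part.dom_iff_mem.2 ⟨_, mem_eval.2 ⟨h [], rfl⟩⟩

theorem executes_loop {I : ℕ → ℕ → ℕ} {N : ℕ} (hr : ∀ k ≤ N, I k r = N - k)
    (hp : ∀ k < N, Executes p (update (I k) r (N - (k + 1))) (I (k + 1))) :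
    Executes (loop r p) (I 0) (I N) := by
  refine Nat.decreasingInduction (motive := fun k _ => Executes (loop r p) (I k) (I N))
    (fun k hk ih => ?_) (executes_loop_of_eq_zero (by simp [hr])) N.zero_le
  have hIk := hr k hk.le
  refine executes_loop_of_ne_zero (by omega) ?_ ih
  rw [hIk, Nat.sub_sub]
  exact hp k hk

theorem executes_clear : Executes (loop r nop) v (update v r 0) := by
  have h := executes_loop (r := r) (p := nop) (I := fun k => update v r (v r - k)) (N := v r)
    (by simp) (fun k _ => by simpa using executes_nop)
  simpa using h

theorem executes_move (h : r ≠ s) :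
    Executes (loop r (inc s)) v (update (update v r 0) s (v s + v r)) := by
  have hloop := executes_loop (r := r) (p := inc s)
    (I := fun k => update (update v r (v r - k)) s (v s + k)) (N := v r)
    (by simp [h]) (fun k _ => by
      convert executes_inc using 1
      grind [update_apply])
  simpa using hloop

/-- Adds register `r` to register `s`, with the help of register `t`, which is initially zero. -/
def Prog.copy (r s t : ℕ) : Prog := .seq (loop r (.seq (inc s) (inc t))) (loop t (inc r))

theorem executes_copy (hrs : r ≠ s) (hrt : r ≠ t) (hst : s ≠ t) (ht : v t = 0) :
    Executes (copy r s t) v (update v s (v s + v r)) := by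
  have hloop := executes_loop (r := r) (p := .seq (inc s) (inc t))
    (I := fun k => update (update (update v r (v r - k)) s (v s + k)) t k) (N := v r)
    (by simp [hrs, hrt]) (fun k _ => by
      convert executes_inc.seq executes_inc using 1
      grind [update_apply])
  rw [copy]
  convert hloop.seq (executes_move hrt.symm) using 1
  · grind [update_apply]
  · grind [update_apply]

end Executes

section Extend

open Function

variable {v : ℕ → ℕ} {b : ℕ} {l : List ℕ}

/-- The registers `v` below `b`, followed by the registers `l` and then by zeros. -/
def extend (v : ℕ → ℕ) (b : ℕ) (l : List ℕ) : ℕ → ℕ :=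
  fun r => if r < b then v r else l.getD (r - b) 0

theorem extend_of_lt {r : ℕ} (hr : r < b) : extend v b l r = v r := if_pos hr

theorem extend_add (i : ℕ) : extend v b l (b + i) = l.getD i 0 := by simp [extend]

theorem extend_eq_zero {r : ℕ} (hr : b + l.length ≤ r) : extend v b l r = 0 := by
  grind [extend]

theorem extend_nil (hv : ∀ r, b ≤ r → v r = 0) : extend v b [] = v := by
  funext r
  grind [extend]

theorem extend_append_zero : extend v b (l ++ [0]) = extend v b l := by
  funext r
  grind [extend]

theorem update_extend_of_lt {r : ℕ} (hr : r < b) (x : ℕ) :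
    update (extend v b l) r x = extend (update v r x) b l := by
  funext s
  grind [extend, update_apply]

theorem update_extend_set {i : ℕ} (hi : i < l.length) (x : ℕ) :
    update (extend v b l) (b + i) x = extend v b (l.set i x) := by
  funext s
  grind [extend, update_apply]

theorem update_extend_append (x : ℕ) :
    update (extend v b l) (b + l.length) x = extend v b (l ++ [x]) := by
  funext s
  grind [extend, update_apply]

end Extend

section Computes

open Function Prog

variable {m n : ℕ}

/-- For all input registers `ins`, output register `out`, and bounds `b` on them, some program
computes `f` if the registers from `b` on are initially zero, as well as `out`. The program restores
all registers other than `out`. -/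
def Computes (f : List.Vector ℕ n → ℕ) : Prop :=
  ∀ (ins : Fin n → ℕ) (out b : ℕ), (∀ i, ins i < b) → (∀ i, ins i ≠ out) → out < b →
    ∃ p, ∀ v : ℕ → ℕ, (∀ r, b ≤ r → v r = 0) → v out = 0 →
      Executes p v (update v out (f (.ofFn fun i => v (ins i))))

theorem computes_zero : Computes (n := n) fun _ => 0 :=
  fun _ _ _ _ _ _ => ⟨nop, fun _ _ hout => by simpa [← hout] using executes_nop⟩

theorem computes_get (i : Fin n) : Computes fun a => a.get i := by
  intro ins out b hins hne hout
  refine ⟨copy (ins i) out b, fun v hv hv_out => ?_⟩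
  simpa [hv_out] using executes_copy (hne i) (hins i).ne hout.ne (hv b le_rfl)

theorem computes_succ : Computes (n := 1) fun a => a.head.succ := by
  intro ins out b hins hne hout
  obtain ⟨p, hp⟩ := computes_get 0 ins out b hins hne hout
  exact ⟨.seq p (inc out), fun v hv hv_out => by
    simpa using (hp v hv hv_out).seq (executes_inc (r := out))⟩

theorem exists_executes_extend_ofFn {g : Fin n → List.Vector ℕ m → ℕ} (hg : ∀ i, Computes (g i))
    {ins : Fin m → ℕ} {b : ℕ} (hins : ∀ i, ins i < b) :
    ∃ p, ∀ v : ℕ → ℕ, (∀ r, b ≤ r → v r = 0) →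
      Executes p v (extend v b (List.ofFn fun i => g i (.ofFn fun j => v (ins j)))) := by
  induction n with
  | zero => exact ⟨nop, fun v hv => by
      rw [List.ofFn_zero, extend_nil hv]
      exact executes_nop⟩
  | succ n ih =>
    obtain ⟨p, hp⟩ := ih fun i => hg i.castSucc
    obtain ⟨q, hq⟩ := hg (Fin.last n) ins (b + n) (b + n + 1) (fun i => by have := hins i; omega)
      (fun i => by have := hins i; omega) (by omega)
    refine ⟨.seq p q, fun v hv => (hp v hv).seq ?_⟩
    rw [List.ofFn_succ', List.concat_eq_append]
    set l := List.ofFn fun i => g i.castSucc (.ofFn fun j => v (ins j))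
    have hlength : l.length = n := List.length_ofFn
    have h := hq (extend v b l) (fun r hr => extend_eq_zero (by omega)) (extend_eq_zero (by omega))
    simp only [extend_of_lt (hins _)] at h
    rwa [← update_extend_append, hlength]

theorem exists_executes_of_extend (b n : ℕ) :
    ∃ p, ∀ v : ℕ → ℕ, (∀ r, b ≤ r → v r = 0) → ∀ l : List ℕ, l.length = n →
      Executes p (extend v b l) v := by
  induction n with
  | zero => exact ⟨nop, fun v hv l hl => by
      rw [List.length_eq_zero_iff.1 hl, extend_nil hv]
      exact executes_nop⟩
  | succ n ih =>
    obtain ⟨p, hp⟩ := ih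
    refine ⟨.seq (loop (b + n) nop) p, fun v hv l hl => ?_⟩
    obtain ⟨l, x, rfl⟩ := (List.eq_nil_or_concat' l).resolve_left (by grind)
    obtain rfl : l.length = n := by grind
    refine executes_clear.seq ?_
    rw [update_extend_set (by simp)]
    simpa [extend_append_zero] using hp v hv l rfl

theorem Computes.comp {f : List.Vector ℕ n → ℕ} {g : Fin n → List.Vector ℕ m → ℕ}
    (hf : Computes f) (hg : ∀ i, Computes (g i)) :
    Computes fun a => f (.ofFn fun i => g i a) := by
  intro ins out b hins _ hout
  obtain ⟨p, hp⟩ := exists_executes_extend_ofFn hg hins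
  obtain ⟨q, hq⟩ := hf (fun i => b + i) out (b + n) (by simp) (fun i => by omega) (by omega)
  obtain ⟨c, hc⟩ := exists_executes_of_extend b n
  refine ⟨.seq p (.seq q c), fun v hv hv_out => (hp v hv).seq ?_⟩
  set l := List.ofFn fun i => g i (.ofFn fun j => v (ins j)) with hl
  have hlength : l.length = n := List.length_ofFn
  have h := hq (extend v b l) (fun r hr => extend_eq_zero (by omega))
    ((extend_of_lt hout).trans hv_out)
  have hargs (i : Fin n) : extend v b l (b + i) = g i (.ofFn fun j => v (ins j)) := by
    simp [extend_add, hl]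
  simp only [hargs] at h
  refine h.seq ?_
  rw [update_extend_of_lt hout]
  exact hc _ (fun r hr => by rw [update_of_ne (by omega), hv r hr]) l hlength

/-- The values of the function defined by primitive recursion from `f` and `g`. -/
def precValue (f : List.Vector ℕ n → ℕ) (g : List.Vector ℕ (n + 2) → ℕ) (a : List.Vector ℕ n)
    (k : ℕ) : ℕ :=
  k.rec (f a) fun y x => g (y ::ᵥ x ::ᵥ a)

/-- The program that computes a primitive recursion. Registers `b` and `b + 1` count down and up
while `out` accumulates the value, and `q` puts the next value into register `b + 2`. -/
def Prog.prec (p q : Prog) (r out b : ℕ) : Prog :=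
  .seq (copy r b (b + 1)) (.seq p (.seq
    (loop b (.seq q (.seq (loop out nop) (.seq (loop (b + 2) (inc out)) (inc (b + 1))))))
    (loop (b + 1) nop)))

theorem executes_prec_body {q : Prog} {v : ℕ → ℕ} {out b x y z : ℕ} (hout : out < b)
    (hq : Executes q (extend v b [x, y]) (extend v b [x, y, z])) :
    Executes (.seq q (.seq (loop out nop) (.seq (loop (b + 2) (inc out)) (inc (b + 1)))))
      (extend v b [x, y]) (extend (update v out z) b [x, y + 1]) := by
  have hclear : Executes (loop out nop) (extend v b [x, y, z])
      (extend (update v out 0) b [x, y, z]) := update_extend_of_lt hout 0 ▸ executes_clear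
  have hmove : Executes (loop (b + 2) (inc out)) (extend (update v out 0) b [x, y, z])
      (extend (update v out z) b [x, y]) := by
    convert executes_move (r := b + 2) (s := out) (by omega) using 1
    rw [extend_add, extend_of_lt hout, update_extend_set (by simp), update_extend_of_lt hout]
    simpa using (extend_append_zero (l := [x, y])).symm
  have hinc : Executes (inc (b + 1)) (extend (update v out z) b [x, y])
      (extend (update v out z) b [x, y + 1]) := by
    convert executes_inc (r := b + 1) using 1
    simp [extend_add, update_extend_set]
  exact hq.seq (hclear.seq (hmove.seq hinc))

theorem executes_prec {f : List.Vector ℕ n → ℕ} {g : List.Vector ℕ (n + 2) → ℕ} {p q : Prog}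
    {v : ℕ → ℕ} {a : List.Vector ℕ n} {r out b : ℕ} (hr : r < b) (hout : out < b)
    (hv : ∀ s, b ≤ s → v s = 0)
    (hp : ∀ x, Executes p (extend v b [x]) (extend (update v out (f a)) b [x]))
    (hq : ∀ x y z, Executes q (extend (update v out z) b [x, y])
      (extend (update v out z) b [x, y, g (y ::ᵥ z ::ᵥ a)])) :
    Executes (prec p q r out b) v (update v out (precValue f g a (v r))) := by
  have hcopy : Executes (copy r b (b + 1)) v (extend v b [v r]) := by
    convert executes_copy (r := r) (s := b) (t := b + 1) hr.ne (by omega) (by omega)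
      (hv _ (by omega)) using 1
    funext s
    grind [extend, update_apply]
  have hloop := executes_loop (r := b) (N := v r)
    (I := fun k => extend (update v out (precValue f g a k)) b [v r - k, k])
    (fun k _ => by simp [extend]) (fun k _ => by
      have hbody := executes_prec_body hout (hq (v r - (k + 1)) k (precValue f g a k))
      convert hbody using 1
      · funext s
        grind [extend, update_apply]
      · rw [update_idem]
        rfl)
  have hinit : Executes p (extend v b [v r]) (extend (update v out (f a)) b [v r, 0]) :=
    (extend_append_zero (v := update v out (f a)) (l := [v r])).symm ▸ hp (v r)
  simp only [Nat.sub_self, Nat.sub_zero] at hloop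
  refine hcopy.seq (hinit.seq (hloop.seq ?_))
  convert executes_clear using 1
  funext s
  grind [extend, update_apply]

theorem Computes.prec {f : List.Vector ℕ n → ℕ} {g : List.Vector ℕ (n + 2) → ℕ}
    (hf : Computes f) (hg : Computes g) :
    Computes fun a : List.Vector ℕ (n + 1) =>
      a.head.rec (f a.tail) fun y x => g (y ::ᵥ x ::ᵥ a.tail) := by
  intro ins out b hins hne hout
  obtain ⟨p, hp⟩ := hf (fun i => ins i.succ) out (b + 1)
    (fun i => (hins _).trans (by omega)) (fun i => hne _) (by omega)
  obtain ⟨q, hq⟩ := hg (Fin.cons (b + 1) (Fin.cons out fun i => ins i.succ)) (b + 2) (b + 3)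
    (Fin.cases (by simp) (Fin.cases (by simp; omega) fun i => by
      have := hins i.succ; simp only [Fin.cons_succ]; omega))
    (Fin.cases (by simp) (Fin.cases (by simp; omega) fun i => by
      have := hins i.succ; simp only [Fin.cons_succ]; omega))
    (by omega)
  refine ⟨.prec p q (ins 0) out b, fun v hv hv_out => ?_⟩
  refine executes_prec (hins 0) hout hv (fun x => ?_) fun x y z => ?_
  · have h := hp (extend v b [x]) (fun r hr => extend_eq_zero hr)
      ((extend_of_lt hout).trans hv_out)
    simpa only [update_extend_of_lt hout, extend_of_lt (hins _), List.Vector.tail_ofFn] using h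
  · have h := hq (extend (update v out z) b [x, y]) (fun r hr => extend_eq_zero (by simp; omega))
      (extend_eq_zero le_rfl)
    have hargs : (List.Vector.ofFn fun i => extend (update v out z) b [x, y]
        ((Fin.cons (b + 1) (Fin.cons out fun i => ins i.succ) : Fin (n + 2) → ℕ) i)) =
        y ::ᵥ z ::ᵥ (List.Vector.ofFn fun i => v (ins i)).tail := by
      simp [List.Vector.ofFn, extend_add, extend_of_lt, hout, hins, hne]
    rwa [hargs, show b + 2 = b + [x, y].length from rfl, update_extend_append] at h

end Computes

section Universal

open Function Prog StateTransition

theorem computes_of_primrec' {n : ℕ} {f : List.Vector ℕ n → ℕ} (hf : Nat.Primrec' f) :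
    Computes f := by
  induction hf with
  | zero => exact computes_zero
  | succ => exact computes_succ
  | get i => exact computes_get i
  | comp g _ _ hf hg => exact hf.comp hg
  | prec _ _ hf hg => exact hf.prec hg

theorem not_dom_eval_of_reaches₁ {σ : Type*} {f : σ → Option σ} {c : ℕ → σ}
    (hc : ∀ k, Reaches₁ f (c k) (c (k + 1))) : ¬ (eval f (c 0)).Dom := by
  intro h
  obtain ⟨d, hd⟩ := Part.dom_iff_mem.1 h
  refine evalInduction (C := fun a => ∀ k, ¬ Reaches f a (c k)) hd (fun a _ ih k hk => ?_) 0 .refl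
  obtain ⟨a', ha', hreach⟩ := Relation.TransGen.head'_iff.1 (.trans_right hk (hc k))
  exact ih a' ha' (k + 1) hreach

theorem Executes.halts_seq_iff {p q : Prog} {v v' : ℕ → ℕ} (hp : Executes p v v') :
    Halts progMachine ([.seq p q], v) ↔ Halts progMachine ([q], v') := by
  have h : Reaches (step progMachine) ([.seq p q], v) ([q], v') := .head rfl (hp [q])
  rw [Halts, Halts, reaches_eval h]

theorem halts_loop_iff {p : Prog} {r : ℕ} {v : ℕ → ℕ → ℕ}
    (hp : ∀ k, v k r ≠ 0 → Executes p (update (v k) r (v k r - 1)) (v (k + 1))) :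
    Halts progMachine ([loop r p], v 0) ↔ ∃ k, v k r = 0 := by
  constructor
  · contrapose!
    exact fun h => not_dom_eval_of_reaches₁ (c := fun k => ([loop r p], v k)) fun k =>
      (hp k (h k)).reaches₁_loop (h k) []
  · rintro ⟨k, hk⟩
    induction k generalizing v with
    | zero => exact (executes_loop_of_eq_zero hk).halts
    | succ k ih =>
      by_cases h0 : v 0 r = 0
      · exact (executes_loop_of_eq_zero h0).halts
      · rw [Halts, reaches_eval ((hp 0 h0).reaches₁_loop h0 []).to_reflTransGen]
        exact ih (fun k => hp (k + 1)) hk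

theorem exists_halts_iff_exists_eq_zero {f : List.Vector ℕ 2 → ℕ} (hf : Computes f) :
    ∃ p, ∀ n, Halts progMachine ([p], Pi.single 0 n) ↔ ∃ k, f (k ::ᵥ n ::ᵥ .nil) = 0 := by
  obtain ⟨p, hp⟩ := hf ![1, 0] 2 3 (by decide) (by decide) (by decide)
  let v (n k y : ℕ) : ℕ → ℕ := extend (Pi.single 0 n) 1 [k, y]
  have hv₀ (n : ℕ) : Pi.single 0 n = v n 0 0 := by
    funext r
    grind [extend]
  have hvp (n k : ℕ) : Executes p (v n k 0) (v n k (f (k ::ᵥ n ::ᵥ .nil))) := by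
    convert hp (v n k 0) (fun r hr => extend_eq_zero hr) rfl using 1
    exact (update_extend_set (l := [k, 0]) (i := 1) (by simp) _).symm
  refine ⟨seq p (loop 2 (seq (loop 2 nop) (seq (inc 1) p))), fun n => ?_⟩
  have hbody (k y : ℕ) : Executes (seq (loop 2 nop) (seq (inc 1) p)) (update (v n k y) 2 (y - 1))
      (v n (k + 1) (f ((k + 1) ::ᵥ n ::ᵥ .nil))) := by
    refine executes_clear.seq (Executes.seq executes_inc ?_)
    convert hvp n (k + 1) using 1
    funext r
    grind [extend, update_apply]
  rw [hv₀, (hvp n 0).halts_seq_iff]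
  exact halts_loop_iff (v := fun k => v n k (f (k ::ᵥ n ::ᵥ .nil))) fun k _ => hbody k _

theorem exists_not_computablePred_halts :
    ∃ p, ¬ ComputablePred fun n => Halts progMachine ([p], Pi.single 0 n) := by
  let g (a : List.Vector ℕ 2) : Option ℕ :=
    Nat.Partrec.Code.evaln a.head (Denumerable.ofNat Nat.Partrec.Code a.tail.head) 0
  have hg : Primrec g := Nat.Partrec.Code.primrec_evaln.comp
    (.pair (.pair .vector_head ((Primrec.ofNat _).comp (Primrec.vector_head.comp .vector_tail)))
      (.const 0))
  have hf : Primrec fun a => if g a = none then 1 else 0 :=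
    .ite (Primrec.eq.comp hg (.const none)) (.const 1) (.const 0)
  obtain ⟨p, hp⟩ := exists_halts_iff_exists_eq_zero (computes_of_primrec' (.of_prim hf))
  refine ⟨p, fun hc => ComputablePred.halting_problem 0 ?_⟩
  refine ComputablePred.computable_of_manyOneReducible
    ⟨Encodable.encode, Computable.encode, fun c => ?_⟩ hc
  refine Part.dom_iff_mem.trans (.trans ?_ (hp _).symm)
  have hgc (k : ℕ) : g (k ::ᵥ Encodable.encode c ::ᵥ .nil) = Nat.Partrec.Code.evaln k c 0 := by
    simp [g]
  simp only [hgc, Nat.Partrec.Code.evaln_complete, ite_eq_right_iff, one_ne_zero, imp_false,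
    ← ne_eq, Option.ne_none_iff_exists', Option.mem_def]
  exact exists_comm

theorem exists_finite_target_closed (p : Prog) :
    ∃ S : Set (List Prog), S.Finite ∧ [p] ∈ S ∧
      ∀ κ ∈ S, ∀ b, (progMachine κ).target κ b ∈ S := by
  suffices h : ∀ κ, ∃ S : Set (List Prog), S.Finite ∧ p :: κ ∈ S ∧
      ∀ κ' ∈ S, ∀ b, (progMachine κ').target κ' b ∈ insert κ S by
    obtain ⟨S, hS, hp, hclosed⟩ := h []
    refine ⟨insert [] S, hS.insert _, .inr hp, ?_⟩
    rintro κ (rfl | hκ) b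
    · exact .inl rfl
    · exact hclosed κ hκ b
  induction p with
  | nop | inc r =>
    exact fun κ => ⟨{_}, Set.finite_singleton _, rfl, by rintro _ rfl b; exact .inl rfl⟩
  | seq p q ihp ihq =>
    intro κ
    obtain ⟨S, hS, hp, hSclosed⟩ := ihp (q :: κ)
    obtain ⟨T, hT, hq, hTclosed⟩ := ihq κ
    refine ⟨insert (seq p q :: κ) (S ∪ T), (hS.union hT).insert _, .inl rfl, ?_⟩
    rintro κ' (rfl | hκ' | hκ') b
    · exact .inr (.inr (.inl hp))
    · have := hSclosed κ' hκ' b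
      grind
    · have := hTclosed κ' hκ' b
      grind
  | loop r p ihp =>
    intro κ
    obtain ⟨S, hS, hp, hSclosed⟩ := ihp (loop r p :: κ)
    refine ⟨insert (loop r p :: κ) S, hS.insert _, .inl rfl, ?_⟩
    rintro κ' (rfl | hκ') b
    · cases b
      · exact .inl rfl
      · exact .inr (.inr hp)
    · have := hSclosed κ' hκ' b
      grind

end Universal

/-! ### The reduction -/

section BraidWords

theorem braid5_append (w w' : BraidWord5) : braid5 (w ++ w') = braid5 w * braid5 w' := by
  rw [braid5, List.map_append, List.prod_append, braid5, braid5]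

theorem braid5_flatMap_range (n : ℕ) (w : BraidWord5) :
    braid5 ((List.range n).flatMap fun _ => w) = braid5 w ^ n := by
  induction n with
  | zero => simp [braid5]
  | succ n ih =>
    rw [List.range_succ, List.flatMap_append, braid5_append, ih, pow_succ, List.flatMap_singleton]

theorem braid5_surjective : Function.Surjective braid5 := by
  intro x
  obtain ⟨g, rfl⟩ := PresentedGroup.mk_surjective braidRels5 x
  have hmk : PresentedGroup.mk braidRels5 = FreeGroup.lift PresentedGroup.of :=
    FreeGroup.ext_hom _ _ fun i => by rw [FreeGroup.lift_apply_of]; rfl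
  refine ⟨g.toWord, ?_⟩
  conv_rhs => rw [hmk, ← FreeGroup.mk_toWord (x := g), FreeGroup.lift_mk]
  simp only [braid5, Bool.cond_eq_ite]

theorem exists_computable_instances {ι κ : Type*} [Finite ι] [Finite κ] (a t : ι → B5)
    (d : κ → B5) :
    ∃ f : ℕ → BG5Instance, Computable f ∧ ∀ n,
      {x | x ∈ (f n).1.map braid5} = Set.range (fun i => a i * t i ^ n) ∧
      {x | x ∈ (f n).2.map braid5} = Set.range d := by
  have := Fintype.ofFinite ι
  have := Fintype.ofFinite κ
  choose word braid5_word using braid5_surjective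
  let attacks : List (BraidWord5 × BraidWord5) :=
    Finset.univ.toList.map fun i => (word (a i), word (t i))
  let defenses : List BraidWord5 := Finset.univ.toList.map fun i => word (d i)
  refine ⟨fun n => (attacks.map fun c => c.1 ++ (List.range n).flatMap fun _ => c.2, defenses),
    ?_, fun n => ⟨?_, ?_⟩⟩
  · refine Primrec.to_comp (.pair (.list_map (.const attacks) ?_) (.const defenses))
    exact Primrec.list_append.comp (Primrec.fst.comp .snd)
      (.list_flatMap (Primrec.list_range.comp .fst) (Primrec.snd.comp (Primrec.snd.comp .fst)))
  · ext x
    simp [attacks, braid5_append, braid5_flatMap_range, braid5_word]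
  · ext x
    simp [defenses, braid5_word]

end BraidWords

theorem exists_injective_config_hom (E C : Type*) [Countable E] [Countable C] :
    ∃ φ : Config E C →* B5, Function.Injective φ := by
  obtain ⟨ι, hι⟩ := exists_injective_nat (Letter E C)
  exact ⟨freeProdInt.comp ((FreeGroup.map ι).prodMap (.id _)), freeProdInt_injective.comp
    ((FreeGroup.map_injective hι).prodMap Function.injective_id)⟩

theorem exists_computable_iff_attackerForces {E C : Type*} [Finite E] [Finite C]
    (w : E → C → E → ℤ) (b s : E → C → ℤ) :
    ∃ f : ℕ → BG5Instance, Computable f ∧ ∀ n : ℕ,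
      Weighting.AttackerForces ⟨w, fun x c => b x c + n * s x c⟩ 1 ↔
        BG5AttackerWins ((f n).1.map braid5) ((f n).2.map braid5) 1 := by
  have := Fintype.ofFinite E
  have := Fintype.ofFinite C
  obtain ⟨φ, hφ⟩ := exists_injective_config_hom E C
  choose t ht using exists_attack_eq_mul_pow w b s
  obtain ⟨f, hf, hAD⟩ := exists_computable_instances (fun m => φ (Weighting.attack ⟨w, b⟩ m))
    (fun m => φ (t m)) (fun y => φ (Weighting.defend y))
  refine ⟨f, hf, fun n => ?_⟩
  obtain ⟨hA, hD⟩ := hAD n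
  simp only [← map_pow, ← map_mul, ← ht] at hA
  have hne : (f n).1.map braid5 ≠ [] := List.ne_nil_of_mem (hA.ge ⟨none, rfl⟩)
  rw [bg5AttackerWins_iff_forces hne, hA, hD, Set.range_comp' φ, Set.range_comp' φ, ← map_one φ,
    forces_image_iff hφ]

theorem exists_machineOffset_single {Q : Type*} {S : Set Q} (M : Q → Instr Q) (code : Q → ℤ)
    (q₀ : Q) (r : ℕ) : ∃ s : S × Bool → Check → ℤ, ∀ n : ℕ,
      machineOffset M code q₀ (Pi.single r n) =
        fun x c => machineOffset M code q₀ 0 x c + n * s x c := by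
  refine ⟨fun x c => match c with
    | .low | .high => 0
    | .guard => (M x.1).guardWeight x.2 (Pi.single r 1), fun n => funext₂ fun x c => ?_⟩
  cases c with
  | low | high => simp [machineOffset]
  | guard =>
    have hsingle : (fun i => ((Pi.single r n : ℕ → ℕ) i : ℤ)) = n • Pi.single r 1 := by
      funext i
      simp [Pi.single_apply]
    simp only [machineOffset, hsingle, map_nsmul]
    simp [← Pi.zero_def]

theorem exists_computable_halts_iff (p : Prog) :
    ∃ f : ℕ → BG5Instance, Computable f ∧ ∀ n, Halts progMachine ([p], Pi.single 0 n) ↔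
      BG5AttackerWins ((f n).1.map braid5) ((f n).2.map braid5) 1 := by
  obtain ⟨S, hS, hp, hclosed⟩ := exists_finite_target_closed p
  have := hS.to_subtype
  obtain ⟨code, hcode⟩ : ∃ code : List Prog → ℤ, Function.Injective code :=
    let ⟨e, he⟩ := exists_injective_nat (List Prog)
    ⟨fun κ => e κ, Nat.cast_injective.comp he⟩
  obtain ⟨s, hs⟩ := exists_machineOffset_single (S := S) progMachine code [p] 0
  obtain ⟨f, hf, hwins⟩ := exists_computable_iff_attackerForces
    (machineWeight progMachine code) _ s
  refine ⟨f, hf, fun n => ?_⟩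
  rw [← hwins, ← hs, attackerForces_one_iff]
  exact ⟨not_sustainable_of_halts hcode, not_imp_comm.1 (sustainable_of_not_halts hcode hp hclosed)⟩

end BraidGame

/-- It is undecidable whether Attacker has a winning strategy in the Braid Game on `B₅`
starting from the trivial braid. -/
theorem braid_game_B5_undecidable :
    ¬ ComputablePred (fun inst : BG5Instance =>
      BG5AttackerWins (inst.1.map braid5) (inst.2.map braid5) (1 : B5)) := by
  intro hc
  obtain ⟨p, hp⟩ := BraidGame.exists_not_computablePred_halts
  obtain ⟨f, hf, h⟩ := BraidGame.exists_computable_halts_iff p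
  exact hp (ComputablePred.computable_of_manyOneReducible ⟨f, hf, h⟩ hc)
end

section
/- Let U = {u₁, …, u_k} and V = {v₁, …, v_ℓ} be finite subsets of ℤ^n, and x, y ∈ ℤ^n. For w ∈ ℤ^n let M_w ∈ ℤ^{2n×2n} be the block matrix with the n×n identity matrix in the top-left and bottom-right blocks, the diagonal matrix diag(w₁, …, w_n) in the top-right block, and the zero matrix in the bottom-left block. Then Attacker has a winning strategy in the Robot Game with Attacker set U, Defender set V, initial vector x and target vector y if and only if Attacker has a winning strategy in the Matrix Game of dimension 2n with Attacker matrices {M_u : u ∈ U}, Defender matrices {M_v : v ∈ V}, initial vector (x₁, …, x_n, 1, …, 1)ᵀ and target vector (y₁, …, y_n, 1, …, 1)ᵀ. -/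
/-!
Both games are instances of one game, in which the moves act on the configurations. On vectors
of the form `(a, 1, …, 1)ᵀ` the matrix `M_w` acts as translation of `a` by `w`, so `w ↦ M_w` and
`a ↦ (a, 1, …, 1)ᵀ` embed the Robot Game equivariantly into the Matrix Game. Each player's moves
can therefore be translated back and forth between the two games without losing track of the
configuration, and so can Attacker's strategies.
-/

/-- The configuration (a vector in `ℤ^n`) after `k` rounds of the Robot Game, starting from
`x`, when Defender plays the sequence of vectors `δ` and Attacker follows the strategy `st`
(a function of the finite history of Defender's choices so far): in each round Defender's
vector is added first, then Attacker's. -/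
def robotPos {n : ℕ} (x : Fin n → ℤ) (δ : ℕ → Fin n → ℤ)
    (st : List (Fin n → ℤ) → Fin n → ℤ) : ℕ → Fin n → ℤ
  | 0 => x
  | k + 1 => robotPos x δ st k + δ k + st ((List.range (k + 1)).map δ)

/-- Attacker has a winning strategy in the Robot Game with Attacker's vector set `U`,
Defender's vector set `V`, initial vector `x` and target vector `y`. -/
def RobotAttackerWins {n : ℕ} (U V : Set (Fin n → ℤ)) (x y : Fin n → ℤ) : Prop :=
  ∃ st : List (Fin n → ℤ) → Fin n → ℤ,
    (∀ hist, (∀ v ∈ hist, v ∈ V) → st hist ∈ U) ∧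
    ∀ δ : ℕ → Fin n → ℤ, (∀ i, δ i ∈ V) → ∃ m, robotPos x δ st (m + 1) = y

/-- The configuration (a vector in `ℤ^ι`) after `k` rounds of the Matrix Game, starting
from `x`, when Defender plays the sequence of matrices `δ` and Attacker follows the
strategy `st`: in each round Defender's matrix is applied first, then Attacker's. -/
def matrixPos {ι : Type*} [Fintype ι] (x : ι → ℤ) (δ : ℕ → Matrix ι ι ℤ)
    (st : List (Matrix ι ι ℤ) → Matrix ι ι ℤ) : ℕ → ι → ℤ
  | 0 => x
  | k + 1 =>
    (st ((List.range (k + 1)).map δ)).mulVec ((δ k).mulVec (matrixPos x δ st k))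

/-- Attacker has a winning strategy in the Matrix Game with Attacker's matrix set `MA`,
Defender's matrix set `MD`, initial vector `x` and target vector `y`. -/
def MatrixAttackerWins {ι : Type*} [Fintype ι] (MA MD : Set (Matrix ι ι ℤ))
    (x y : ι → ℤ) : Prop :=
  ∃ st : List (Matrix ι ι ℤ) → Matrix ι ι ℤ,
    (∀ hist, (∀ M ∈ hist, M ∈ MD) → st hist ∈ MA) ∧
    ∀ δ : ℕ → Matrix ι ι ℤ, (∀ i, δ i ∈ MD) → ∃ m, matrixPos x δ st (m + 1) = y

/-- The block matrix `M_w ∈ ℤ^{2n×2n}` with identity blocks on the diagonal, `diag(w)` in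
the top-right block and zero in the bottom-left block. -/
def blockOf {n : ℕ} (w : Fin n → ℤ) : Matrix (Fin n ⊕ Fin n) (Fin n ⊕ Fin n) ℤ :=
  Matrix.fromBlocks 1 (Matrix.diagonal w) 0 1

section Game

variable {α β A B : Type*}

/-- The configuration after `k` rounds of the game in which a move `m` replaces the configuration
`p` by `act m p`; this is the common form of `robotPos` and `matrixPos`. -/
def gamePos (act : A → α → α) (x : α) (δ : ℕ → A) (st : List A → A) : ℕ → α
  | 0 => x
  | k + 1 => act (st ((List.range (k + 1)).map δ)) (act (δ k) (gamePos act x δ st k))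

/-- Attacker has a winning strategy in the game in which a move `m` acts on the configurations
by `act m`, with Attacker's moves `U`, Defender's moves `V`, initial configuration `x` and target
configuration `y`; this is the common form of `RobotAttackerWins` and `MatrixAttackerWins`. -/
def AttackerWins (act : A → α → α) (U V : Set A) (x y : α) : Prop :=
  ∃ st : List A → A,
    (∀ hist, (∀ v ∈ hist, v ∈ V) → st hist ∈ U) ∧
    ∀ δ : ℕ → A, (∀ i, δ i ∈ V) → ∃ m, gamePos act x δ st (m + 1) = y

variable {actA : A → α → α} {actB : B → β → β}

theorem gamePos_rel_gamePos {R : α → β → Prop} {x : α} {x' : β} {δ : ℕ → A} {δ' : ℕ → B}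
    {st : List A → A} {st' : List B → B} (hx : R x x')
    (hδ : ∀ k p q, R p q → R (actA (δ k) p) (actB (δ' k) q))
    (hst : ∀ k p q, R p q →
      R (actA (st ((List.range k).map δ)) p) (actB (st' ((List.range k).map δ')) q)) (k : ℕ) :
    R (gamePos actA x δ st k) (gamePos actB x' δ' st' k) := by
  induction k with
  | zero => exact hx
  | succ k ih => exact hst _ _ _ (hδ _ _ _ ih)

theorem AttackerWins.of_simulation {U V : Set A} {U' V' : Set B} {x y : α} {x' y' : β}
    (R : α → β → Prop) {d : B → A} {a : A → B}
    (hd : Set.MapsTo d V' V) (ha : Set.MapsTo a U U')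
    (hdR : ∀ v ∈ V', ∀ p q, R p q → R (actA (d v) p) (actB v q))
    (haR : ∀ u ∈ U, ∀ p q, R p q → R (actA u p) (actB (a u) q))
    (hx : R x x') (hy : ∀ q, R y q → q = y') (h : AttackerWins actA U V x y) :
    AttackerWins actB U' V' x' y' := by
  obtain ⟨st, hst, hwin⟩ := h
  have st_mem (hist : List B) (hhist : ∀ v ∈ hist, v ∈ V') : st (hist.map d) ∈ U :=
    hst _ (List.forall_mem_map.2 fun v hv ↦ hd (hhist v hv))
  -- Attacker translates Defender's moves back by `d`, consults the old strategy, and translates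
  -- its answer forward by `a`.
  refine ⟨fun hist ↦ a (st (hist.map d)), fun hist hhist ↦ ha (st_mem hist hhist), ?_⟩
  intro δ hδ
  obtain ⟨m, hm⟩ := hwin (d ∘ δ) fun i ↦ hd (hδ i)
  have rel : R (gamePos actA x (d ∘ δ) st (m + 1))
      (gamePos actB x' δ (fun hist ↦ a (st (hist.map d))) (m + 1)) := by
    refine gamePos_rel_gamePos (δ := d ∘ δ) hx (fun k ↦ hdR _ (hδ k)) (fun k ↦ ?_) (m + 1)
    rw [← List.map_map]
    exact haR _ (st_mem _ (List.forall_mem_map.2 fun i _ ↦ hδ i))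
  exact ⟨m, hy _ (hm ▸ rel)⟩

theorem attackerWins_image_iff {f : A → B} {φ : α → β} (hφ : Function.Injective φ)
    (hf : ∀ m, Function.Semiconj φ (actA m) (actB (f m))) (U V : Set A) (x y : α) :
    AttackerWins actB (f '' U) (f '' V) (φ x) (φ y) ↔ AttackerWins actA U V x y := by
  have invFunOn_semiconj [Nonempty A] {s : Set A} {b : B} (hb : b ∈ f '' s) (p : α) :
      φ (actA (Function.invFunOn f s b) p) = actB b (φ p) := by
    rw [hf, Function.invFunOn_eq hb]
  have invFunOn_mapsTo [Nonempty A] (s : Set A) :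
      Set.MapsTo (Function.invFunOn f s) (f '' s) s := fun _ ↦ Function.invFunOn_mem
  constructor <;> intro h
  · have : Nonempty A := by
      obtain ⟨st, hst, -⟩ := h
      obtain ⟨u, -⟩ := hst [] (by simp)
      exact ⟨u⟩
    refine h.of_simulation (fun q p ↦ q = φ p) (Set.mapsTo_image f V) (invFunOn_mapsTo U) ?_ ?_ rfl
      fun p hp ↦ hφ hp.symm
    · rintro v - _ p rfl
      exact (hf v p).symm
    · rintro u hu _ p rfl
      exact (invFunOn_semiconj hu p).symm
  · have : Nonempty A := h.nonempty.map fun st ↦ st []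
    refine h.of_simulation (fun p q ↦ φ p = q) (invFunOn_mapsTo V) (Set.mapsTo_image f U) ?_ ?_ rfl
      fun q hq ↦ hq.symm
    · rintro v hv p _ rfl
      exact invFunOn_semiconj hv p
    · rintro u - p _ rfl
      exact hf u p

end Game

theorem robotPos_eq_gamePos {n : ℕ} (x : Fin n → ℤ) (δ : ℕ → Fin n → ℤ)
    (st : List (Fin n → ℤ) → Fin n → ℤ) (k : ℕ) :
    robotPos x δ st k = gamePos (fun w a ↦ a + w) x δ st k := by
  induction k with
  | zero => rfl
  | succ k ih => rw [robotPos, gamePos, ih]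

theorem robotAttackerWins_iff_attackerWins {n : ℕ} (U V : Set (Fin n → ℤ)) (x y : Fin n → ℤ) :
    RobotAttackerWins U V x y ↔ AttackerWins (fun w a ↦ a + w) U V x y := by
  simp only [RobotAttackerWins, AttackerWins, robotPos_eq_gamePos]

theorem matrixPos_eq_gamePos {ι : Type*} [Fintype ι] (x : ι → ℤ) (δ : ℕ → Matrix ι ι ℤ)
    (st : List (Matrix ι ι ℤ) → Matrix ι ι ℤ) (k : ℕ) :
    matrixPos x δ st k = gamePos Matrix.mulVec x δ st k := by
  induction k with
  | zero => rfl
  | succ k ih => rw [matrixPos, gamePos, ih]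

theorem matrixAttackerWins_iff_attackerWins {ι : Type*} [Fintype ι]
    (MA MD : Set (Matrix ι ι ℤ)) (x y : ι → ℤ) :
    MatrixAttackerWins MA MD x y ↔ AttackerWins Matrix.mulVec MA MD x y := by
  simp only [MatrixAttackerWins, AttackerWins, matrixPos_eq_gamePos]

theorem blockOf_mulVec_elim_one {n : ℕ} (w a : Fin n → ℤ) :
    (blockOf w).mulVec (Sum.elim a 1) = Sum.elim (a + w) 1 := by
  have diagonal_mulVec_one : (Matrix.diagonal w).mulVec 1 = w := by
    ext i
    simp [Matrix.mulVec_diagonal]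
  simp [blockOf, Matrix.fromBlocks_mulVec, diagonal_mulVec_one]

theorem robot_game_iff_matrix_game_general {n : ℕ} (U V : Set (Fin n → ℤ)) (x y : Fin n → ℤ) :
    RobotAttackerWins U V x y ↔
      MatrixAttackerWins (blockOf '' U) (blockOf '' V) (Sum.elim x 1) (Sum.elim y 1) := by
  have elim_one_injective : Function.Injective fun a : Fin n → ℤ ↦
      (Sum.elim a 1 : Fin n ⊕ Fin n → ℤ) :=
    Function.LeftInverse.injective (g := (· ∘ Sum.inl)) fun a ↦ Sum.elim_comp_inl a 1
  rw [robotAttackerWins_iff_attackerWins, matrixAttackerWins_iff_attackerWins]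
  exact (attackerWins_image_iff elim_one_injective
    (fun w a ↦ (blockOf_mulVec_elim_one w a).symm) U V x y).symm

/-- Attacker has a winning strategy in the Robot Game with sets `U, V`, initial vector `x`
and target vector `y` iff Attacker has a winning strategy in the Matrix Game of dimension
`2n` with matrices `{M_u : u ∈ U}` and `{M_v : v ∈ V}`, initial vector `(x, 1, …, 1)ᵀ` and
target vector `(y, 1, …, 1)ᵀ`. -/
theorem robot_game_iff_matrix_game {n : ℕ} (U V : Finset (Fin n → ℤ))
    (x y : Fin n → ℤ) :
    RobotAttackerWins (↑U) (↑V) x y ↔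
      MatrixAttackerWins
        {M | ∃ u ∈ U, M = blockOf u}
        {M | ∃ v ∈ V, M = blockOf v}
        (Sum.elim x 1) (Sum.elim y 1) := by
  simpa only [Set.image, eq_comm, Finset.mem_coe] using
    robot_game_iff_matrix_game_general (U : Set (Fin n → ℤ)) V x y
end

section
/- The group homomorphism f from the free group F₂ on two generators c, d to SL(2, ℤ) determined by f(c) = [[1, 2], [0, 1]] and f(d) = [[1, 0], [2, 1]] is injective (a monomorphism). -/
/-- The matrix `[[1, 2], [0, 1]]` as an element of `SL(2, ℤ)`. -/
def cMat : Matrix.SpecialLinearGroup (Fin 2) ℤ :=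
  ⟨!![1, 2; 0, 1], by norm_num [Matrix.det_fin_two_of]⟩

/-- The matrix `[[1, 0], [2, 1]]` as an element of `SL(2, ℤ)`. -/
def dMat : Matrix.SpecialLinearGroup (Fin 2) ℤ :=
  ⟨!![1, 0; 2, 1], by norm_num [Matrix.det_fin_two_of]⟩

/-- The group homomorphism `f : F₂ → SL(2, ℤ)` determined by `f(c) = [[1, 2], [0, 1]]` and
`f(d) = [[1, 0], [2, 1]]`, where `c = FreeGroup.of false` and `d = FreeGroup.of true`. -/
noncomputable def fHom : FreeGroup Bool →* Matrix.SpecialLinearGroup (Fin 2) ℤ :=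
  FreeGroup.lift fun b : Bool => if b then dMat else cMat

/-!
Let `SL(ι, R)` act on `ι → R`. The `n`-th power of the transvection `1 + c E_ij` adds `n * c * v j`
to `v i` and fixes the other coordinates. If `|c| ≥ 2`, `n ≠ 0` and `|v i| < |v j|`, then
`|v i + n * c * v j| ≥ 2 * |v j| - |v i| > |v j|`, so every nontrivial power of `1 + c E_ij` maps
the cone `|v i| < |v j|` into the cone `|v j| < |v i|`. Exchanging `i` and `j` gives the same for
`1 + c E_ji`, and the two transvections play ping-pong on these disjoint cones.
-/

open Matrix Matrix.SpecialLinearGroup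
open scoped Cardinal Pointwise Function

theorem freeGroup_lift_injective_of_zpow_ping_pong {ι G α : Type*} [Nontrivial ι] [Group G]
    [MulAction G α] (a : ι → G) (X : ι → Set α) (hX_nonempty : ∀ i, (X i).Nonempty)
    (hX_disjoint : Pairwise (Disjoint on X))
    (hX_zpow : Pairwise fun i j => ∀ n : ℤ, n ≠ 0 → a i ^ n • X j ⊆ X i) :
    Function.Injective (FreeGroup.lift a) := by
  have lift_eq : FreeGroup.lift a =
      (Monoid.CoprodI.lift fun i => FreeGroup.lift fun _ : Unit => a i).comp
        freeGroupEquivCoprodI.toMonoidHom := by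
    ext i
    simp
  have three_le_card : 3 ≤ #(FreeGroup Unit) := by
    rw [FreeGroup.freeGroupUnitEquivInt.cardinal_eq, Cardinal.mk_denumerable]
    exact Cardinal.natCast_le_aleph0
  rw [lift_eq, MonoidHom.coe_comp]
  refine Function.Injective.comp (Monoid.CoprodI.lift_injective_of_ping_pong _
    (.inr ⟨Classical.arbitrary ι, three_le_card⟩) X hX_nonempty hX_disjoint ?_)
    freeGroupEquivCoprodI.injective
  intro i j hij w hw
  obtain ⟨n, rfl⟩ : ∃ n : ℤ, FreeGroup.of () ^ n = w :=
    FreeGroup.freeGroupUnitEquivInt.symm.surjective w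
  have hn : n ≠ 0 := by
    rintro rfl
    exact hw (zpow_zero _)
  simpa only [map_zpow, FreeGroup.lift_apply_of] using hX_zpow hij n hn

section Transvection

variable {ι R : Type*} [Fintype ι] [DecidableEq ι] [CommRing R] {i j : ι} (hij : i ≠ j)

theorem transvection_zpow (c : R) (n : ℤ) :
    transvection hij c ^ n = transvection hij (n * c) := by
  let φ : Multiplicative R →* Matrix.SpecialLinearGroup ι R :=
    { toFun := fun x => transvection hij x.toAdd
      map_one' := transvection_coeff_zero hij
      map_mul' := fun x y => transvection_add hij x.toAdd y.toAdd }
  calc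
    transvection hij c ^ n = φ (.ofAdd c ^ n) := (map_zpow φ (.ofAdd c) n).symm
    _ = transvection hij (n • c) := rfl
    _ = transvection hij (n * c) := by rw [zsmul_eq_mul]

theorem transvection_smul (c : R) (v : ι → R) :
    transvection hij c • v = v + Pi.single i (c * v j) := by
  rw [Matrix.SpecialLinearGroup.smul_def, transvection_coe, smul_eq_mulVec, add_mulVec, one_mulVec,
    single_mulVec, Pi.single]

end Transvection

section Abs

variable {R : Type*} [Ring R] [LinearOrder R] [IsStrictOrderedRing R]

theorem abs_lt_abs_add_mul {c x y : R} (hc : 2 ≤ |c|) (hxy : |x| < |y|) :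
    |y| < |x + c * y| := by
  have hcy : 2 * |y| ≤ |c * y| := by
    rw [abs_mul]
    exact mul_le_mul_of_nonneg_right hc (abs_nonneg y)
  have htri : |c * y| ≤ |x + c * y| + |x| := by
    simpa only [add_sub_cancel_left] using abs_sub (x + c * y) x
  refine lt_of_add_lt_add_right (a := |x|) ?_
  calc
    |y| + |x| < |y| + |y| := by gcongr
    _ = 2 * |y| := (two_mul |y|).symm
    _ ≤ |x + c * y| + |x| := hcy.trans htri

theorem abs_le_abs_intCast_mul (c : R) {n : ℤ} (hn : n ≠ 0) : |c| ≤ |n * c| := by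
  have one_le_abs : (1 : R) ≤ |(n : R)| := mod_cast Int.one_le_abs hn
  rw [abs_mul]
  exact le_mul_of_one_le_left (abs_nonneg c) one_le_abs

end Abs

/-- The double cone of vectors whose `i`-th coordinate is larger in absolute value than their
`j`-th coordinate. The cones for `(i, j)` and `(j, i)` are the two ping-pong sets. -/
def dominanceCone {ι : Type*} (R : Type*) [Lattice R] [AddGroup R] (i j : ι) : Set (ι → R) :=
  {v | |v j| < |v i|}

theorem disjoint_dominanceCone_swap {ι R : Type*} [Lattice R] [AddGroup R] (i j : ι) :
    Disjoint (dominanceCone R i j) (dominanceCone R j i) :=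
  Set.disjoint_left.2 fun _ hv hv' => lt_asymm hv hv'

theorem dominanceCone_nonempty {ι R : Type*} [Ring R] [LinearOrder R] [IsStrictOrderedRing R]
    {i j : ι} (hij : i ≠ j) : (dominanceCone R i j).Nonempty := by
  classical exact ⟨Pi.single i 1, by simp [dominanceCone, hij.symm]⟩

section PingPong

variable {ι R : Type*} [Fintype ι] [DecidableEq ι] [CommRing R] [LinearOrder R]
  [IsStrictOrderedRing R] {i j : ι}

theorem transvection_zpow_smul_dominanceCone_subset (hij : i ≠ j) {c : R} (hc : 2 ≤ |c|) {n : ℤ}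
    (hn : n ≠ 0) :
    transvection hij c ^ n • dominanceCone R j i ⊆ dominanceCone R i j := by
  rintro _ ⟨v, hv, rfl⟩
  have hnc : 2 ≤ |n * c| := hc.trans (abs_le_abs_intCast_mul c hn)
  simpa [dominanceCone, transvection_zpow, transvection_smul, hij.symm]
    using abs_lt_abs_add_mul hnc hv

theorem fHom_injective_general (hij : i ≠ j) {a b : R} (ha : 2 ≤ |a|) (hb : 2 ≤ |b|) :
    Function.Injective (FreeGroup.lift fun t : Bool =>
      if t then transvection hij.symm b else transvection hij a) := by
  refine freeGroup_lift_injective_of_zpow_ping_pong _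
    (fun t => if t then dominanceCone R j i else dominanceCone R i j) ?nonempty ?disjoint ?zpow
  case nonempty =>
    rintro (_ | _)
    · exact dominanceCone_nonempty hij
    · exact dominanceCone_nonempty hij.symm
  case disjoint =>
    rintro (_ | _) (_ | _) hst
    · exact absurd rfl hst
    · exact disjoint_dominanceCone_swap i j
    · exact disjoint_dominanceCone_swap j i
    · exact absurd rfl hst
  case zpow =>
    rintro (_ | _) (_ | _) hst n hn
    · exact absurd rfl hst
    · exact transvection_zpow_smul_dominanceCone_subset hij ha hn
    · exact transvection_zpow_smul_dominanceCone_subset hij.symm hb hn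
    · exact absurd rfl hst

end PingPong

theorem cMat_eq_transvection : cMat = transvection zero_ne_one 2 := by
  decide

theorem dMat_eq_transvection : dMat = transvection one_ne_zero 2 := by
  decide

/-- The homomorphism `f : F₂ → SL(2, ℤ)` with `f(c) = [[1, 2], [0, 1]]` and
`f(d) = [[1, 0], [2, 1]]` is injective. -/
theorem fHom_injective : Function.Injective fHom := by
  rw [fHom, cMat_eq_transvection, dMat_eq_transvection]
  exact fHom_injective_general zero_ne_one (by norm_num) (by norm_num)
end
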